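/- arXiv:1702.03961 — 8 statements merged into one kernel-verified Lean document; each statement's English description precedes it below -/
import Mathlib

section
/- For every ε > 0 there exists N such that for all n ≥ N the following holds: for every NFA M with n states over any finite nonempty alphabet Σ, if M has a universal length, then its minimal universality length is at most exp((1 + ε)·2^(n/2)·√(n·log 2)). -/
/-- `ℓ` is a universal length for the language `L`: every word of length `ℓ` belongs to `L`. -/
def IsUnivLength {α : Type*} (L : Language α) (ℓ : ℕ) : Prop :=
  ∀ w : List α, w.length = ℓ → w ∈ L

namespace UL

/-- Walks of a given length in the graph of a relation. -/
def Walk {V : Type*} (r : V → V → Prop) : ℕ → V → V → Prop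
  | 0, A, B => A = B
  | t + 1, A, C => ∃ B, r A B ∧ Walk r t B C

theorem walk_add {V : Type*} {r : V → V → Prop} (a b : ℕ) (A C : V) :
    Walk r (a + b) A C ↔ ∃ B, Walk r a A B ∧ Walk r b B C := by
  induction a generalizing A with
  | zero => simp [Walk]
  | succ a ih =>
    rw [show a + 1 + b = (a + b) + 1 by ring]
    simp only [Walk, ih]
    constructor
    · rintro ⟨B, h1, D, h2, h3⟩
      exact ⟨D, ⟨B, h1, h2⟩, h3⟩
    · rintro ⟨D, ⟨B, h1, h2⟩, h3⟩
      exact ⟨B, h1, D, h2, h3⟩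

theorem walk_trans {V : Type*} {r : V → V → Prop} {a b : ℕ} {A B C : V}
    (h1 : Walk r a A B) (h2 : Walk r b B C) : Walk r (a + b) A C :=
  (walk_add a b A C).2 ⟨B, h1, h2⟩

theorem walk_path {V : Type*} {r : V → V → Prop} {t : ℕ} {A B : V} (h : Walk r t A B) :
    ∃ f : ℕ → V, f 0 = A ∧ f t = B ∧ ∀ i j, i + j ≤ t → Walk r j (f i) (f (i + j)) := by
  induction t generalizing A with
  | zero =>
    refine ⟨fun _ => A, rfl, h, ?_⟩
    intro i j hij
    obtain rfl : j = 0 := by omega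
    simp [Walk]
  | succ t ih =>
    obtain ⟨C, h1, h2⟩ := h
    obtain ⟨f, f0, ft, hf⟩ := ih h2
    refine ⟨fun i => if i = 0 then A else f (i - 1), by simp, by simp [ft], ?_⟩
    intro i j hij
    rcases Nat.eq_zero_or_pos i with rfl | hi
    · rcases Nat.eq_zero_or_pos j with rfl | hj
      · simp [Walk]
      · obtain ⟨j, rfl⟩ : ∃ j', j = j' + 1 := ⟨j - 1, by omega⟩
        simp only [Walk, if_true]
        refine ⟨C, h1, ?_⟩
        have := hf 0 j (by omega)
        simpa [f0] using this
    · have := hf (i - 1) j (by omega)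
      dsimp only
      rw [if_neg (by omega), if_neg (by omega)]
      rwa [show i + j - 1 = i - 1 + j by omega]

/-- Any walk can be shortened to length `< card V * k` without changing its length mod `k`. -/
theorem walk_short {V : Type*} [Fintype V] {r : V → V → Prop} {k : ℕ} (hk : 0 < k) {t : ℕ} {A B : V}
    (h : Walk r t A B) :
    ∃ t', t' < Fintype.card V * k ∧ t' ≡ t [MOD k] ∧ Walk r t' A B := by
  induction t using Nat.strong_induction_on generalizing A B with
  | _ t ih =>
    by_cases ht : t < Fintype.card V * k
    · exact ⟨t, ht, rfl, h⟩
    · push Not at ht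
      obtain ⟨f, f0, ft, hf⟩ := walk_path h
      have : NeZero k := ⟨hk.ne'⟩
      obtain ⟨i, j, hij, he⟩ := Fintype.exists_ne_map_eq_of_card_lt
        (fun i : Fin (t + 1) => (f i, Fin.ofNat k i)) (by simp; omega)
      wlog hlt : i < j generalizing i j
      · exact this j i hij.symm he.symm (lt_of_le_of_ne (not_lt.1 hlt) hij.symm)
      simp only [Prod.mk.injEq, Fin.ext_iff, Fin.val_ofNat] at he
      obtain ⟨e1, e2⟩ := he
      have hlt' : (i : ℕ) < j := hlt
      have hj := j.2
      have w1 := hf 0 i (by omega)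
      have w2 := hf j (t - j) (by omega)
      rw [f0, Nat.zero_add, e1] at w1
      rw [show (j : ℕ) + (t - j) = t by omega, ft] at w2
      have w := walk_trans w1 w2
      obtain ⟨t', h1, h2, h3⟩ := ih _ (by omega) w
      refine ⟨t', h1, h2.trans ?_, h3⟩
      have : (i : ℕ) + (t - j) ≡ j + (t - j) [MOD k] := Nat.ModEq.add_right _ e2
      rwa [show (j : ℕ) + (t - j) = t by omega] at this

/-- `d` is a period of `S` beyond `T`. -/
def Per (T : ℕ) (S : Set ℕ) (d : ℕ) : Prop := ∀ x, T ≤ x → (x ∈ S ↔ x + d ∈ S)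

theorem Per.mul {T : ℕ} {S : Set ℕ} {d : ℕ} (h : Per T S d) (j : ℕ) : Per T S (d * j) := by
  induction j with
  | zero => intro x _; simp
  | succ j ih =>
    intro x hx
    rw [ih x hx, h (x + d * j) (by omega)]
    rw [show x + d * j + d = x + d * (j + 1) by ring]

theorem Per.of_dvd {T : ℕ} {S : Set ℕ} {d e : ℕ} (h : Per T S d) (hd : d ∣ e) : Per T S e := by
  obtain ⟨j, rfl⟩ := hd
  exact h.mul j

theorem Per.sub {T : ℕ} {S : Set ℕ} {d e : ℕ} (h : Per T S d) (h' : Per T S (e + d)) :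
    Per T S e := by
  intro x hx
  rw [h' x hx, h (x + e) (by omega)]
  rw [add_assoc]

theorem Per.modEq {T : ℕ} {S : Set ℕ} {d x y : ℕ} (h : Per T S d) (hx : T ≤ x) (hy : T ≤ y)
    (hxy : x ≡ y [MOD d]) : x ∈ S ↔ y ∈ S := by
  wlog hle : x ≤ y generalizing x y
  · exact (this hy hx hxy.symm (by omega)).symm
  obtain ⟨j, hj⟩ := (Nat.modEq_iff_dvd' hle).1 hxy
  have := h.mul j x hx
  rwa [show x + d * j = y by omega] at this

theorem Per.of_closed {T : ℕ} {S : Set ℕ} {k d : ℕ} (hk : 0 < k) (h : Per T S k)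
    (hd : ∀ x, T ≤ x → x ∈ S → x + d ∈ S) : Per T S d := by
  have hd' : ∀ j x, T ≤ x → x ∈ S → x + d * j ∈ S := by
    intro j
    induction j with
    | zero => intro x _ h; simpa using h
    | succ j ih =>
      intro x hx hxS
      have := hd _ (by omega) (ih x hx hxS)
      rwa [show x + d * j + d = x + d * (j + 1) by ring] at this
  intro x hx
  refine ⟨hd x hx, fun hxd => ?_⟩
  have h1 := hd' (k - 1) (x + d) (by omega) hxd
  have h2 := (h.mul d) x hx
  rw [h2]
  obtain ⟨k, rfl⟩ : ∃ k', k = k' + 1 := ⟨k - 1, by omega⟩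
  rw [Nat.add_sub_cancel] at h1
  rwa [show x + d + d * k = x + (k + 1) * d by ring] at h1

/-- Minimal positive period. -/
noncomputable def per (T : ℕ) (S : Set ℕ) : ℕ := sInf {d | 0 < d ∧ Per T S d}

theorem per_spec {T : ℕ} {S : Set ℕ} {k : ℕ} (hk : 0 < k) (h : Per T S k) :
    0 < per T S ∧ Per T S (per T S) :=
  Nat.sInf_mem (s := {d | 0 < d ∧ Per T S d}) ⟨k, hk, h⟩

theorem per_dvd {T : ℕ} {S : Set ℕ} {k d : ℕ} (hk : 0 < k) (h : Per T S k) (hd : Per T S d) :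
    per T S ∣ d := by
  obtain ⟨h1, h2⟩ := per_spec hk h
  have h3 : Per T S (d % per T S) := by
    apply (h2.mul (d / per T S)).sub
    rwa [Nat.mod_add_div]
  by_contra hnd
  have hpos : 0 < d % per T S := Nat.pos_of_ne_zero fun h0 => hnd (Nat.dvd_of_mod_eq_zero h0)
  have : per T S ≤ d % per T S := Nat.sInf_le ⟨hpos, h3⟩
  exact absurd (Nat.mod_lt d h1) (by omega)

/-- Lengths of walks from `A` to a marked vertex. -/
def R {V : Type*} (r : V → V → Prop) (rej : V → Prop) (A : V) : Set ℕ :=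
  {t | ∃ B, Walk r t A B ∧ rej B}

theorem R_walk {V : Type*} {r : V → V → Prop} {rej : V → Prop} {A B : V} {i x : ℕ}
    (h : Walk r i A B) (hx : x ∈ R r rej B) : x + i ∈ R r rej A := by
  obtain ⟨C, h1, h2⟩ := hx
  exact ⟨C, by rw [add_comm]; exact walk_trans h h1, h2⟩

theorem per_cycle {V : Type*} [Fintype V] {r : V → V → Prop} {rej : V → Prop} {A : V} {k : ℕ}
    (hk : 0 < k) (hkm : k ≤ Fintype.card V) (h : Walk r k A A) :
    Per (Fintype.card V ^ 2) (R r rej A) k := by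
  intro x hx
  refine ⟨R_walk h, ?_⟩
  rintro ⟨B, hB, hr⟩
  obtain ⟨t', h1, h2, h3⟩ := walk_short hk hB
  have hlt : t' < x := by nlinarith
  have hmod : t' ≡ x [MOD k] := h2.trans (by simp [Nat.ModEq])
  obtain ⟨j, hj⟩ := (Nat.modEq_iff_dvd' hlt.le).1 hmod
  have hcl : ∀ j, t' + k * j ∈ R r rej A := by
    intro j
    induction j with
    | zero => exact ⟨B, h3, hr⟩
    | succ j ih => 
      have := R_walk h ih
      rwa [show t' + k * j + k = t' + k * (j + 1) by ring] at this
  have := hcl j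
  rwa [show t' + k * j = x by omega] at this

theorem mem_shift {V : Type*} [Fintype V] {r : V → V → Prop} {rej : V → Prop} {A B : V} {i j : ℕ}
    (hk : 0 < i + j) (hkm : i + j ≤ Fintype.card V) (h1 : Walk r i A B) (h2 : Walk r j B A)
    {x : ℕ} (hx : Fintype.card V ^ 2 ≤ x) : x ∈ R r rej B ↔ x + i ∈ R r rej A := by
  refine ⟨R_walk h1, fun h => ?_⟩
  have hB : Walk r (j + i) B B := walk_trans h2 h1
  have := per_cycle (rej := rej) (by omega) (by omega) hB x hx
  rw [this]
  have := R_walk h2 h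
  rwa [show x + i + j = x + (j + i) by ring] at this

theorem per_shift {V : Type*} [Fintype V] {r : V → V → Prop} {rej : V → Prop} {A B : V} {i j : ℕ}
    (hk : 0 < i + j) (hkm : i + j ≤ Fintype.card V) (h1 : Walk r i A B) (h2 : Walk r j B A)
    {d : ℕ} (h : Per (Fintype.card V ^ 2) (R r rej A) d) :
    Per (Fintype.card V ^ 2) (R r rej B) d := by
  intro x hx
  rw [mem_shift hk hkm h1 h2 hx, mem_shift hk hkm h1 h2 (x := x + d) (by omega),
    h (x + i) (by omega)]
  rw [show x + i + d = x + d + i by ring]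

theorem per_shift_eq {V : Type*} [Fintype V] {r : V → V → Prop} {rej : V → Prop} {A B : V}
    {i j : ℕ}
    (hk : 0 < i + j) (hkm : i + j ≤ Fintype.card V) (h1 : Walk r i A B) (h2 : Walk r j B A) :
    per (Fintype.card V ^ 2) (R r rej B) = per (Fintype.card V ^ 2) (R r rej A) := by
  unfold per
  congr 1
  ext d
  exact and_congr_right fun _ => ⟨per_shift (by omega) (by omega) h2 h1, per_shift hk hkm h1 h2⟩

end UL

namespace UL

/-- Useful vertices: reachable, on a short cycle, and from which a marked vertex is reachable. -/
def Useful {V : Type*} [Fintype V] (r : V → V → Prop) (rej : V → Prop) (I A : V) : Prop :=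
  (∃ k, 0 < k ∧ k ≤ Fintype.card V ∧ Walk r k A A) ∧
    (∃ s, s ≤ Fintype.card V ∧ Walk r s I A) ∧ (R r rej A).Nonempty

/-- The minimal period attached to a vertex. -/
noncomputable def pi {V : Type*} [Fintype V] (r : V → V → Prop) (rej : V → Prop) (A : V) : ℕ :=
  per (Fintype.card V ^ 2) (R r rej A)

theorem useful_pi {V : Type*} [Fintype V] {r : V → V → Prop} {rej : V → Prop} {I A : V}
    (h : Useful r rej I A) : 0 < pi r rej A ∧ pi r rej A ≤ Fintype.card V ∧
      Per (Fintype.card V ^ 2) (R r rej A) (pi r rej A) := by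
  obtain ⟨⟨k, hk, hkm, hw⟩, -, -⟩ := h
  have hp := per_cycle (rej := rej) hk hkm hw
  obtain ⟨h1, h2⟩ := per_spec hk hp
  exact ⟨h1, (Nat.le_of_dvd hk (per_dvd hk hp hp)).trans hkm, h2⟩

theorem orbit {V : Type*} [Fintype V] [PartialOrder V] {r : V → V → Prop} {rej : V → Prop}
    {I A : V} (hmono : ∀ A B : V, B ≤ A → R r rej A ⊆ R r rej B) (h : Useful r rej I A) :
    ∃ f : ℕ → V,
      (∀ i, i < pi r rej A → pi r rej (f i) = pi r rej A) ∧
      (∀ i, i < pi r rej A → Per (Fintype.card V ^ 2) (R r rej (f i)) (pi r rej A)) ∧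
      (∀ i j, i < pi r rej A → j < pi r rej A → f i ≤ f j → i = j) ∧
      (∀ i, i < pi r rej A → ∃ s, s ≤ 2 * Fintype.card V ∧ Walk r s I (f i)) ∧
      (∀ i, i < pi r rej A → ∃ y, Fintype.card V ^ 2 ≤ y ∧ y ∈ R r rej (f i)) := by
  obtain ⟨hp0, hpm, hper⟩ := useful_pi h
  obtain ⟨⟨k, hk, hkm, hw⟩, ⟨s, hs, hsw⟩, ⟨y, hy⟩⟩ := h
  have hpk := per_cycle (rej := rej) hk hkm hw
  have hdvd : pi r rej A ∣ k := per_dvd hk hpk hpk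
  have hle := Nat.le_of_dvd hk hdvd
  obtain ⟨f, f0, fk, hf⟩ := walk_path hw
  have w1 : ∀ i, i < pi r rej A → Walk r i A (f i) := by
    intro i hi
    have := hf 0 i (by omega)
    rwa [f0, zero_add] at this
  have w2 : ∀ i, i < pi r rej A → Walk r (k - i) (f i) A := by
    intro i hi
    have := hf i (k - i) (by omega)
    rwa [show i + (k - i) = k by omega, fk] at this
  have hsh : ∀ i, i < pi r rej A → ∀ x, Fintype.card V ^ 2 ≤ x →
      (x ∈ R r rej (f i) ↔ x + i ∈ R r rej A) := fun i hi x hx =>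
    mem_shift (by omega) (by omega) (w1 i hi) (w2 i hi) hx
  refine ⟨f, ?_, ?_, ?_, ?_, ?_⟩
  · intro i hi
    exact per_shift_eq (by omega) (by omega) (w1 i hi) (w2 i hi)
  · intro i hi
    exact per_shift (by omega) (by omega) (w1 i hi) (w2 i hi) hper
  · intro i j hi hj hij
    have hsub := hmono _ _ hij
    have hP : Per (Fintype.card V ^ 2) (R r rej A) (pi r rej A + i - j) := by
      apply Per.of_closed hk hpk
      intro z hz hzA
      rw [hper z hz] at hzA
      have h1 : z + pi r rej A - j ∈ R r rej (f j) := by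
        rw [hsh j hj _ (by omega)]
        rwa [show z + pi r rej A - j + j = z + pi r rej A by omega]
      have h2 := hsub h1
      rw [hsh i hi _ (by omega)] at h2
      rwa [show z + (pi r rej A + i - j) = z + pi r rej A - j + i by omega]
    have hd : pi r rej A ∣ pi r rej A + i - j := per_dvd hk hpk hP
    obtain ⟨c, hc⟩ := hd
    have : c = 1 := by
      have h1 : c < 2 := by
        by_contra hcon
        have : pi r rej A * 2 ≤ pi r rej A * c := Nat.mul_le_mul_left _ (by omega)
        omega
      have h2 : c ≠ 0 := by rintro rfl; omega
      omega
    subst this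
    omega
  · intro i hi
    exact ⟨s + i, by omega, walk_trans hsw (w1 i hi)⟩
  · intro i hi
    have hcl : ∀ j, y + k * j ∈ R r rej A := by
      intro j
      induction j with
      | zero => exact hy
      | succ j ih =>
        have := R_walk hw ih
        rwa [show y + k * j + k = y + k * (j + 1) by ring] at this
    refine ⟨y + k * (Fintype.card V ^ 2 + 1) - i, ?_, ?_⟩
    · have : Fintype.card V ^ 2 ≤ k * (Fintype.card V ^ 2) := Nat.le_mul_of_pos_left _ hk
      rw [mul_add]
      omega
    · have : Fintype.card V ^ 2 ≤ k * (Fintype.card V ^ 2) := Nat.le_mul_of_pos_left _ hk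
      have h2 := hcl (Fintype.card V ^ 2 + 1)
      rw [mul_add] at *
      rw [hsh i hi _ (by omega)]
      rwa [Nat.sub_add_cancel (by omega)]

/-- Coprime periods on comparable vertices force all large lengths. -/
theorem full_of_coprime {T : ℕ} {S S' : Set ℕ} {p q : ℕ} (hpq : p.Coprime q) (hq : 0 < q)
    (hS : Per T S p) (hS' : Per T S' q) (hsub : S ⊆ S') {y : ℕ} (hy : T ≤ y) (hyS : y ∈ S)
    {x : ℕ} (hx : T ≤ x) : x ∈ S' := by
  have : ∃ u, y + p * u ≡ x [MOD q] := by
    obtain ⟨z, hz1, hz2⟩ := Nat.chineseRemainder hpq y x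
    -- `z ≡ y mod p`, `z ≡ x mod q`
    have hz : y ≤ z + p * q * y := by
      rcases Nat.eq_zero_or_pos p with rfl | hp
      · simp [Nat.ModEq] at hz1; omega
      · have : 1 * y ≤ p * q * y := Nat.mul_le_mul_right _ (Nat.mul_pos hp hq)
        omega
    have h1 : y ≡ z + p * q * y [MOD p] := by
      have : z + p * (q * y) ≡ z [MOD p] := by simp [Nat.ModEq]
      rw [mul_assoc]
      exact (this.trans hz1).symm
    obtain ⟨u, hu⟩ := (Nat.modEq_iff_dvd' hz).1 h1
    refine ⟨u, ?_⟩
    rw [← hu, Nat.add_sub_cancel' hz]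
    have : z + q * (p * y) ≡ z [MOD q] := by simp [Nat.ModEq]
    rw [show z + p * q * y = z + q * (p * y) by ring]
    exact this.trans hz2
  obtain ⟨u, hu⟩ := this
  have h1 : y + p * u ∈ S' := hsub ((hS.mul u y hy).1 hyS)
  exact (hS'.modEq (by omega) hx hu).1 h1

theorem prime_pow_dvd_lcm {ι : Type*} {s : Finset ι} {f : ι → ℕ} (hf : ∀ a ∈ s, 0 < f a)
    {p k : ℕ} (hp : p.Prime) (hk : 0 < k) (h : p ^ k ∣ s.lcm f) : ∃ a ∈ s, p ^ k ∣ f a := by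
  classical
  induction s using Finset.induction_on with
  | empty => 
    simp at h
    exact absurd h (by simp [hp.one_lt.ne', hk.ne'])
  | insert a s ha ih =>
    rw [Finset.lcm_insert] at h
    have h0 : s.lcm f ≠ 0 := by
      rw [Ne, Finset.lcm_eq_zero_iff]
      rintro ⟨b, hb, hb0⟩
      have := hf b (Finset.mem_insert_of_mem hb)
      omega
    have ha0 : f a ≠ 0 := (hf a (Finset.mem_insert_self _ _)).ne'
    have hl : lcm (f a) (s.lcm f) = Nat.lcm (f a) (s.lcm f) := rfl
    rw [hl, hp.pow_dvd_iff_le_factorization (Nat.lcm_ne_zero ha0 h0),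
      Nat.factorization_lcm ha0 h0, Finsupp.sup_apply, le_sup_iff] at h
    rcases h with h | h
    · exact ⟨a, Finset.mem_insert_self _ _, (hp.pow_dvd_iff_le_factorization ha0).2 h⟩
    · obtain ⟨b, hb, hb'⟩ := ih (fun b hb => hf b (Finset.mem_insert_of_mem hb))
        ((hp.pow_dvd_iff_le_factorization h0).2 h)
      exact ⟨b, Finset.mem_insert_of_mem hb, hb'⟩

theorem main_comb {V : Type*} [Fintype V] [PartialOrder V] {r : V → V → Prop}
    {rej : V → Prop} (hmono : ∀ A B : V, B ≤ A → R r rej A ⊆ R r rej B) {K : ℕ}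
    (hK : ∀ F : Finset V, IsAntichain (· ≤ ·) (F : Set V) → F.card ≤ K) {I : V} {ℓ : ℕ}
    (hℓ : ℓ ∉ R r rej I) (hlt : ∀ t < ℓ, t ∈ R r rej I)
    (hbig : Fintype.card V ^ 2 + 2 * Fintype.card V ≤ ℓ) :
    ∃ L : ℕ, 0 < L ∧ ℓ < Fintype.card V ^ 2 + 2 * Fintype.card V + L ∧
      (∀ p k : ℕ, p.Prime → p ^ k ∣ L → p ^ k ≤ Fintype.card V) ∧
      2 * ∑ p ∈ L.primeFactors with Fintype.card V < p ^ 2, p ≤ Fintype.card V + K := by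
  classical
  set m := Fintype.card V with hm
  have hm2 : Fintype.card V ^ 2 = m ^ 2 := rfl
  have hm0 : 0 < m := Fintype.card_pos_iff.2 ⟨I⟩
  let U : Finset V := Finset.univ.filter (Useful r rej I)
  have hU : ∀ A ∈ U, Useful r rej I A := fun A hA => (Finset.mem_filter.1 hA).2
  let L := U.lcm (pi r rej)
  have hL0 : 0 < L := by
    apply Nat.pos_of_ne_zero
    rw [Ne, Finset.lcm_eq_zero_iff]
    rintro ⟨b, hb, hb0⟩
    have := (useful_pi (hU b hb)).1
    omega
  have hpp : ∀ p k : ℕ, p.Prime → 0 < k → p ^ k ∣ L → ∃ A ∈ U, p ^ k ∣ pi r rej A :=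
    fun p k hp hk h => prime_pow_dvd_lcm (fun a ha => (useful_pi (hU a ha)).1) hp hk h
  refine ⟨L, hL0, ?_, ?_, ?_⟩
  · by_contra hcon
    push Not at hcon
    obtain ⟨B, hB, hrB⟩ := hlt (ℓ - L) (by omega)
    obtain ⟨f, f0, ft, hf⟩ := walk_path hB
    obtain ⟨i, j, hij, he⟩ := Fintype.exists_ne_map_eq_of_card_lt
        (fun i : Fin (m + 1) => f i) (by simp [hm])
    wlog hij' : i < j generalizing i j
    · exact this j i hij.symm he.symm (lt_of_le_of_ne (not_lt.1 hij') hij.symm)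
    have hlt' : (i : ℕ) < j := hij'
    have hj := j.2
    have w1 := hf 0 i (by omega)
    rw [f0, zero_add] at w1
    have w2 := hf i (j - i) (by omega)
    rw [show (i : ℕ) + (j - i) = j by omega, ← he] at w2
    have w3 := hf i (ℓ - L - i) (by omega)
    rw [show (i : ℕ) + (ℓ - L - i) = ℓ - L by omega, ft] at w3
    have hx : ℓ - L - i ∈ R r rej (f i) := ⟨B, w3, hrB⟩
    have hA : Useful r rej I (f i) :=
      ⟨⟨j - i, by omega, by omega, w2⟩, ⟨i, by omega, w1⟩, ⟨_, hx⟩⟩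
    have hAU : f i ∈ U := Finset.mem_filter.2 ⟨Finset.mem_univ _, hA⟩
    have hper := (useful_pi hA).2.2.of_dvd (Finset.dvd_lcm hAU)
    rw [hper _ (by omega)] at hx
    apply hℓ
    have := R_walk w1 hx
    rwa [show ℓ - L - i + L + i = ℓ by omega] at this
  · intro p k hp hd
    rcases Nat.eq_zero_or_pos k with rfl | hk
    · rw [pow_zero]; exact hm0
    · obtain ⟨A, hA, hd'⟩ := hpp p k hp hk hd
      obtain ⟨h1, h2, -⟩ := useful_pi (hU A hA)
      exact (Nat.le_of_dvd h1 hd').trans h2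
  · set D := L.primeFactors.filter (fun p => m < p ^ 2) with hD
    have hDp : ∀ p ∈ D, p.Prime ∧ m < p ^ 2 ∧ p ∣ L := by
      intro p hp
      simp only [hD, Finset.mem_filter, Nat.mem_primeFactors] at hp
      exact ⟨hp.1.1, hp.2, hp.1.2.1⟩
    have hch : ∀ p : ℕ, ∃ A, p ∈ D → A ∈ U ∧ p ∣ pi r rej A := by
      intro p
      by_cases hp : p ∈ D
      · obtain ⟨h1, h2, h3⟩ := hDp p hp
        obtain ⟨A, hA, hd⟩ := hpp p 1 h1 one_pos (by simpa using h3)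
        exact ⟨A, fun _ => ⟨hA, by simpa using hd⟩⟩
      · exact ⟨I, fun h => absurd h hp⟩
    choose A hA using hch
    have hor : ∀ p : ℕ, ∃ f : ℕ → V, p ∈ D →
      (∀ i, i < pi r rej (A p) → pi r rej (f i) = pi r rej (A p)) ∧
      (∀ i, i < pi r rej (A p) → Per (Fintype.card V ^ 2) (R r rej (f i)) (pi r rej (A p))) ∧
      (∀ i j, i < pi r rej (A p) → j < pi r rej (A p) → f i ≤ f j → i = j) ∧
      (∀ i, i < pi r rej (A p) → ∃ s, s ≤ 2 * Fintype.card V ∧ Walk r s I (f i)) ∧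
      (∀ i, i < pi r rej (A p) → ∃ y, Fintype.card V ^ 2 ≤ y ∧ y ∈ R r rej (f i)) := by
      intro p
      by_cases hp : p ∈ D
      · obtain ⟨f, hf⟩ := orbit hmono (hU _ (hA p hp).1)
        exact ⟨f, fun _ => hf⟩
      · exact ⟨fun _ => I, fun h => absurd h hp⟩
    choose f hf using hor
    let O : ℕ → Finset V := fun p => (Finset.range (pi r rej (A p))).image (f p)
    have hOcard : ∀ p ∈ D, (O p).card = pi r rej (A p) := by
      intro p hp
      rw [Finset.card_image_of_injOn, Finset.card_range]
      intro i hi j hj hij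
      simp only [Finset.coe_range, Set.mem_Iio] at hi hj
      exact (hf p hp).2.2.1 i j hi hj hij.le
    have hdisj : ∀ p ∈ D, ∀ q ∈ D, p ≠ q → Disjoint (O p) (O q) := by
      intro p hp q hq hpq
      rw [Finset.disjoint_left]
      intro B hB1 hB2
      simp only [O, Finset.mem_image, Finset.mem_range] at hB1 hB2
      obtain ⟨i, hi, rfl⟩ := hB1
      obtain ⟨j, hj, hij⟩ := hB2
      have e1 := (hf p hp).1 i hi
      have e2 := (hf q hq).1 j hj
      rw [hij, e1] at e2
      have d1 := (hA p hp).2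
      have d2 := (hA q hq).2
      rw [← e2] at d2
      have hc : p.Coprime q := (Nat.coprime_primes (hDp p hp).1 (hDp q hq).1).2 hpq
      have hd := hc.mul_dvd_of_dvd_of_dvd d1 d2
      obtain ⟨h1, h2, -⟩ := useful_pi (hU _ (hA p hp).1)
      have hle := (Nat.le_of_dvd h1 hd).trans h2
      have b1 := (hDp p hp).2.1
      have b2 := (hDp q hq).2.1
      have : m * m < p ^ 2 * q ^ 2 := Nat.mul_lt_mul'' b1 b2
      have h3 : (p * q) * (p * q) ≤ m * m := Nat.mul_le_mul hle hle
      nlinarith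
    have hsum : ∑ p ∈ D, pi r rej (A p) ≤ m := by
      rw [← Finset.sum_congr rfl hOcard, ← Finset.card_biUnion hdisj]
      exact Finset.card_le_univ _
    set C := D.filter (fun p => pi r rej (A p) = p) with hC
    have hCD : ∀ p ∈ C, p ∈ D ∧ pi r rej (A p) = p := fun p hp => by
      simpa only [hC, Finset.mem_filter] using hp
    have hcheap : ∑ p ∈ C, p ≤ K := by
      have e : ∑ p ∈ C, p = ∑ p ∈ C, (O p).card :=
        Finset.sum_congr rfl fun p hp => by rw [hOcard p (hCD p hp).1, (hCD p hp).2]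
      rw [e, ← Finset.card_biUnion (fun p hp q hq => hdisj p (hCD p hp).1 q (hCD q hq).1)]
      apply hK
      intro X hX Y hY hne hle
      simp only [Finset.coe_biUnion, Set.mem_iUnion, Finset.mem_coe, O, Finset.mem_image,
        Finset.mem_range, exists_prop] at hX hY
      obtain ⟨q, hq, j, hj, rfl⟩ := hX
      obtain ⟨p, hp, i, hi, rfl⟩ := hY
      by_cases hpq : p = q
      · subst hpq
        exact hne (by rw [(hf p (hCD p hp).1).2.2.1 j i hj hi hle])
      · obtain ⟨hpD, hpe⟩ := hCD p hp
        obtain ⟨hqD, hqe⟩ := hCD q hq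
        have hc : p.Coprime q := (Nat.coprime_primes (hDp p hpD).1 (hDp q hqD).1).2 hpq
        obtain ⟨y, hy, hyR⟩ := (hf p hpD).2.2.2.2 i hi
        obtain ⟨s, hs, hsw⟩ := (hf q hqD).2.2.2.1 j hj
        have P1 := (hf p hpD).2.1 i hi
        have P2 := (hf q hqD).2.1 j hj
        rw [hpe] at P1
        rw [hqe] at P2
        have := full_of_coprime hc (hDp q hqD).1.pos P1 P2 (hmono _ _ hle) hy hyR
          (x := ℓ - s) (by omega)
        apply hℓ
        have h2 := R_walk hsw this
        rwa [Nat.sub_add_cancel (by omega)] at h2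
    have hsplit : ∀ p ∈ D, 2 * p ≤ pi r rej (A p) + if pi r rej (A p) = p then p else 0 := by
      intro p hp
      split_ifs with h
      · omega
      · obtain ⟨c, hc⟩ := (hA p hp).2
        have h0 := (useful_pi (hU _ (hA p hp).1)).1
        have : 2 ≤ c := by
          by_contra hcon
          interval_cases c <;> omega
        have := Nat.mul_le_mul_left p this
        omega
    have := Finset.sum_le_sum hsplit
    have hif : ∑ p ∈ D, (if pi r rej (A p) = p then p else 0) = ∑ p ∈ C, p :=
      (Finset.sum_filter _ _).symm
    rw [← Finset.mul_sum, Finset.sum_add_distrib, hif] at this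
    omega

end UL

namespace UL

theorem walk_nfa {σ Q : Type} [Fintype Q] (M : NFA σ Q) (t : ℕ) (A B : Finset Q) :
    Walk (fun A B : Finset Q => ∃ a, (B : Set Q) = M.stepSet A a) t A B ↔
      ∃ w : List σ, w.length = t ∧ (B : Set Q) = M.evalFrom A w := by
  classical
  induction t generalizing A with
  | zero =>
    simp only [Walk, List.length_eq_zero_iff]
    constructor
    · rintro rfl; exact ⟨[], rfl, by simp⟩
    · rintro ⟨w, rfl, h⟩
      simpa using h.symm
  | succ t ih =>
    simp only [Walk, ih]
    constructor
    · rintro ⟨C, ⟨a, ha⟩, w, hw, h⟩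
      exact ⟨a :: w, by simp [hw], by rw [NFA.evalFrom_cons, ← ha, h]⟩
    · rintro ⟨w, hw, h⟩
      match w, hw with
      | a :: w, hw =>
        refine ⟨(M.stepSet A a).toFinset, ⟨a, by simp⟩, w, by simpa using hw, ?_⟩
        rw [NFA.evalFrom_cons] at h
        simpa using h

theorem evalFrom_mono {σ Q : Type} (M : NFA σ Q) {S T : Set Q} (h : S ⊆ T) (w : List σ) :
    M.evalFrom S w ⊆ M.evalFrom T w := by
  have := M.evalFrom_union S T w
  rw [Set.union_eq_self_of_subset_left h] at this
  rw [this]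
  exact Set.subset_union_left

theorem R_nfa {σ Q : Type} [Fintype Q] (M : NFA σ Q) (A : Finset Q) (t : ℕ) :
    t ∈ R (fun A B : Finset Q => ∃ a, (B : Set Q) = M.stepSet A a)
      (fun B => ∀ q ∈ M.accept, q ∉ B) A ↔
      ∃ w : List σ, w.length = t ∧ ∀ q ∈ M.accept, q ∉ M.evalFrom A w := by
  classical
  simp only [R, Set.mem_ofPred_eq, walk_nfa]
  constructor
  · rintro ⟨B, ⟨w, hw, hB⟩, h⟩
    refine ⟨w, hw, fun q hq => ?_⟩
    rw [← hB]
    exact_mod_cast h q hq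
  · rintro ⟨w, hw, h⟩
    exact ⟨(M.evalFrom A w).toFinset, ⟨w, hw, by simp⟩, fun q hq => by simpa using h q hq⟩

theorem nfa_comb {σ Q : Type} [Fintype Q] (M : NFA σ Q) {ℓ n : ℕ} (hn : Fintype.card Q = n)
    (hℓ : ∀ w : List σ, w.length = ℓ → w ∈ M.accepts)
    (hlt : ∀ t < ℓ, ¬ ∀ w : List σ, w.length = t → w ∈ M.accepts) 
    (hbig : (2 ^ n) ^ 2 + 2 * 2 ^ n ≤ ℓ) :
    ∃ L : ℕ, 0 < L ∧ ℓ < (2 ^ n) ^ 2 + 2 * 2 ^ n + L ∧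
      (∀ p k : ℕ, p.Prime → p ^ k ∣ L → p ^ k ≤ 2 ^ n) ∧
      2 * ∑ p ∈ L.primeFactors with 2 ^ n < p ^ 2, p ≤ 2 ^ n + n.choose (n / 2) := by
  classical
  have hc : Fintype.card (Finset Q) = 2 ^ n := by rw [Fintype.card_finset, hn]
  have hI : ((M.start.toFinset : Finset Q) : Set Q) = M.start := by simp
  have := main_comb (V := Finset Q) (r := fun A B : Finset Q => ∃ a, (B : Set Q) = M.stepSet A a)
      (rej := fun B => ∀ q ∈ M.accept, q ∉ B) (K := n.choose (n / 2)) (I := M.start.toFinset)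
      (ℓ := ℓ) ?_ ?_ ?_ ?_ (by rw [hc]; exact hbig)
  · rw [hc] at this
    exact this
  · intro A B hBA t ht
    rw [R_nfa] at ht ⊢
    obtain ⟨w, hw, h⟩ := ht
    exact ⟨w, hw, fun q hq hqB =>
      h q hq (evalFrom_mono M (Finset.coe_subset.2 hBA) w hqB)⟩
  · intro F hF
    have := IsAntichain.sperner (𝒜 := F) hF
    rwa [hn] at this
  · rw [R_nfa, hI]
    rintro ⟨w, hw, h⟩
    obtain ⟨q, hq, hq'⟩ := M.mem_accepts.1 (hℓ w hw)
    exact h q hq hq'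
  · intro t ht
    rw [R_nfa, hI]
    have := hlt t ht
    push Not at this
    obtain ⟨w, hw, h⟩ := this
    exact ⟨w, hw, fun q hq hq' => h (M.mem_accepts.2 ⟨q, hq, hq'⟩)⟩

/-- Landau-type bound for sums of logarithms of distinct primes. -/
theorem landau {D : Finset ℕ} (hD : ∀ p ∈ D, p.Prime) {N : ℕ} (hN : 3 ≤ N) {s : ℝ}
    (hs : ∑ p ∈ D, (p : ℝ) ≤ s) :
    ∑ p ∈ D, Real.log p ≤ Real.log 4 * N / 2 + Real.log N / N * s := by
  have hN0 : (0 : ℝ) < N := by positivity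
  have hlN : 0 ≤ Real.log N := Real.log_nonneg (by exact_mod_cast (by omega : 1 ≤ N))
  have key : ∀ p ∈ D, Real.log p ≤ Real.log N / N * p +
      if p ≤ N then Real.log p * ((N - p : ℝ) / N) else 0 := by
    intro p hp
    have hp1 : (1 : ℝ) ≤ p := by exact_mod_cast (hD p hp).one_lt.le
    split_ifs with h
    · have h1 : Real.log p ≤ Real.log N := Real.log_le_log (by linarith) (by exact_mod_cast h)
      have h2 : Real.log p = Real.log p / N * p + Real.log p * ((N - p : ℝ) / N) := by
        field_simp; ring
      have h3 : Real.log p / N * p ≤ Real.log N / N * p := by gcongr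
      linarith
    · push Not at h
      have he : Real.exp 1 ≤ N := by
        have : (3 : ℝ) ≤ N := by exact_mod_cast hN
        linarith [Real.exp_one_lt_d9]
      have hNp : (N : ℝ) ≤ p := by exact_mod_cast h.le
      have := Real.log_div_self_antitoneOn (a := N) (b := p) he (he.trans hNp) hNp
      simp only at this
      rw [add_zero, ← div_le_iff₀ (by linarith)]
      exact this
  have hsum : ∑ p ∈ D, (if p ≤ N then Real.log p * ((N - p : ℝ) / N) else 0) ≤
      Real.log 4 * N / 2 := by
    rw [← Finset.sum_filter]
    have h1 : ∑ p ∈ D with p ≤ N, Real.log p * ((N - p : ℝ) / N) ≤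
        ∑ p ∈ (Finset.range (N + 1)).filter Nat.Prime, Real.log p * ((N - p : ℝ) / N) := by
      apply Finset.sum_le_sum_of_subset_of_nonneg
      · intro p hp
        simp only [Finset.mem_filter, Finset.mem_range] at hp ⊢
        exact ⟨by omega, hD p hp.1⟩
      · intro p hp _
        simp only [Finset.mem_filter, Finset.mem_range] at hp
        have : (p : ℝ) ≤ N := by exact_mod_cast (by omega : p ≤ N)
        have h1 : (0 : ℝ) ≤ N - p := by linarith
        have h2 : 0 ≤ Real.log p := Real.log_nonneg (by exact_mod_cast hp.2.one_lt.le)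
        positivity
    have h2 : ∀ N : ℕ, ∑ p ∈ (Finset.range (N + 1)).filter Nat.Prime,
        Real.log p * (N - p : ℝ) ≤ Real.log 4 * N ^ 2 / 2 := by
      intro N
      induction N with
      | zero => simp [Finset.sum_filter]
      | succ N ih =>
        rw [Finset.sum_filter, Finset.sum_range_succ, ← Finset.sum_filter]
        have e : ∑ p ∈ (Finset.range (N + 1)).filter Nat.Prime,
          Real.log p * ((N + 1 : ℕ) - p : ℝ) = ∑ p ∈ (Finset.range (N + 1)).filter Nat.Prime,
          Real.log p * (N - p : ℝ) + Chebyshev.theta N := by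
          rw [Chebyshev.theta_eq_sum_Icc, Nat.floor_natCast,
            show Finset.Icc 0 N = Finset.range (N + 1) by ext; simp,
            ← Finset.sum_add_distrib]
          push_cast
          apply Finset.sum_congr rfl
          intro p _
          ring
        rw [e]
        have ht := Chebyshev.theta_le_log4_mul_x (x := N) (by positivity)
        have h4 : 0 ≤ Real.log 4 := Real.log_nonneg (by norm_num)
        push_cast
        have : (if Nat.Prime (N + 1) then Real.log ((N : ℝ) + 1) * ((N + 1 : ℝ) - (N + 1)) else 0)
          = 0 := by simp
        rw [this]
        nlinarith
    have h3 := h2 N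
    have h4 : ∑ p ∈ (Finset.range (N + 1)).filter Nat.Prime, Real.log p * ((N - p : ℝ) / N) =
        (∑ p ∈ (Finset.range (N + 1)).filter Nat.Prime, Real.log p * (N - p : ℝ)) / N := by
      rw [Finset.sum_div]
      exact Finset.sum_congr rfl fun p _ => by ring
    rw [h4] at h1
    refine h1.trans ?_
    rw [div_le_iff₀ hN0]
    calc _ ≤ _ := h3
      _ = _ := by ring
  calc ∑ p ∈ D, Real.log p ≤ _ := Finset.sum_le_sum key
    _ = Real.log N / N * ∑ p ∈ D, (p : ℝ) + ∑ p ∈ D,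
        (if p ≤ N then Real.log p * ((N - p : ℝ) / N) else 0) := by
        rw [Finset.sum_add_distrib, Finset.mul_sum]
    _ ≤ Real.log N / N * s + Real.log 4 * N / 2 := by gcongr
    _ = _ := by ring

theorem log_L {L m : ℕ} (hL : 0 < L)
    (h : ∀ p k : ℕ, p.Prime → p ^ k ∣ L → p ^ k ≤ m) :
    Real.log L ≤ Nat.primeCounting (Nat.sqrt m) * Real.log m +
      ∑ p ∈ L.primeFactors with m < p ^ 2, Real.log p := by
  have e : Real.log L = ∑ p ∈ L.primeFactors, (L.factorization p) * Real.log p := by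
    conv_lhs => rw [← Nat.prod_factorization_pow_eq_self hL.ne']
    rw [Finsupp.prod, Nat.support_factorization, Nat.cast_prod, Real.log_prod]
    · exact Finset.sum_congr rfl fun p _ => by rw [Nat.cast_pow, Real.log_pow]
    · intro p hp
      have := (Nat.prime_of_mem_primeFactors hp).pos
      positivity
  have hlm : 0 ≤ Real.log m := Real.log_natCast_nonneg m
  rw [e, ← Finset.sum_filter_add_sum_filter_not L.primeFactors (fun p => m < p ^ 2), add_comm]
  apply add_le_add
  · calc _ ≤ ∑ p ∈ L.primeFactors with ¬ m < p ^ 2, Real.log m := by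
          apply Finset.sum_le_sum
          intro p hp
          simp only [Finset.mem_filter] at hp
          have hp' := Nat.prime_of_mem_primeFactors hp.1
          rw [← Real.log_pow, ← Nat.cast_pow]
          apply Real.log_le_log
          · have := hp'.pos
            positivity
          · exact_mod_cast h p _ hp' (Nat.ordProj_dvd L p)
      _ = (L.primeFactors.filter (fun p => ¬ m < p ^ 2)).card * Real.log m := by
          rw [Finset.sum_const, nsmul_eq_mul]
      _ ≤ _ := by
          gcongr
          rw [Nat.primeCounting, Nat.primeCounting', Nat.count_eq_card_filter_range]
          apply Finset.card_le_card
          intro p hp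
          simp only [Finset.mem_filter, Finset.mem_range, not_lt] at hp ⊢
          refine ⟨?_, Nat.prime_of_mem_primeFactors hp.1⟩
          have : p ≤ Nat.sqrt m := by rw [Nat.le_sqrt']; exact hp.2
          omega
  · apply Finset.sum_le_sum
    intro p hp
    simp only [Finset.mem_filter] at hp
    have hp' := Nat.prime_of_mem_primeFactors hp.1
    have hlp : 0 ≤ Real.log p := Real.log_natCast_nonneg p
    have : L.factorization p ≤ 1 := by
      by_contra hcon
      have hd : p ^ 2 ∣ L := (Nat.pow_dvd_pow p (by omega)).trans (Nat.ordProj_dvd L p)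
      have := h p 2 hp' hd
      omega
    have : (L.factorization p : ℝ) ≤ 1 := by exact_mod_cast this
    nlinarith

theorem central {n : ℕ} (hn : 8 ≤ n) : 256 * n.choose (n / 2) ≤ 70 * 2 ^ n := by
  induction n, hn using Nat.le_induction with
  | base => decide
  | succ n hn ih =>
    have : (n + 1).choose ((n + 1) / 2) ≤ 2 * n.choose (n / 2) := by
      obtain ⟨k, hk⟩ : ∃ k, (n + 1) / 2 = k + 1 := ⟨(n + 1) / 2 - 1, by omega⟩
      rw [hk, Nat.choose_succ_succ']
      have h1 := Nat.choose_le_middle k n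
      have h2 := Nat.choose_le_middle (k + 1) n
      omega
    rw [pow_succ]
    omega

end UL
namespace UL

set_option maxHeartbeats 1000000 in
theorem final_bound {n : ℕ} (hn : 8 ≤ n) {y l : ℝ} (hy : 0 < y) (hym : y ^ 2 = 2 ^ n)
    (hl : l = n * Real.log 2) (h1 : 1200 ≤ Real.sqrt l) (h2 : Real.log l ≤ 0.01 * l)
    (h3 : l ≤ 0.00002 * y) {ℓ L : ℕ} (hL : 0 < L) (hℓ : ℓ < (2 ^ n) ^ 2 + 2 * 2 ^ n + L)
    (hpp : ∀ p k : ℕ, p.Prime → p ^ k ∣ L → p ^ k ≤ 2 ^ n)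
    (hs : 2 * ∑ p ∈ L.primeFactors with 2 ^ n < p ^ 2, p ≤ 2 ^ n + n.choose (n / 2)) :
    (ℓ : ℝ) ≤ Real.exp (y * Real.sqrt l) := by
  set q := Real.sqrt l with hq
  have hl0 : 0 < l := Real.sqrt_pos.1 (by linarith)
  have hq2 : q ^ 2 = l := Real.sq_sqrt hl0.le
  set X := y * q with hX
  have hX2 : X ^ 2 = 2 ^ n * l := by rw [hX, mul_pow, hym, hq2]
  have hlm : Real.log ((2 : ℝ) ^ n) = l := by rw [Real.log_pow, hl]
  have hly : Real.log y = l / 2 := by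
    rw [← hym, Real.log_pow] at hlm
    push_cast at hlm
    linarith
  have hlX : Real.log X ≤ 0.505 * l := by
    have : Real.log q = Real.log l / 2 := by
      rw [← hq2, Real.log_pow]; push_cast; ring
    rw [hX, Real.log_mul hy.ne' (by linarith), hly, this]
    linarith
  have hyl : 50000 * l ≤ y := by linarith
  have hl6 : 1440000 ≤ l := by nlinarith
  have hXl : 1000 * l ≤ X := by nlinarith
  have hlog2 := Real.log_two_lt_d9
  have hlog2' := Real.log_two_gt_d9
  have hlog4 : Real.log 4 = 2 * Real.log 2 := by
    rw [show (4 : ℝ) = 2 ^ 2 by norm_num, Real.log_pow]; norm_num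
  -- small primes
  have hpi : (Nat.primeCounting (Nat.sqrt (2 ^ n)) : ℝ) * l ≤ 0.01 * X := by
    have hfl : Nat.sqrt (2 ^ n) = ⌊y⌋₊ := by
      rw [← Real.nat_floor_real_sqrt_eq_nat_sqrt]
      congr 1
      push_cast
      rw [← hym, Real.sqrt_sq hy.le]
    rw [hfl]
    have hpl := Chebyshev.pi_le_log4_mul_div (x := y) (by linarith)
    rw [Real.log_sqrt hy.le, hly] at hpl
    set z := Real.sqrt y with hz
    have hz2 : z ^ 2 = y := Real.sq_sqrt hy.le
    have hz0 : 0 ≤ z := Real.sqrt_nonneg y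
    have hqz : 200 * q ≤ z := by
      apply le_of_sq_le_sq _ hz0
      rw [mul_pow, hq2, hz2]
      linarith
    have e : (Real.log 4 * y / (l / 2 / 2) + z) * l = 4 * Real.log 4 * y + z * l := by
      field_simp; ring
    have h5 := mul_le_mul_of_nonneg_right hpl hl0.le
    rw [e] at h5
    have h6 : z * l ≤ 0.005 * X := by
      rw [hX, ← hz2, ← hq2]
      have : 0 ≤ z * q := by positivity
      nlinarith
    have h7 : 4 * Real.log 4 * y ≤ 0.005 * X := by
      rw [hX, hlog4]
      nlinarith
    linarith
  -- large primes
  set D := L.primeFactors.filter (fun p => 2 ^ n < p ^ 2) with hD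
  have hsR : ∑ p ∈ D, (p : ℝ) ≤ 0.637 * 2 ^ n := by
    have hc := central hn
    have h8 : 512 * ∑ p ∈ D, p ≤ 326 * 2 ^ n := by omega
    have h9 : (512 : ℝ) * ∑ p ∈ D, (p : ℝ) ≤ 326 * 2 ^ n := by
      have h10 := (Nat.cast_le (α := ℝ)).2 h8
      push_cast at h10
      exact h10
    have : (0 : ℝ) ≤ 2 ^ n := by positivity
    linarith
  set N := ⌈0.7 * X⌉₊ with hN
  have hN1 : 0.7 * X ≤ N := Nat.le_ceil _
  have hN2 : (N : ℝ) ≤ 0.71 * X := by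
    have := Nat.ceil_lt_add_one (a := 0.7 * X) (by linarith)
    rw [← hN] at this
    linarith
  have hN3 : 3 ≤ N := by
    have : (3 : ℝ) ≤ N := by linarith
    exact_mod_cast this
  have hlan := landau (D := D) (fun p hp =>
    Nat.prime_of_mem_primeFactors (Finset.mem_filter.1 hp).1) hN3 hsR
  have hXpos : 0 < X := by linarith
  have hlN : Real.log N ≤ 0.505 * l :=
    (Real.log_le_log (by linarith) (by linarith)).trans hlX
  have ht : Real.log N / N * (0.637 * 2 ^ n) ≤ 0.46 * X := by
    calc Real.log N / N * (0.637 * 2 ^ n) ≤ (0.505 * l) / (0.7 * X) * (0.637 * 2 ^ n) := by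
          gcongr
      _ = 0.505 * 0.637 / 0.7 * (2 ^ n * l) / X := by field_simp
      _ = 0.505 * 0.637 / 0.7 * X := by rw [← hX2]; field_simp
      _ ≤ _ := by nlinarith
  have ht2 : Real.log 4 * N / 2 ≤ 0.493 * X := by
    rw [hlog4]
    have : Real.log 2 * N ≤ 0.6931471808 * (0.71 * X) := by gcongr
    linarith
  have hlogL : Real.log L ≤ 0.98 * X := by
    have := log_L hL hpp
    push_cast at this
    rw [hlm] at this
    linarith
  have hLe : (L : ℝ) ≤ Real.exp (0.98 * X) :=
    (Real.log_le_iff_le_exp (by exact_mod_cast hL)).1 hlogL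
  have hme : (2 : ℝ) ^ n = Real.exp l := by
    rw [← hlm, Real.exp_log (by positivity)]
  have h3m : 3 * ((2 : ℝ) ^ n) ^ 2 ≤ Real.exp (0.98 * X) := by
    have h3 : (3 : ℝ) ≤ Real.exp 2 := by
      have := Real.add_one_le_exp (2 : ℝ)
      linarith
    rw [hme, ← Real.exp_nat_mul]
    calc 3 * Real.exp ((2 : ℕ) * l) ≤ Real.exp 2 * Real.exp ((2 : ℕ) * l) := by gcongr
      _ = Real.exp (2 + 2 * l) := by rw [← Real.exp_add]; norm_num
      _ ≤ _ := Real.exp_le_exp.2 (by linarith)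
  have hfin : 2 * Real.exp (0.98 * X) ≤ Real.exp X := by
    have h4 : (2 : ℝ) ≤ Real.exp (0.02 * X) := by
      have := Real.add_one_le_exp (0.02 * X)
      linarith
    calc 2 * Real.exp (0.98 * X) ≤ Real.exp (0.02 * X) * Real.exp (0.98 * X) := by gcongr
      _ = Real.exp X := by rw [← Real.exp_add]; congr 1; ring
  have hℓR : (ℓ : ℝ) ≤ ((2 : ℝ) ^ n) ^ 2 + 2 * 2 ^ n + L := by
    have h10 := (Nat.cast_le (α := ℝ)).2 hℓ.le
    push_cast at h10
    exact h10
  have h2n : (1 : ℝ) ≤ 2 ^ n := one_le_pow₀ (by norm_num)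
  nlinarith

theorem eventually_facts : ∀ᶠ n : ℕ in Filter.atTop,
    1200 ≤ Real.sqrt (n * Real.log 2) ∧
    Real.log (n * Real.log 2) ≤ 0.01 * (n * Real.log 2) ∧
    n * Real.log 2 ≤ 0.00002 * (2 : ℝ) ^ ((n : ℝ) / 2) := by
  have hlog2 := Real.log_two_lt_d9
  have hlog2' := Real.log_two_gt_d9
  have ht : Filter.Tendsto (fun n : ℕ => (n : ℝ) * Real.log 2) Filter.atTop Filter.atTop :=
    tendsto_natCast_atTop_atTop.atTop_mul_const (by linarith)
  have e1 := (Real.tendsto_sqrt_atTop.comp ht).eventually_ge_atTop 1200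
  have e2 := ht.eventually
    ((Real.isLittleO_log_id_atTop.def (c := 0.01) (by norm_num)))
  have e3 := (tendsto_pow_const_div_const_pow_of_one_lt 2 (r := (2 : ℝ)) (by norm_num)).eventually
    (eventually_le_nhds (show (0 : ℝ) < 0.00002 ^ 2 by norm_num))
  filter_upwards [e1, e2, e3] with n h1 h2 h3
  have hpos : 0 ≤ (n : ℝ) * Real.log 2 := by positivity
  refine ⟨h1, ?_, ?_⟩
  · simp only [id, Real.norm_eq_abs] at h2
    rw [abs_of_nonneg hpos] at h2
    exact (le_abs_self _).trans h2
  · have hy : ((2 : ℝ) ^ ((n : ℝ) / 2)) ^ 2 = 2 ^ n := by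
      rw [← Real.rpow_natCast, ← Real.rpow_mul (by norm_num)]
      rw [← Real.rpow_natCast]
      congr 1
      push_cast
      ring
    rw [div_le_iff₀ (by positivity)] at h3
    have hn0 : (0 : ℝ) ≤ n := by positivity
    have : (n : ℝ) ≤ 0.00002 * (2 : ℝ) ^ ((n : ℝ) / 2) := by
      apply le_of_sq_le_sq _ (by positivity)
      rw [mul_pow, hy]
      exact h3
    nlinarith

end UL

/-- Asymptotic upper bound on the minimal universality length of an `n`-state NFA:
for every `ε > 0`, for all sufficiently large `n`, every `n`-state NFA with a universal
length has minimal universality length at most `exp ((1 + ε) * 2^(n/2) * √(n * log 2))`. -/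
theorem nfa_min_univ_length_upper_bound :
    ∀ ε : ℝ, 0 < ε → ∃ N : ℕ, ∀ n : ℕ, N ≤ n →
      ∀ (σ Q : Type) [Fintype σ] [Nonempty σ] [Fintype Q],
        Fintype.card Q = n →
        ∀ M : NFA σ Q, (∃ ℓ : ℕ, IsUnivLength M.accepts ℓ) →
          ((sInf {ℓ : ℕ | IsUnivLength M.accepts ℓ} : ℕ) : ℝ) ≤
            Real.exp ((1 + ε) * (2 : ℝ) ^ ((n : ℝ) / 2) *
              Real.sqrt ((n : ℝ) * Real.log 2)) := by
  intro ε hε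
  obtain ⟨N, hN⟩ := Filter.eventually_atTop.1 UL.eventually_facts
  refine ⟨max N 8, ?_⟩
  intro n hn σ Q _ _ _ hcard M hex
  obtain ⟨h1, h2, h3⟩ := hN n (le_of_max_le_left hn)
  have hn8 : 8 ≤ n := le_of_max_le_right hn
  have hy : ((2 : ℝ) ^ ((n : ℝ) / 2)) ^ 2 = 2 ^ n := by
    rw [← Real.rpow_natCast, ← Real.rpow_mul (by norm_num)]
    rw [← Real.rpow_natCast]
    congr 1
    push_cast
    ring
  have hy0 : (0 : ℝ) < (2 : ℝ) ^ ((n : ℝ) / 2) := by positivity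
  set ℓ := sInf {ℓ : ℕ | IsUnivLength M.accepts ℓ} with hℓ
  have hmem : IsUnivLength M.accepts ℓ := Nat.sInf_mem (s := {ℓ | IsUnivLength M.accepts ℓ}) hex
  have hlt : ∀ t < ℓ, ¬ IsUnivLength M.accepts t := fun t ht => Nat.notMem_of_lt_sInf ht
  have hmain : (ℓ : ℝ) ≤ Real.exp ((2 : ℝ) ^ ((n : ℝ) / 2) * Real.sqrt (n * Real.log 2)) := by
    by_cases hbig : (2 ^ n) ^ 2 + 2 * 2 ^ n ≤ ℓ
    · obtain ⟨L, hL, hL2, hL3, hL4⟩ := UL.nfa_comb M hcard hmem hlt hbig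
      exact UL.final_bound hn8 hy0 hy rfl h1 h2 h3 hL hL2 hL3 hL4
    · refine UL.final_bound hn8 hy0 hy rfl h1 h2 h3 (L := 1) one_pos (by omega) ?_ (by simp)
      intro p k _ hd
      rw [Nat.dvd_one.1 hd]
      exact Nat.one_le_two_pow
  refine hmain.trans (Real.exp_le_exp.2 ?_)
  gcongr
  nlinarith
end

section
/- Let M be an NFA with n states over a finite alphabet Σ. If there exists some ℓ ≥ 0 such that every word of length ℓ over Σ is accepted by M, then there exists such an ℓ with ℓ ≤ 2^(4^n). -/
/-- The set of subset-automaton states reached by words of length `ℓ`. -/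
def reachLevel {σ Q : Type} (M : NFA σ Q) (ℓ : ℕ) : Set (Set Q) :=
  {S | ∃ w : List σ, w.length = ℓ ∧ M.eval w = S}

theorem reachLevel_succ {σ Q : Type} (M : NFA σ Q) (ℓ : ℕ) :
    reachLevel M (ℓ + 1) = {T | ∃ S ∈ reachLevel M ℓ, ∃ a : σ, M.stepSet S a = T} := by
  ext T
  constructor
  · rintro ⟨w, hw, rfl⟩
    rcases List.eq_nil_or_concat w with rfl | ⟨v, a, rfl⟩
    · simp at hw
    · refine ⟨M.eval v, ⟨v, by simpa using hw, rfl⟩, a, ?_⟩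
      simp [NFA.eval_append_singleton]
  · rintro ⟨S, ⟨w, hw, rfl⟩, a, rfl⟩
    exact ⟨w ++ [a], by simp [hw], by simp [NFA.eval_append_singleton]⟩

theorem reachLevel_add {σ Q : Type} (M : NFA σ Q) {i j : ℕ}
    (h : reachLevel M i = reachLevel M j) (k : ℕ) :
    reachLevel M (i + k) = reachLevel M (j + k) := by
  induction k with
  | zero => simpa using h
  | succ k ih => rw [← add_assoc, ← add_assoc, reachLevel_succ, reachLevel_succ, ih]

theorem isUnivLength_iff_reachLevel {σ Q : Type} (M : NFA σ Q) (ℓ : ℕ) :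
    IsUnivLength M.accepts ℓ ↔ ∀ S ∈ reachLevel M ℓ, ∃ q ∈ M.accept, q ∈ S := by
  constructor
  · rintro h S ⟨w, hw, rfl⟩
    exact h w hw
  · intro h w hw
    exact h _ ⟨w, hw, rfl⟩

/-- If an NFA with `n` states has some universal length, then it has one of size at most
`2 ^ (4 ^ n)`. -/
theorem nfa_univ_length_le (σ Q : Type) [Fintype σ] [Fintype Q] (n : ℕ)
    (hQ : Fintype.card Q = n) (M : NFA σ Q)
    (h : ∃ ℓ : ℕ, IsUnivLength M.accepts ℓ) :
    ∃ ℓ : ℕ, ℓ ≤ 2 ^ (4 ^ n) ∧ IsUnivLength M.accepts ℓ := by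
  classical
  refine ⟨Nat.find h, ?_, Nat.find_spec h⟩
  have hinj : Function.Injective (fun i : Fin (Nat.find h) => reachLevel M i) := by
    have key : ∀ i j : ℕ, i < j → j < Nat.find h → reachLevel M i ≠ reachLevel M j := by
      intro i j hij hj he
      have h1 := reachLevel_add M he (Nat.find h - j)
      rw [Nat.add_sub_cancel' hj.le] at h1
      have h2 := (isUnivLength_iff_reachLevel M _).1 (Nat.find_spec h)
      rw [← h1] at h2
      exact Nat.find_min h (by omega) ((isUnivLength_iff_reachLevel M _).2 h2)
    intro i j he
    rcases lt_trichotomy (i : ℕ) j with hl | hl | hl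
    · exact (key _ _ hl j.2 he).elim
    · exact Fin.ext hl
    · exact (key _ _ hl i.2 he.symm).elim
  have hc := Fintype.card_le_of_injective _ hinj
  rw [Fintype.card_fin, Fintype.card_set, Fintype.card_set, hQ] at hc
  refine hc.trans (Nat.pow_le_pow_right (by norm_num) (Nat.pow_le_pow_left (by norm_num) n))
end

section
/- For every m ≥ 1 there exists an NFA with exactly 11m + 5 states over an alphabet with 15 letters such that the NFA has a universal length and its minimal universality length equals lcm(1, 2, …, 2^m) · (2m + 3). -/
namespace UnivLen

/-- States. -/
inductive St (m : ℕ) : Type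
  | ctl (e : Bool) (j : Fin (2 * m + 3))
  | qu (i : Fin m) (x y : Bool)
  | mR
  | mA
  | mC
  | sink
  | pad (i : Fin (3 * m - 5))

/-- The state type as a sum. -/
def stEquiv (m : ℕ) : St m ≃
    (Bool × Fin (2 * m + 3)) ⊕ (Fin m × Bool × Bool) ⊕ (Fin 4) ⊕ Fin (3 * m - 5) where
  toFun
    | .ctl e j => .inl (e, j)
    | .qu i x y => .inr (.inl (i, x, y))
    | .mR => .inr (.inr (.inl 0))
    | .mA => .inr (.inr (.inl 1))
    | .mC => .inr (.inr (.inl 2))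
    | .sink => .inr (.inr (.inl 3))
    | .pad i => .inr (.inr (.inr i))
  invFun
    | .inl (e, j) => .ctl e j
    | .inr (.inl (i, x, y)) => .qu i x y
    | .inr (.inr (.inl 0)) => .mR
    | .inr (.inr (.inl 1)) => .mA
    | .inr (.inr (.inl 2)) => .mC
    | .inr (.inr (.inl 3)) => .sink
    | .inr (.inr (.inr i)) => .pad i
  left_inv s := by cases s <;> rfl
  right_inv s := by
    rcases s with ⟨e, j⟩ | ⟨i, x, y⟩ | i | i
    · rfl
    · rfl
    · fin_cases i <;> rfl
    · rfl

noncomputable instance (m : ℕ) : Fintype (St m) := Fintype.ofEquiv _ (stEquiv m).symm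

lemma card_St (m : ℕ) (hm : 2 ≤ m) : Fintype.card (St m) = 11 * m + 5 := by
  rw [Fintype.card_congr (stEquiv m)]
  simp
  omega

/-- Letters: `none` is the waiting letter, `some (x, y, z)` a working letter. -/
abbrev Letter := Option (Bool × Bool × Bool)

/-- Decoding of the 15 letters. -/
def dec (a : Fin 15) : Letter :=
  if a.val < 8 then some (a.val.testBit 0, a.val.testBit 1, a.val.testBit 2) else none

lemma dec_surj : ∀ l : Letter, ∃ a, dec a = l := by decide

/-- Transition relation. -/
def δ (m : ℕ) : St m → Letter → St m → Prop
  | .ctl e j, none, .ctl e' j' =>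
      m ≤ j.val ∧ e' = e ∧ (j'.val = j.val + 1 ∨ (j.val = 2 * m + 2 ∧ j'.val = 0))
  | .ctl e j, none, .mR => j.val = 2 * m + 2 ∧ e = true
  | .ctl e j, none, .mA => j.val = 2 * m + 2 ∧ e = false
  | .ctl _ j, none, .sink => j.val < m
  | .ctl e j, some (x, _, z), .ctl e' j' =>
      j.val < m ∧ j'.val = j.val + 1 ∧ (e' = true ↔ (z = x ∧ (e = true ∨ j.val = 0)))
  | .ctl _ j, some (x, _, z), .qu i x' z' => j.val < m ∧ i.val + 1 = m ∧ x' = x ∧ z' = z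
  | .ctl _ j, some _, .sink => m ≤ j.val
  | .qu i x y, none, .qu i' x' y' => i' = i ∧ x' = x ∧ y' = y
  | .qu i x y, some _, .qu i' x' y' => i'.val + 1 = i.val ∧ x' = x ∧ y' = y
  | .qu i x y, some (x', y', _), .sink => i.val = 0 ∧ ¬ (x' = x ∧ y' = y)
  | .mR, some (x, y, z), .mR => x = y ∧ z = false
  | .mR, some (x, y, z), .sink => ¬ (x = y ∧ z = false)
  | .mA, some (_, y, z), .mA => z = !y ∧ y = true
  | .mA, some (_, y, z), .mC => z = !y ∧ y = false
  | .mA, some (_, y, z), .sink => ¬ (z = !y)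
  | .mC, some (_, y, z), .mC => z = y
  | .mC, some (_, y, z), .sink => ¬ (z = y)
  | .sink, _, .sink => True
  | _, _, _ => False

/-- The counter. -/
def c (k t : ℕ) : ℕ := (t + k) % (k + 1)

lemma c_zero (k : ℕ) : c k 0 = k := by
  unfold c; rw [Nat.mod_eq_of_lt] <;> omega

lemma c_le (k t : ℕ) : c k t ≤ k := Nat.lt_succ_iff.mp (Nat.mod_lt _ (Nat.succ_pos k))

lemma c_reset {k t : ℕ} (h : c k t = k) : c k (t + 1) = 0 := by
  unfold c at *
  rw [show t + 1 + k = (t + k) + 1 by ring, Nat.add_mod, h]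
  rcases Nat.eq_zero_or_pos k with rfl | hk
  · simp
  · rw [Nat.mod_eq_of_lt (show 1 < k + 1 by omega), Nat.mod_self]

lemma c_inc {k t : ℕ} (h : c k t ≠ k) : c k (t + 1) = c k t + 1 := by
  have hle := c_le k t
  unfold c at *
  rw [show t + 1 + k = (t + k) + 1 by ring, Nat.add_mod]
  rw [Nat.mod_eq_of_lt (show 1 < k + 1 by omega), Nat.mod_eq_of_lt]
  omega

lemma c_eq_iff (k t : ℕ) : c k t = k ↔ (k + 1) ∣ t := by
  constructor
  · intro h
    have := c_reset h
    unfold c at this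
    rw [show t + 1 + k = t + (k + 1) by ring, Nat.add_mod_right] at this
    exact Nat.dvd_of_mod_eq_zero this
  · rintro ⟨s, rfl⟩
    unfold c
    rw [Nat.mul_add_mod, Nat.mod_eq_of_lt (by omega)]

lemma testBit_inc (j : ℕ) : ∀ c : ℕ,
    (((∀ i < j, c.testBit i = true) → (c + 1).testBit j = !c.testBit j) ∧
     ((∃ i < j, c.testBit i = false) → (c + 1).testBit j = c.testBit j)) := by
  induction j with
  | zero =>
    intro c
    constructor
    · intro _
      simp only [Nat.testBit_zero]
      rcases Nat.mod_two_eq_zero_or_one c with h | h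
      · rw [h, show (c + 1) % 2 = 1 by omega]; simp
      · rw [h, show (c + 1) % 2 = 0 by omega]; simp
    · rintro ⟨i, hi, _⟩; omega
  | succ j ih =>
    intro c
    simp only [Nat.testBit_succ]
    rcases Nat.mod_two_eq_zero_or_one c with h | h
    · rw [show (c + 1) / 2 = c / 2 by omega]
      refine ⟨fun H => ?_, fun _ => rfl⟩
      have := H 0 (by omega)
      simp [Nat.testBit_zero, h] at this
    · rw [show (c + 1) / 2 = c / 2 + 1 by omega]
      refine ⟨fun H => (ih _).1 fun i hi => ?_, ?_⟩
      · have := H (i + 1) (by omega)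
        rwa [Nat.testBit_succ] at this
      · rintro ⟨i, hi, hb⟩
        refine (ih _).2 ?_
        rcases i with _ | i
        · simp [Nat.testBit_zero, h] at hb
        · exact ⟨i, by omega, by rwa [Nat.testBit_succ] at hb⟩

/-- The flag. -/
def fl (m k t j : ℕ) : Prop :=
  if j = 0 then 0 < t ∧ c k t = k
  else ∀ i, i < m → i < j → (c k (t + 1)).testBit i = k.testBit i

/-- The set of states reached at position `j` of block `t`. -/
def T (m k t j : ℕ) : St m → Prop
  | .ctl e i => i.val = j ∧ (e = true ↔ fl m k t j)
  | .qu i x y =>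
      if min j m + i.val < m then
        0 < t ∧ x = k.testBit (min j m + i.val) ∧ y = (c k t).testBit (min j m + i.val)
      else x = k.testBit (min j m + i.val - m) ∧ y = (c k (t + 1)).testBit (min j m + i.val - m)
  | .mR => j ≤ m ∧ c k t = k
  | .mA => j ≤ m ∧ c k t ≠ k ∧ ∀ i < j, (c k t).testBit i = true
  | .mC => j ≤ m ∧ c k t ≠ k ∧ ∃ i < j, (c k t).testBit i = false
  | .sink => False
  | .pad _ => False

/-- One step on sets of states. -/
def nxt (m : ℕ) (S : St m → Prop) (l : Letter) (q : St m) : Prop := ∃ s, S s ∧ δ m s l q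

lemma ex_St {m : ℕ} (P : St m → Prop) : (∃ s, P s) ↔
    (∃ e j, P (.ctl e j)) ∨ (∃ i x y, P (.qu i x y)) ∨ P .mR ∨ P .mA ∨ P .mC ∨ P .sink
      ∨ ∃ i, P (.pad i) := by
  constructor
  · rintro ⟨s, hs⟩
    cases s with
    | ctl e j => exact Or.inl ⟨e, j, hs⟩
    | qu i x y => exact Or.inr (Or.inl ⟨i, x, y, hs⟩)
    | mR => tauto
    | mA => tauto
    | mC => tauto
    | sink => tauto
    | pad i => exact Or.inr (Or.inr (Or.inr (Or.inr (Or.inr (Or.inr ⟨i, hs⟩)))))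
  · rintro (⟨_, _, h⟩ | ⟨_, _, _, h⟩ | h | h | h | h | ⟨_, h⟩) <;> exact ⟨_, h⟩

lemma ctl_mem {m k t j : ℕ} (hj : j < 2 * m + 3) :
    ∃ e, (e = true ↔ fl m k t j) ∧ T m k t j (.ctl e ⟨j, hj⟩) := by
  classical
  exact ⟨decide (fl m k t j), by simp, by simp [T]⟩

/-- The working letter. -/
def wl (k t j : ℕ) : Letter := some (k.testBit j, (c k t).testBit j, (c k (t + 1)).testBit j)

lemma step_wait {m k t j : ℕ} (hm : 1 ≤ m) (h1 : m ≤ j) (h2 : j + 1 < 2 * m + 3) :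
    nxt m (T m k t j) none = T m k t (j + 1) := by
  have hfl : fl m k t (j + 1) ↔ fl m k t j := by
    unfold fl
    rw [if_neg (by omega), if_neg (by omega)]
    refine forall_congr' fun i => forall_congr' fun hi => ?_
    rw [forall_prop_of_true (by omega), forall_prop_of_true (by omega)]
  have hmin : min (j + 1) m = min j m := by omega
  funext q
  apply propext
  unfold nxt
  rw [ex_St]
  cases q with
  | ctl e i =>
    simp only [T, δ, hfl, and_false, or_false, exists_false]
    constructor
    · rintro ⟨e', j', ⟨h3, h4⟩, h5, rfl, h6⟩
      exact ⟨by omega, h4⟩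
    · rintro ⟨h3, h4⟩
      exact ⟨e, ⟨j, by omega⟩, ⟨rfl, h4⟩, h1, rfl, Or.inl h3⟩
  | qu i x y =>
    simp only [T, δ, hmin, and_false, or_false, exists_false, false_or]
    constructor
    · rintro ⟨i', x', y', h, rfl, rfl, rfl⟩
      exact h
    · intro h
      exact ⟨i, x, y, h, rfl, rfl, rfl⟩
  | mR =>
    simp only [T, δ, and_false, or_false, exists_false]
    constructor
    · rintro ⟨e', j', ⟨h3, h4⟩, h5, rfl⟩
      omega
    · rintro ⟨h3, h4⟩
      omega
  | mA =>
    simp only [T, δ, and_false, or_false, exists_false]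
    constructor
    · rintro ⟨e', j', ⟨h3, h4⟩, h5, rfl⟩
      omega
    · rintro ⟨h3, h4⟩
      omega
  | mC =>
    simp only [T, δ, and_false, or_false, exists_false]
    constructor
    · rintro ⟨⟩
    · rintro ⟨h3, h4⟩
      omega
  | sink =>
    simp only [T, δ, and_false, false_and, or_false, exists_false, iff_false]
    rintro ⟨e', j', ⟨h3, h4⟩, h5⟩
    omega
  | pad i =>
    simp [T, δ]

lemma c_eq_iff_bits {m k t : ℕ} (hk : k < 2 ^ m) :
    c k t = k ↔ ∀ i < m, (c k t).testBit i = k.testBit i := by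
  constructor
  · intro h i _
    rw [h]
  · intro h
    refine Nat.eq_of_testBit_eq fun i => ?_
    by_cases hi : i < m
    · exact h i hi
    · have h3 : 2 ^ m ≤ 2 ^ i := Nat.pow_le_pow_right (by omega) (by omega)
      have h4 := c_le k t
      rw [Nat.testBit_lt_two_pow (by omega), Nat.testBit_lt_two_pow (by omega)]

lemma step_wrap {m k t : ℕ} (hm : 1 ≤ m) (hk : k < 2 ^ m) :
    nxt m (T m k t (2 * m + 2)) none = T m k (t + 1) 0 := by
  have hfl : fl m k t (2 * m + 2) ↔ c k (t + 1) = k := by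
    unfold fl
    rw [if_neg (by omega), c_eq_iff_bits hk]
    refine forall_congr' fun i => forall_congr' fun hi => ?_
    rw [forall_prop_of_true (by omega)]
  have hfl' : fl m k (t + 1) 0 ↔ c k (t + 1) = k := by
    unfold fl
    simp
  have hmin : min (2 * m + 2) m = m := by omega
  funext q
  apply propext
  unfold nxt
  rw [ex_St]
  cases q with
  | ctl e i =>
    simp only [T, δ, hfl, hfl', and_false, or_false, exists_false]
    constructor
    · rintro ⟨e', j', ⟨h3, h4⟩, h5, rfl, h6⟩
      exact ⟨by omega, h4⟩
    · rintro ⟨h3, h4⟩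
      exact ⟨e, ⟨2 * m + 2, by omega⟩, ⟨rfl, h4⟩, by simp; omega, rfl, Or.inr ⟨rfl, h3⟩⟩
  | qu i x y =>
    simp only [T, δ, hmin, and_false, or_false, exists_false, false_or]
    have hi := i.2
    rw [if_pos (by omega)]
    simp only [Nat.zero_le, inf_of_le_left, zero_add, Nat.succ_pos, true_and]
    constructor
    · rintro ⟨i', x', y', h, rfl, rfl, rfl⟩
      rw [if_neg (by omega), Nat.add_sub_cancel_left] at h
      exact h
    · intro h
      refine ⟨i, x, y, ?_, rfl, rfl, rfl⟩
      rw [if_neg (by omega), Nat.add_sub_cancel_left]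
      exact h
  | mR =>
    simp only [T, δ, hfl, and_false, or_false, exists_false]
    constructor
    · rintro ⟨e', j', ⟨h3, h4⟩, h5, rfl⟩
      exact ⟨by omega, h4.1 rfl⟩
    · rintro ⟨h3, h4⟩
      exact ⟨true, ⟨2 * m + 2, by omega⟩, ⟨rfl, by simpa using h4⟩, rfl, rfl⟩
  | mA =>
    simp only [T, δ, hfl, and_false, or_false, exists_false]
    constructor
    · rintro ⟨e', j', ⟨h3, h4⟩, h5, rfl⟩
      exact ⟨by omega, by simpa using h4, by omega⟩
    · rintro ⟨h3, h4, -⟩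
      exact ⟨false, ⟨2 * m + 2, by omega⟩, ⟨rfl, by simpa using h4⟩, rfl, rfl⟩
  | mC =>
    simp [T, δ]
  | sink =>
    simp only [T, δ, and_false, false_and, or_false, exists_false, iff_false]
    rintro ⟨e', j', ⟨h3, h4⟩, h5⟩
    omega
  | pad i =>
    simp [T, δ]

lemma step_work {m k t j : ℕ} (hj : j < m) :
    nxt m (T m k t j) (wl k t j) = T m k t (j + 1) := by
  have hfl : fl m k t (j + 1) ↔ ((c k (t + 1)).testBit j = k.testBit j ∧
      (fl m k t j ∨ j = 0)) := by
    unfold fl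
    rw [if_neg (by omega)]
    constructor
    · intro h
      refine ⟨h j hj (by omega), ?_⟩
      by_cases h0 : j = 0
      · exact Or.inr h0
      · rw [if_neg h0]
        exact Or.inl fun i hi hi' => h i hi (by omega)
    · rintro ⟨h3, h4⟩ i hi hi'
      by_cases hij : i = j
      · rw [hij]; exact h3
      · rcases h4 with h4 | h4
        · rw [if_neg (by omega)] at h4
          exact h4 i hi (by omega)
        · omega
  have hmin : min (j + 1) m = j + 1 := by omega
  have hmin' : min j m = j := by omega
  have hz0 : c k t = k → (c k (t + 1)).testBit j = false := by
    intro h; rw [c_reset h, Nat.zero_testBit]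
  have hzA : c k t ≠ k → (∀ i < j, (c k t).testBit i = true) →
      (c k (t + 1)).testBit j = !(c k t).testBit j := by
    intro h; rw [c_inc h]; exact (testBit_inc j _).1
  have hzC : c k t ≠ k → (∃ i < j, (c k t).testBit i = false) →
      (c k (t + 1)).testBit j = (c k t).testBit j := by
    intro h; rw [c_inc h]; exact (testBit_inc j _).2
  funext q
  apply propext
  unfold nxt wl
  rw [ex_St]
  cases q with
  | ctl e i =>
    simp only [T, δ, hfl, and_false, or_false, exists_false]
    constructor
    · rintro ⟨e', j', ⟨h3, h4⟩, h5, h6, h7⟩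
      rw [h7, h4, h3]
      exact ⟨by omega, Iff.rfl⟩
    · rintro ⟨h3, h4⟩
      obtain ⟨e', he', -⟩ := ctl_mem (m := m) (k := k) (t := t) (j := j) (by omega)
      refine ⟨e', ⟨j, by omega⟩, ⟨rfl, he'⟩, hj, h3, ?_⟩
      rw [h4, he']
  | qu i x y =>
    simp only [T, δ, hmin, hmin', and_false, or_false, exists_false]
    have hi := i.2
    constructor
    · rintro (⟨e', j', ⟨h3, h4⟩, h5, h6, rfl, rfl⟩ | ⟨i', x', y', h, h6, rfl, rfl⟩)
      · rw [if_neg (by omega), show j + 1 + i.val - m = j by omega]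
        exact ⟨rfl, rfl⟩
      · rw [show j + 1 + i.val = j + i'.val by omega]
        exact h
    · intro h
      by_cases h6 : i.val + 1 = m
      · rw [if_neg (by omega), show j + 1 + i.val - m = j by omega] at h
        obtain ⟨e', he', -⟩ := ctl_mem (m := m) (k := k) (t := t) (j := j) (by omega)
        exact Or.inl ⟨e', ⟨j, by omega⟩, ⟨rfl, he'⟩, hj, h6, h.1, h.2⟩
      · refine Or.inr ⟨⟨i.val + 1, by omega⟩, x, y, ?_, rfl, rfl, rfl⟩
        rw [show j + 1 + i.val = j + (i.val + 1) by omega] at h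
        exact h
  | mR =>
    simp only [T, δ, and_false, or_false, exists_false, false_or]
    constructor
    · rintro ⟨⟨h3, h4⟩, -⟩
      exact ⟨by omega, h4⟩
    · rintro ⟨h3, h4⟩
      exact ⟨⟨by omega, h4⟩, by rw [h4], hz0 h4⟩
  | mA =>
    simp only [T, δ, and_false, or_false, exists_false, false_or]
    constructor
    · rintro ⟨⟨h3, h4, h5⟩, h6, h7⟩
      refine ⟨by omega, h4, fun i hi => ?_⟩
      by_cases hij : i = j
      · rw [hij]; exact h7
      · exact h5 i (by omega)
    · rintro ⟨h3, h4, h5⟩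
      have h6 : ∀ i < j, (c k t).testBit i = true := fun i hi => h5 i (by omega)
      exact ⟨⟨by omega, h4, h6⟩, hzA h4 h6, h5 j (by omega)⟩
  | mC =>
    simp only [T, δ, and_false, or_false, exists_false, false_or]
    constructor
    · rintro (⟨⟨h3, h4, h5⟩, h6, h7⟩ | ⟨⟨h3, h4, i, h5, h6⟩, h7⟩)
      · exact ⟨by omega, h4, j, by omega, h7⟩
      · exact ⟨by omega, h4, i, by omega, h6⟩
    · rintro ⟨h3, h4, h5⟩
      by_cases h6 : ∃ i < j, (c k t).testBit i = false
      · exact Or.inr ⟨⟨by omega, h4, h6⟩, hzC h4 h6⟩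
      · have h7 : ∀ i < j, (c k t).testBit i = true := by
          intro i hi
          by_contra h
          exact h6 ⟨i, hi, by simpa using h⟩
        refine Or.inl ⟨⟨by omega, h4, h7⟩, hzA h4 h7, ?_⟩
        obtain ⟨i, hi, hb⟩ := h5
        by_cases hij : i = j
        · rw [← hij]; exact hb
        · exact absurd ⟨i, by omega, hb⟩ h6
  | sink =>
    simp only [T, δ, hmin', false_and, or_false, iff_false]
    rintro (⟨e', j', ⟨h3, h4⟩, h5⟩ | ⟨i, x, y, h, h3, h4⟩ | ⟨⟨h3, h4⟩, h5⟩ |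
      ⟨⟨h3, h4, h5⟩, h6⟩ | ⟨⟨h3, h4, h5⟩, h6⟩ | h)
    · omega
    · rw [h3, add_zero, if_pos hj] at h
      exact h4 ⟨h.2.1.symm, h.2.2.symm⟩
    · exact h5 ⟨by rw [h4], hz0 h4⟩
    · exact h6 (hzA h4 h5)
    · exact h6 (hzC h4 h5)
    · simp at h
  | pad i =>
    simp [T, δ]

/-- In a waiting position every working letter leads to the sink. -/
lemma bad_wait {m k t j : ℕ} (h1 : m ≤ j) (h2 : j < 2 * m + 3) (p : Bool × Bool × Bool) :
    nxt m (T m k t j) (some p) .sink := by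
  obtain ⟨e, -, he⟩ := ctl_mem (m := m) (k := k) (t := t) h2
  exact ⟨_, he, h1⟩

lemma bad_work_none {m k t j : ℕ} (h1 : j < m) : nxt m (T m k t j) none .sink := by
  obtain ⟨e, -, he⟩ := ctl_mem (m := m) (k := k) (t := t) (show j < 2 * m + 3 by omega)
  exact ⟨_, he, h1⟩

lemma bad_work {m k t j : ℕ} (ht : 0 < t) (hj : j < m) (l : Letter) (hl : l ≠ wl k t j) :
    nxt m (T m k t j) l .sink := by
  rcases l with _ | ⟨x, y, z⟩
  · exact bad_work_none hj
  have hmin' : min j m = j := by omega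
  by_cases hxy : x = k.testBit j ∧ y = (c k t).testBit j
  · obtain ⟨rfl, rfl⟩ := hxy
    have hz : z ≠ (c k (t + 1)).testBit j := by
      rintro rfl
      exact hl rfl
    by_cases h : c k t = k
    · refine ⟨.mR, ⟨by omega, h⟩, ?_⟩
      rw [c_reset h, Nat.zero_testBit] at hz
      exact fun H => hz H.2
    · by_cases h6 : ∃ i < j, (c k t).testBit i = false
      · refine ⟨.mC, ⟨by omega, h, h6⟩, ?_⟩
        rw [c_inc h, (testBit_inc j _).2 h6] at hz
        exact hz
      · have h7 : ∀ i < j, (c k t).testBit i = true := by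
          intro i hi
          by_contra h
          exact h6 ⟨i, hi, by simpa using h⟩
        refine ⟨.mA, ⟨by omega, h, h7⟩, ?_⟩
        rw [c_inc h, (testBit_inc j _).1 h7] at hz
        exact hz
  · refine ⟨.qu ⟨0, by omega⟩ (k.testBit j) ((c k t).testBit j), ?_, rfl, hxy⟩
    simp [T, hmin', hj, ht]

lemma exists_bit {m : ℕ} (k n : ℕ) (x : Bool) (hn : n < m) :
    ∃ k' < 2 ^ m, k'.testBit n = x ∧ ∀ i < n, k'.testBit i = k.testBit i := by
  have h1 : k % 2 ^ n < 2 ^ n := Nat.mod_lt _ (by positivity)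
  have h2 : 2 ^ (n + 1) ≤ 2 ^ m := Nat.pow_le_pow_right (by omega) hn
  rw [pow_succ] at h2
  cases x with
  | false =>
    refine ⟨k % 2 ^ n, by omega, Nat.testBit_lt_two_pow h1, fun i hi => ?_⟩
    simp [Nat.testBit_mod_two_pow, hi]
  | true =>
    refine ⟨2 ^ n + k % 2 ^ n, by omega, ?_, fun i hi => ?_⟩
    · rw [Nat.testBit_two_pow_add_eq, Nat.testBit_lt_two_pow h1]; rfl
    · rw [Nat.testBit_two_pow_add_gt hi]
      simp [Nat.testBit_mod_two_pow, hi]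

lemma T_congr {m k k' j : ℕ} (hj : j < m) (h : ∀ i < j, k'.testBit i = k.testBit i) :
    T m k' 0 j = T m k 0 j := by
  have hc : ∀ k, c k (0 + 1) = 0 := fun k => c_reset (c_zero k)
  have hmin' : min j m = j := by omega
  funext q
  apply propext
  cases q with
  | ctl e i =>
    have : fl m k' 0 j ↔ fl m k 0 j := by
      unfold fl
      by_cases h0 : j = 0
      · simp [h0]
      · rw [if_neg h0, if_neg h0, hc, hc]
        refine forall_congr' fun i => forall_congr' fun hi => forall_congr' fun hi' => ?_
        rw [h i hi']
    simp only [T, this]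
  | qu i x y =>
    have hi := i.2
    simp only [T, hmin', hc]
    by_cases h0 : j + i.val < m
    · simp [h0]
    · rw [if_neg h0, if_neg h0, h _ (by omega)]
  | mR => simp [T, c_zero]
  | mA => simp [T, c_zero]
  | mC => simp [T, c_zero]
  | sink => rfl
  | pad i => rfl

lemma first_work {m k j : ℕ} (hj : j < m) (l : Letter) :
    nxt m (T m k 0 j) l .sink ∨ ∃ k' < 2 ^ m, nxt m (T m k 0 j) l = T m k' 0 (j + 1) := by
  rcases l with _ | ⟨x, y, z⟩
  · exact Or.inl (bad_work_none hj)
  by_cases h : x = y ∧ z = false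
  · obtain ⟨rfl, rfl⟩ := h
    obtain ⟨k', hk', hb, hlow⟩ := exists_bit k j x hj
    refine Or.inr ⟨k', hk', ?_⟩
    rw [← T_congr hj hlow, ← step_work hj]
    unfold wl
    rw [c_reset (c_zero k'), c_zero, hb, Nat.zero_testBit]
  · exact Or.inl ⟨.mR, ⟨by omega, c_zero k⟩, h⟩

/-- The set of states reached at time `n`. -/
def S (m k n : ℕ) : St m → Prop := T m k (n / (2 * m + 3)) (n % (2 * m + 3))

lemma split_succ (m n : ℕ) :
    (n % (2 * m + 3) + 1 < 2 * m + 3 ∧ (n + 1) / (2 * m + 3) = n / (2 * m + 3) ∧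
      (n + 1) % (2 * m + 3) = n % (2 * m + 3) + 1) ∨
    (n % (2 * m + 3) = 2 * m + 2 ∧ (n + 1) / (2 * m + 3) = n / (2 * m + 3) + 1 ∧
      (n + 1) % (2 * m + 3) = 0) := by
  have h1 := Nat.mod_lt n (show 0 < 2 * m + 3 by omega)
  have h2 := Nat.div_add_mod n (2 * m + 3)
  generalize hB : 2 * m + 3 = B at *
  generalize n / B = t at *
  generalize n % B = j at *
  have hB0 : 0 < B := by omega
  subst h2
  by_cases h : j + 1 < B
  · refine Or.inl ⟨h, ?_, ?_⟩
    · rw [add_assoc, Nat.mul_add_div hB0, Nat.div_eq_of_lt h, add_zero]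
    · rw [add_assoc, Nat.mul_add_mod, Nat.mod_eq_of_lt h]
  · have h3 : j + 1 = B := by omega
    refine Or.inr ⟨by omega, ?_, ?_⟩
    · rw [add_assoc, Nat.mul_add_div hB0, h3, Nat.div_self hB0]
    · rw [add_assoc, Nat.mul_add_mod, h3, Nat.mod_self]

lemma S_next {m k : ℕ} (hm : 1 ≤ m) (hk : k < 2 ^ m) (n : ℕ) :
    ∃ l, nxt m (S m k n) l = S m k (n + 1) := by
  unfold S
  rcases split_succ m n with ⟨h1, h2, h3⟩ | ⟨h1, h2, h3⟩
  · rw [h2, h3]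
    by_cases hj : n % (2 * m + 3) < m
    · exact ⟨_, step_work hj⟩
    · exact ⟨_, step_wait hm (by omega) h1⟩
  · rw [h1, h2, h3]
    exact ⟨_, step_wrap hm hk⟩

lemma S_any {m k : ℕ} (hm : 1 ≤ m) (hk : k < 2 ^ m) (n : ℕ) (l : Letter) :
    nxt m (S m k n) l .sink ∨ ∃ k' < 2 ^ m, nxt m (S m k n) l = S m k' (n + 1) := by
  unfold S
  rcases split_succ m n with ⟨h1, h2, h3⟩ | ⟨h1, h2, h3⟩
  · rw [h2, h3]
    by_cases hj : n % (2 * m + 3) < m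
    · rcases Nat.eq_zero_or_pos (n / (2 * m + 3)) with ht | ht
      · rw [ht]
        exact first_work hj l
      · by_cases hl : l = wl k (n / (2 * m + 3)) (n % (2 * m + 3))
        · rw [hl]
          exact Or.inr ⟨k, hk, step_work hj⟩
        · exact Or.inl (bad_work ht hj l hl)
    · rcases l with _ | p
      · exact Or.inr ⟨k, hk, step_wait hm (by omega) h1⟩
      · exact Or.inl (bad_wait (by omega) (by omega) p)
  · rw [h1, h2, h3]
    rcases l with _ | p
    · exact Or.inr ⟨k, hk, step_wrap hm hk⟩
    · exact Or.inl (bad_wait (by omega) (by omega) p)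

/-- The automaton. -/
def aut (m : ℕ) : NFA (Fin 15) (St m) where
  step s a := {q | δ m s (dec a) q}
  start := {q | T m 0 0 0 q}
  accept := {q | q = .sink ∨ q = .ctl true ⟨0, by omega⟩}

lemma stepSet_aut (m : ℕ) (P : St m → Prop) (a : Fin 15) :
    (aut m).stepSet {q | P q} a = {q | nxt m P (dec a) q} := by
  ext q
  rw [NFA.mem_stepSet]
  rfl

lemma start_eq {m : ℕ} (hm : 1 ≤ m) (k : ℕ) : (aut m).start = {q | S m k 0 q} := by
  unfold S aut
  simp only [Nat.zero_div, Nat.zero_mod]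
  rw [T_congr (k' := k) (k := 0) (by omega) (by omega)]

lemma run_any {m : ℕ} (hm : 1 ≤ m) (w : List (Fin 15)) :
    St.sink ∈ (aut m).eval w ∨ ∃ k < 2 ^ m, (aut m).eval w = {q | S m k w.length q} := by
  induction w using List.reverseRecOn with
  | nil =>
    refine Or.inr ⟨0, by positivity, ?_⟩
    rw [NFA.eval_nil]
    exact start_eq hm 0
  | append_singleton w a ih =>
    rw [NFA.eval_append_singleton, List.length_append, List.length_singleton]
    rcases ih with h | ⟨k, hk, h⟩
    · refine Or.inl ?_
      rw [NFA.mem_stepSet]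
      exact ⟨_, h, trivial⟩
    · rw [h, stepSet_aut]
      rcases S_any hm hk w.length (dec a) with h | ⟨k', hk', h⟩
      · exact Or.inl h
      · exact Or.inr ⟨k', hk', by rw [h]⟩

lemma run_good {m k : ℕ} (hm : 1 ≤ m) (hk : k < 2 ^ m) (n : ℕ) :
    ∃ w : List (Fin 15), w.length = n ∧ (aut m).eval w = {q | S m k n q} := by
  induction n with
  | zero => exact ⟨[], rfl, start_eq hm k⟩
  | succ n ih =>
    obtain ⟨w, hw, he⟩ := ih
    obtain ⟨l, hl⟩ := S_next hm hk n
    obtain ⟨a, ha⟩ := dec_surj l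
    refine ⟨w ++ [a], by simp [hw], ?_⟩
    rw [NFA.eval_append_singleton, he, stepSet_aut, ha, hl]

lemma mem_acc {m : ℕ} (w : List (Fin 15)) : w ∈ (aut m).accepts ↔
    St.sink ∈ (aut m).eval w ∨ St.ctl true ⟨0, by omega⟩ ∈ (aut m).eval w := by
  rw [NFA.mem_accepts]
  constructor
  · rintro ⟨q, rfl | rfl, h⟩
    · exact Or.inl h
    · exact Or.inr h
  · rintro (h | h)
    · exact ⟨_, Or.inl rfl, h⟩
    · exact ⟨_, Or.inr rfl, h⟩

lemma S_acc {m k n : ℕ} : S m k n (.ctl true ⟨0, by omega⟩) ↔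
    n % (2 * m + 3) = 0 ∧ 0 < n / (2 * m + 3) ∧ (k + 1) ∣ n / (2 * m + 3) := by
  unfold S
  simp only [T, true_iff]
  constructor
  · rintro ⟨h1, h2⟩
    rw [← h1] at h2
    simp only [fl, if_true, c_eq_iff] at h2
    exact ⟨h1.symm, h2⟩
  · rintro ⟨h1, h2⟩
    rw [h1]
    simp only [fl, if_true, c_eq_iff]
    exact ⟨trivial, h2⟩

lemma main {m : ℕ} (hm : 1 ≤ m) : IsLeast {ℓ : ℕ | IsUnivLength (aut m).accepts ℓ}
    ((Finset.Icc 1 (2 ^ m)).lcm id * (2 * m + 3)) := by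
  have hL : 0 < (Finset.Icc 1 (2 ^ m)).lcm id := by
    rw [Nat.pos_iff_ne_zero, Ne, Finset.lcm_eq_zero_iff]
    simp
  constructor
  · intro w hw
    rw [mem_acc]
    rcases run_any hm w with h | ⟨k, hk, h⟩
    · exact Or.inl h
    · refine Or.inr ?_
      rw [h]
      refine S_acc.2 ?_
      rw [hw, Nat.mul_mod_left, Nat.mul_div_cancel _ (by omega)]
      refine ⟨rfl, hL, ?_⟩
      exact Finset.dvd_lcm (f := id) (by simp; omega)
  · intro l hl
    by_contra hlt
    rw [not_le] at hlt
    have key : ∀ k < 2 ^ m, l % (2 * m + 3) = 0 ∧ 0 < l / (2 * m + 3) ∧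
        (k + 1) ∣ l / (2 * m + 3) := by
      intro k hk
      obtain ⟨w, hw, he⟩ := run_good hm hk l
      have := hl w hw
      rw [mem_acc, he] at this
      rcases this with h | h
      · exact absurd h id
      · exact S_acc.1 h
    have h0 := key 0 (by positivity)
    have hd : (Finset.Icc 1 (2 ^ m)).lcm id ∣ l / (2 * m + 3) := by
      refine Finset.lcm_dvd fun b hb => ?_
      rw [Finset.mem_Icc] at hb
      have := (key (b - 1) (by omega)).2.2
      rwa [Nat.sub_add_cancel hb.1] at this
    have := Nat.le_of_dvd h0.2.1 hd
    rw [← Nat.div_lt_iff_lt_mul (by omega)] at hlt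
    omega

/-- The automaton for `m = 1`: a path. -/
def path : NFA (Fin 15) (Fin 16) where
  step i _ := {j | j.val = i.val + 1}
  start := {0}
  accept := {10}

lemma path_eval (w : List (Fin 15)) (x : Fin 16) : x ∈ path.eval w ↔ x.val = w.length := by
  induction w using List.reverseRecOn generalizing x with
  | nil =>
    rw [NFA.eval_nil]
    exact Fin.ext_iff
  | append_singleton w a ih =>
    rw [NFA.eval_append_singleton, List.length_append, List.length_singleton, NFA.mem_stepSet]
    constructor
    · rintro ⟨y, hy, h⟩
      rw [ih] at hy
      rw [← hy]
      exact h
    · intro h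
      have := x.2
      exact ⟨⟨w.length, by omega⟩, (ih _).2 rfl, h⟩

lemma path_main : IsLeast {ℓ : ℕ | IsUnivLength path.accepts ℓ} 10 := by
  constructor
  · intro w hw
    rw [NFA.mem_accepts]
    exact ⟨10, rfl, (path_eval w 10).2 hw.symm⟩
  · intro l hl
    have := hl (List.replicate l 0) (by simp)
    rw [NFA.mem_accepts] at this
    obtain ⟨q, hq, h⟩ := this
    have h2 := (path_eval _ _).1 h
    rw [show q = 10 from hq, List.length_replicate] at h2
    exact le_of_eq h2

end UnivLen

theorem nfa_large_min_univ_length (m : ℕ) (hm : 1 ≤ m) :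
    ∃ (Q : Type) (inst : Fintype Q), @Fintype.card Q inst = 11 * m + 5 ∧
      ∃ M : NFA (Fin 15) Q,
        IsLeast {ℓ : ℕ | IsUnivLength M.accepts ℓ}
          ((Finset.Icc 1 (2 ^ m)).lcm id * (2 * m + 3)) := by
  rcases Nat.lt_or_ge m 2 with h | h
  · obtain rfl : m = 1 := by omega
    refine ⟨Fin 16, inferInstance, by simp, UnivLen.path, ?_⟩
    have : (Finset.Icc 1 (2 ^ 1)).lcm id * (2 * 1 + 3) = 10 := by decide
    rw [this]
    exact UnivLen.path_main
  · exact ⟨UnivLen.St m, inferInstance, UnivLen.card_St m h, UnivLen.aut m, UnivLen.main hm⟩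
end

section
/- There exists a constant c > 0 and an N such that for every n ≥ N there exists a regular expression r over a two-letter alphabet with at most n input symbols (occurrences of single-letter atoms) such that the language of r has a universal length and its minimal universality length is at least 2^(c·n). -/
/-- The number of input symbols (occurrences of single-letter atoms) of a regular expression. -/
def symCount {α : Type*} : RegularExpression α → ℕ
  | RegularExpression.zero => 0
  | RegularExpression.epsilon => 0
  | RegularExpression.char _ => 1
  | RegularExpression.plus r s => symCount r + symCount s
  | RegularExpression.comp r s => symCount r + symCount s
  | RegularExpression.star r => symCount r

namespace RegexUniv

open RegularExpression

abbrev RE := RegularExpression Bool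

/-- The language of `R` is determined by a predicate on lengths. -/
def IsLen (R : RE) (P : ℕ → Prop) : Prop := ∀ w : List Bool, w ∈ R.matches' ↔ P w.length

theorem mem_comp (R S : RE) (w : List Bool) :
    w ∈ (comp R S).matches' ↔ ∃ x ∈ R.matches', ∃ y ∈ S.matches', x ++ y = w := by
  change w ∈ R.matches' * S.matches' ↔ _
  rw [Language.mem_mul]

theorem mem_plus (R S : RE) (w : List Bool) :
    w ∈ (plus R S).matches' ↔ w ∈ R.matches' ∨ w ∈ S.matches' := by
  change w ∈ R.matches' + S.matches' ↔ _
  rw [Language.mem_add]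

theorem mem_char (a : Bool) (w : List Bool) :
    w ∈ (char a : RE).matches' ↔ w = [a] := by
  change w ∈ ({[a]} : Set (List Bool)) ↔ _
  exact Set.mem_singleton_iff

theorem mem_eps (w : List Bool) : w ∈ (epsilon : RE).matches' ↔ w = [] := by
  change w ∈ (1 : Language Bool) ↔ _
  exact Language.mem_one _

theorem mem_len_comp {R : RE} {P : ℕ → Prop} (hR : IsLen R P) (S : RE) (w : List Bool) :
    w ∈ (comp R S).matches' ↔ ∃ p, P p ∧ p ≤ w.length ∧ w.drop p ∈ S.matches' := by
  rw [mem_comp]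
  constructor
  · rintro ⟨x, hx, y, hy, rfl⟩
    exact ⟨x.length, (hR x).1 hx, by simp, by simpa using hy⟩
  · rintro ⟨p, hp, hl, h⟩
    refine ⟨w.take p, (hR _).2 ?_, _, h, List.take_append_drop p w⟩
    simpa [hl] using hp

theorem mem_char_comp (a : Bool) (S : RE) (w : List Bool) :
    w ∈ (comp (char a) S).matches' ↔ w[0]? = some a ∧ w.drop 1 ∈ S.matches' := by
  rw [mem_comp]
  constructor
  · rintro ⟨x, hx, y, hy, rfl⟩
    rw [mem_char] at hx
    subst hx
    simpa using hy
  · rintro ⟨h, h'⟩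
    cases w with
    | nil => simp at h
    | cons b t =>
      refine ⟨[a], (mem_char _ _).2 rfl, t, by simpa using h', ?_⟩
      simp at h
      simp [h]

def sumB (f : Bool → RE) : RE := plus (f true) (f false)

theorem mem_sumB (f : Bool → RE) (w : List Bool) :
    w ∈ (sumB f).matches' ↔ ∃ a, w ∈ (f a).matches' := by
  rw [sumB, mem_plus]
  simp [or_comm]

def anyC : RE := sumB char

theorem isLen_anyC : IsLen anyC (fun p => p = 1) := by
  intro w
  rw [anyC, mem_sumB]
  simp only [mem_char, List.length_eq_one_iff]

def anyN : ℕ → RE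
  | 0 => epsilon
  | k + 1 => comp anyC (anyN k)

theorem isLen_anyN (k : ℕ) : IsLen (anyN k) (fun p => p = k) := by
  induction k with
  | zero => intro w; rw [anyN, mem_eps]; simp
  | succ k ih =>
    intro w
    rw [anyN, mem_len_comp isLen_anyC]
    simp only [ih _, exists_eq_left, List.length_drop]
    omega

def upto : ℕ → RE
  | 0 => epsilon
  | k + 1 => plus epsilon (comp anyC (upto k))

theorem isLen_upto (k : ℕ) : IsLen (upto k) (fun p => p ≤ k) := by
  induction k with
  | zero => intro w; rw [upto, mem_eps]; simp
  | succ k ih =>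
    intro w
    rw [upto, mem_plus, mem_eps, mem_len_comp isLen_anyC]
    simp only [ih _, exists_eq_left, List.length_drop, ← List.length_eq_zero_iff]
    omega

theorem isLen_star {R : RE} {m : ℕ} (hR : IsLen R (fun p => p = m)) :
    IsLen (star R) (fun p => ∃ q, p = q * m) := by
  intro w
  change w ∈ KStar.kstar R.matches' ↔ _
  rw [Language.mem_kstar]
  constructor
  · rintro ⟨L, rfl, hL⟩
    induction L with
    | nil => exact ⟨0, by simp⟩
    | cons x t ih =>
      obtain ⟨q, hq⟩ := ih (fun y hy => hL y (by simp [hy]))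
      have hx := (hR x).1 (hL x (by simp))
      refine ⟨q + 1, ?_⟩
      simp only [List.flatten_cons, List.length_append, hq, hx]
      ring
  · rintro ⟨q, hq⟩
    induction q generalizing w with
    | zero =>
      refine ⟨[], ?_, by simp⟩
      simpa using hq
    | succ q ih =>
      obtain ⟨L, h1, h2⟩ := ih (w.drop m) (by rw [List.length_drop, hq, Nat.succ_mul]; omega)
      refine ⟨w.take m :: L, ?_, ?_⟩
      · simp [← h1]
      · intro y hy
        rcases List.mem_cons.1 hy with rfl | hy
        · refine (hR _).2 ?_
          rw [List.length_take, hq, Nat.succ_mul]; omega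
        · exact h2 y hy

def allR : RE := star anyC

theorem mem_allR (w : List Bool) : w ∈ allR.matches' := by
  rw [allR, isLen_star isLen_anyC]
  exact ⟨w.length, by simp⟩

def blk (k : ℕ) : RE := star (anyN (k + 2))

theorem isLen_blk (k : ℕ) : IsLen (blk k) (fun p => ∃ q, p = q * (k + 2)) :=
  isLen_star (isLen_anyN _)

/-- wrong carry propagation -/
def errB (k : ℕ) (a b c : Bool) : RE :=
  comp (blk k) (comp (upto k) (comp (char a) (comp (char b) (comp (anyN k)
    (comp (char c) (comp (char (!(xor b (a && !c)))) allR))))))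

/-- lowest bit does not flip -/
def errA (k : ℕ) (a : Bool) : RE :=
  comp (blk k) (comp (char a) (comp (anyN (k + 1)) (comp (char a) allR)))

/-- highest bit is set -/
def errC (k : ℕ) : RE :=
  comp (blk k) (comp (anyN (k + 1)) (comp (char true) allR))

def reg (k : ℕ) : RE :=
  plus (sumB fun a => sumB fun b => sumB fun c => errB k a b c) (plus (sumB (errA k)) (errC k))

theorem lt_of_get {w : List Bool} {i : ℕ} {a : Bool} (h : w[i]? = some a) : i < w.length := by
  by_contra hc
  rw [List.getElem?_eq_none (by omega)] at h
  simp at h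

theorem mem_errB (k : ℕ) (a b c : Bool) (w : List Bool) :
    w ∈ (errB k a b c).matches' ↔ ∃ q i, i ≤ k ∧
      w[q * (k + 2) + i]? = some a ∧ w[q * (k + 2) + (i + 1)]? = some b ∧
      w[(q + 1) * (k + 2) + i]? = some c ∧
      w[(q + 1) * (k + 2) + (i + 1)]? = some (!(xor b (a && !c))) := by
  have e : ∀ q i, q * (k + 2) + (i + (1 + (1 + k))) = (q + 1) * (k + 2) + i := by
    intros; ring
  have e' : ∀ q i, q * (k + 2) + (i + (1 + (1 + (k + 1)))) = (q + 1) * (k + 2) + (i + 1) := by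
    intros; ring
  rw [errB]
  simp only [mem_len_comp (isLen_blk k), mem_len_comp (isLen_upto k),
    mem_len_comp (isLen_anyN k), mem_char_comp, mem_allR, and_true, List.drop_drop,
    List.getElem?_drop, List.length_drop, exists_eq_left, add_zero, add_assoc]
  constructor
  · rintro ⟨_, ⟨q, rfl⟩, _, i, hi, _, h1, h2, _, h3, h4⟩
    simp only [e, e'] at h3 h4
    exact ⟨q, i, hi, h1, h2, h3, h4⟩
  · rintro ⟨q, i, hi, h1, h2, h3, h4⟩
    have l1 := lt_of_get h1
    have l3 := lt_of_get h3
    have := e q i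
    refine ⟨_, ⟨q, rfl⟩, by omega, i, hi, by omega, h1, h2, by omega, ?_, ?_⟩
    · simpa only [e] using h3
    · simpa only [e'] using h4

theorem mem_errA (k : ℕ) (a : Bool) (w : List Bool) :
    w ∈ (errA k a).matches' ↔ ∃ q,
      w[q * (k + 2)]? = some a ∧ w[(q + 1) * (k + 2)]? = some a := by
  have e : ∀ q, q * (k + 2) + (1 + (k + 1)) = (q + 1) * (k + 2) := by
    intros; ring
  rw [errA]
  simp only [mem_len_comp (isLen_blk k), 
    mem_len_comp (isLen_anyN (k + 1)), mem_char_comp, mem_allR, and_true, List.drop_drop,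
    List.getElem?_drop, List.length_drop, exists_eq_left, add_zero, add_assoc]
  constructor
  · rintro ⟨_, ⟨q, rfl⟩, _, h1, _, h3⟩
    rw [e] at h3
    exact ⟨q, h1, h3⟩
  · rintro ⟨q, h1, h3⟩
    have l1 := lt_of_get h1
    have l3 := lt_of_get h3
    have := e q
    refine ⟨_, ⟨q, rfl⟩, by omega, h1, by omega, ?_⟩
    rw [e]; exact h3

theorem mem_errC (k : ℕ) (w : List Bool) :
    w ∈ (errC k).matches' ↔ ∃ q, w[q * (k + 2) + (k + 1)]? = some true := by
  rw [errC]
  simp only [mem_len_comp (isLen_blk k), 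
    mem_len_comp (isLen_anyN (k + 1)), mem_char_comp, mem_allR, and_true, List.drop_drop,
    List.getElem?_drop, List.length_drop, exists_eq_left, add_zero]
  constructor
  · rintro ⟨_, ⟨q, rfl⟩, _, _, h3⟩
    exact ⟨q, h3⟩
  · rintro ⟨q, h3⟩
    have l3 := lt_of_get h3
    exact ⟨_, ⟨q, rfl⟩, by omega, by omega, h3⟩

theorem mem_reg (k : ℕ) (w : List Bool) :
    w ∈ (reg k).matches' ↔ (∃ a b c, w ∈ (errB k a b c).matches') ∨
      (∃ a, w ∈ (errA k a).matches') ∨ w ∈ (errC k).matches' := by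
  simp only [reg, mem_plus, mem_sumB]

/-! ### Size -/

theorem symCount_anyC : symCount anyC = 2 := rfl

theorem symCount_anyN (k : ℕ) : symCount (anyN k) = 2 * k := by
  induction k with
  | zero => rfl
  | succ k ih => rw [anyN, symCount, ih, symCount_anyC]; ring

theorem symCount_upto (k : ℕ) : symCount (upto k) = 2 * k := by
  induction k with
  | zero => rfl
  | succ k ih => rw [upto, symCount, symCount, symCount, ih, symCount_anyC]; ring

theorem symCount_reg (k : ℕ) : symCount (reg k) ≤ 64 * (k + 2) := by
  simp only [reg, sumB, errA, errB, errC, blk, allR, symCount, symCount_anyN, symCount_upto,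
    symCount_anyC]
  omega

/-! ### Long word -/

theorem testBit_step (q j : ℕ) : (q + 1).testBit (j + 1) =
    xor (q.testBit (j + 1)) (q.testBit j && !(q + 1).testBit j) := by
  induction j generalizing q with
  | zero =>
    simp only [Nat.testBit_succ, Nat.testBit_zero]
    have h : q % 4 = 0 ∨ q % 4 = 1 ∨ q % 4 = 2 ∨ q % 4 = 3 := by omega
    rw [Bool.eq_iff_iff]
    simp
    grind
  | succ j ih =>
    rw [Nat.testBit_succ (q + 1), Nat.testBit_succ q, Nat.testBit_succ (q + 1) j,
      Nat.testBit_succ q j]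
    rcases Nat.even_or_odd' q with ⟨r, rfl | rfl⟩
    · have h1 : (2 * r + 1) / 2 = r := by omega
      have h2 : (2 * r) / 2 = r := by omega
      rw [h1, h2]; simp
    · have h1 : (2 * r + 1 + 1) / 2 = r + 1 := by omega
      have h2 : (2 * r + 1) / 2 = r := by omega
      rw [h1, h2]; exact ih r

def cnt (k p : ℕ) : Bool := (p / (k + 2)).testBit (p % (k + 2))

theorem cnt_eq (k q i : ℕ) (hi : i < k + 2) : cnt k (q * (k + 2) + i) = q.testBit i := by
  have h1 : (q * (k + 2) + i) / (k + 2) = q := by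
    rw [mul_comm, Nat.mul_add_div (by omega), Nat.div_eq_of_lt hi, add_zero]
  have h2 : (q * (k + 2) + i) % (k + 2) = i := by
    rw [mul_comm, Nat.mul_add_mod, Nat.mod_eq_of_lt hi]
  rw [cnt, h1, h2]

theorem not_univ (k l : ℕ) (hl : l ≤ 2 ^ (k + 1) * (k + 2)) :
    ¬ IsUnivLength (reg k).matches' l := by
  intro h
  have h := h ((List.range l).map (cnt k)) (by simp)
  have key : ∀ p a, ((List.range l).map (cnt k))[p]? = some a → p < l ∧ cnt k p = a := by
    intro p a hp
    have := lt_of_get hp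
    simp only [List.length_map, List.length_range] at this
    refine ⟨this, ?_⟩
    simpa [this] using hp
  rw [mem_reg] at h
  rcases h with ⟨a, b, c, h⟩ | ⟨a, h⟩ | h
  · obtain ⟨q, i, hi, h1, h2, h3, h4⟩ := (mem_errB ..).1 h
    have h1 := (key _ _ h1).2
    have h2 := (key _ _ h2).2
    have h3 := (key _ _ h3).2
    have h4 := (key _ _ h4).2
    rw [cnt_eq _ _ _ (by omega)] at h1 h2 h3 h4
    have := testBit_step q i
    rw [h1, h2, h3, h4] at this
    revert this
    cases a <;> cases b <;> cases c <;> decide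
  · obtain ⟨q, h1, h2⟩ := (mem_errA ..).1 h
    have h1 := (key _ _ h1).2
    have h2 := (key _ _ h2).2
    have e1 := cnt_eq k q 0 (by omega)
    have e2 := cnt_eq k (q + 1) 0 (by omega)
    rw [add_zero] at e1 e2
    rw [← h2, e1, e2] at h1
    simp only [Nat.testBit_zero, decide_eq_decide] at h1
    omega
  · obtain ⟨q, h1⟩ := (mem_errC ..).1 h
    obtain ⟨hlt, h1⟩ := key _ _ h1
    rw [cnt_eq _ _ _ (by omega)] at h1
    have hq : q < 2 ^ (k + 1) := by
      by_contra hc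
      have := Nat.mul_le_mul_right (k + 2) (not_lt.1 hc)
      omega
    rw [Nat.testBit_lt_two_pow hq] at h1
    simp at h1

/-! ### Universality -/

theorem univ (k : ℕ) : IsUnivLength (reg k).matches' ((2 ^ (k + 2) + 1) * (k + 2)) := by
  intro w hw
  by_contra hn
  rw [mem_reg] at hn
  push Not at hn
  obtain ⟨hB, hA, hC⟩ := hn
  set M := 2 ^ (k + 2) with hM
  let f : ℕ → ℕ → Bool := fun q i => w.getD (q * (k + 2) + i) false
  have hf : ∀ q i, q ≤ M → i < k + 2 → w[q * (k + 2) + i]? = some (f q i) := by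
    intro q i hq hi
    have h1 := Nat.mul_le_mul_right (k + 2) hq
    have : q * (k + 2) + i < w.length := by rw [hw, Nat.succ_mul]; omega
    simp [f, this]
  have fA : ∀ q, q + 1 ≤ M → f (q + 1) 0 = !(f q 0) := by
    intro q hq
    by_contra hc
    have hc : f (q + 1) 0 = f q 0 := by
      cases h1 : f (q + 1) 0 <;> cases h2 : f q 0 <;> simp_all
    apply hA (f q 0)
    rw [mem_errA]
    have h1 := hf q 0 (by omega) (by omega)
    have h2 := hf (q + 1) 0 (by omega) (by omega)
    rw [hc] at h2
    exact ⟨q, h1, h2⟩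
  have fB : ∀ q i, q + 1 ≤ M → i ≤ k →
      f (q + 1) (i + 1) = xor (f q (i + 1)) (f q i && !(f (q + 1) i)) := by
    intro q i hq hi
    by_contra hc
    apply hB (f q i) (f q (i + 1)) (f (q + 1) i)
    rw [mem_errB]
    refine ⟨q, i, hi, hf _ _ (by omega) (by omega), hf _ _ (by omega) (by omega),
      hf _ _ (by omega) (by omega), ?_⟩
    rw [hf _ _ (by omega) (by omega)]
    congr 1
    revert hc
    generalize f (q + 1) (i + 1) = x
    generalize xor (f q (i + 1)) (f q i && !(f (q + 1) i)) = y
    revert x y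
    decide
  have fC : ∀ q, q ≤ M → f q (k + 1) = false := by
    intro q hq
    by_contra hc
    apply hC
    rw [mem_errC]
    refine ⟨q, ?_⟩
    rw [hf _ _ hq (by omega)]
    simpa using hc
  let V : ℕ → ℕ → ℕ := fun q j => ∑ i ∈ Finset.range j, (f q i).toNat * 2 ^ i
  have hV : ∀ q j, q + 1 ≤ M → j ≤ k + 1 →
      V (q + 1) (j + 1) + (f q j && !(f (q + 1) j)).toNat * 2 ^ (j + 1) = V q (j + 1) + 1 := by
    intro q j hq hj
    induction j with
    | zero =>
      simp only [V, Finset.sum_range_succ, Finset.sum_range_zero]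
      rw [fA q hq]
      cases f q 0 <;> simp
    | succ j ih =>
      have ih := ih (by omega)
      have e : ∀ q, V q (j + 1 + 1) = V q (j + 1) + (f q (j + 1)).toNat * 2 ^ (j + 1) := by
        intro q; simp only [V]; rw [Finset.sum_range_succ _ (j + 1)]
      rw [e, e]
      have hb := fB q j hq (by omega)
      rw [hb]
      have e2 : 2 ^ (j + 1 + 1) = 2 * 2 ^ (j + 1) := by ring
      rw [e2]
      generalize 2 ^ (j + 1) = X at *
      revert ih
      generalize (f q j && !(f (q + 1) j)) = c
      cases c <;> cases f q (j + 1) <;> simp <;> omega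
  have hstep : ∀ q, q + 1 ≤ M → V (q + 1) (k + 2) = V q (k + 2) + 1 := by
    intro q hq
    have := hV q (k + 1) hq le_rfl
    rw [fC q (by omega)] at this
    simpa using this
  have hge : ∀ q, q ≤ M → q ≤ V q (k + 2) := by
    intro q
    induction q with
    | zero => intro _; omega
    | succ q ih => intro hq; have := hstep q hq; have := ih (by omega); omega
  have hlt : ∀ j, V M j < 2 ^ j := by
    intro j
    induction j with
    | zero => simp [V]
    | succ j ih =>
      have e : V M (j + 1) = V M j + (f M j).toNat * 2 ^ j := by
        simp only [V]; rw [Finset.sum_range_succ]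
      rw [e, pow_succ]
      cases f M j <;> simp <;> omega
  have h1 := hge M le_rfl
  have h2 := hlt (k + 2)
  omega

end RegexUniv

/-- There is a constant `c > 0` such that for all sufficiently large `n` there is a binary
regular expression with at most `n` input symbols having a universal length, whose minimal
universality length is at least `2 ^ (c * n)`. -/
theorem regex_min_univ_length_exponential :
    ∃ c : ℝ, 0 < c ∧ ∃ N : ℕ, ∀ n : ℕ, N ≤ n →
      ∃ r : RegularExpression Bool,
        symCount r ≤ n ∧
        (∃ ℓ : ℕ, IsUnivLength r.matches' ℓ) ∧
        (2 : ℝ) ^ (c * (n : ℝ)) ≤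
          ((sInf {ℓ : ℕ | IsUnivLength r.matches' ℓ} : ℕ) : ℝ) := by
  refine ⟨1 / 128, by norm_num, 128, fun n hn => ?_⟩
  obtain ⟨k, hk⟩ : ∃ k, n / 64 = k + 2 := ⟨n / 64 - 2, by omega⟩
  refine ⟨RegexUniv.reg k, ?_, ⟨_, RegexUniv.univ k⟩, ?_⟩
  · have := RegexUniv.symCount_reg k
    omega
  · have hmem := Nat.sInf_mem (s := {ℓ : ℕ | IsUnivLength (RegexUniv.reg k).matches' ℓ})
      ⟨_, RegexUniv.univ k⟩
    have hge : 2 ^ (k + 2) ≤ sInf {ℓ : ℕ | IsUnivLength (RegexUniv.reg k).matches' ℓ} := by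
      by_contra hc
      refine RegexUniv.not_univ k _ ?_ hmem
      have : 2 ^ (k + 2) ≤ 2 ^ (k + 1) * (k + 2) := by
        rw [pow_succ 2 (k + 1)]
        exact Nat.mul_le_mul_left _ (by omega)
      omega
    calc (2 : ℝ) ^ (1 / 128 * (n : ℝ)) ≤ (2 : ℝ) ^ ((k + 2 : ℕ) : ℝ) := by
          apply Real.rpow_le_rpow_of_exponent_le (by norm_num)
          have : n ≤ 128 * (k + 2) := by omega
          have : (n : ℝ) ≤ 128 * ((k + 2 : ℕ) : ℝ) := by exact_mod_cast this
          linarith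
      _ = ((2 ^ (k + 2) : ℕ) : ℝ) := by rw [Real.rpow_natCast]; push_cast; rfl
      _ ≤ _ := by exact_mod_cast hge
end

section
/- For every m ≥ 1 there exists a nondeterministic transition system (Selection Gadget) over a two-letter alphabet {α₁, α₂} on the state set Q = {acc} ∪ {p₀, p₁, …, p_m} ∪ {v₁, …, v_m} ∪ {v̄₁, …, v̄_m} (all states distinct, so 3m + 2 states) with δ(acc, a) = {acc} for every letter a, such that for every subset C ⊆ Q with p₀ ∈ C and C ∩ ({acc, p₁, …, p_m}) = ∅ the following hold, where δ(C, w) denotes the set of states reachable from C on word w: (i) for every Boolean vector b : {1, …, m} → Bool there exists a word w of length m with δ(C, w) = {p_m} ∪ {v_i : b(i) = true} ∪ {v̄_i : b(i) = false}; (ii) for every word w of length m, acc ∉ δ(C, w) and δ(C, w) = {p_m} ∪ {v_i : b(i) = true} ∪ {v̄_i : b(i) = false} for some Boolean vector b, and distinct words of length m yield distinct vectors b; (iii) for every word w of length strictly less than m, p_m ∉ δ(C, w); (iv) for every word w of length strictly greater than m, acc ∈ δ(C, w). -/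
/-- The state set of the Selection Gadget: the absorbing state `acc`, the control-flow states
`p 0, …, p m`, and the variable states `v 1, …, v m` and `vbar 1, …, vbar m`
(indexed here by `Fin m`); in total `3m + 2` distinct states. -/
inductive SelState (m : ℕ) where
  | acc : SelState m
  | p : Fin (m + 1) → SelState m
  | v : Fin m → SelState m
  | vbar : Fin m → SelState m
  deriving DecidableEq

/-- One step of a nondeterministic transition system on a set of states. -/
def stepSet {Q A : Type*} (δ : Q → A → Set Q) (C : Set Q) (a : A) : Set Q :=
  ⋃ q ∈ C, δ q a

/-- The set of states reachable from the configuration `C` by reading the word `w`. -/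
def evalFrom {Q A : Type*} (δ : Q → A → Set Q) (C : Set Q) (w : List A) : Set Q :=
  w.foldl (stepSet δ) C

/-- The literal state for variable `i` with sign `c`. -/
def selLit {m : ℕ} (c : Bool) (i : Fin m) : SelState m :=
  match c with
  | true => SelState.v i
  | false => SelState.vbar i

/-- Shift-register transition function. -/
def selDelta (m : ℕ) (q : SelState m) (a : Bool) : Set (SelState m) :=
  match q with
  | SelState.acc => {SelState.acc}
  | SelState.p j => {s | (j.val = m ∧ s = SelState.acc) ∨
      (∃ k : Fin (m + 1), k.val = j.val + 1 ∧ s = SelState.p k) ∨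
      (j.val < m ∧ ∃ i : Fin m, i.val + 1 = m ∧ s = selLit a i)}
  | SelState.v i => {s | ∃ k : Fin m, k.val + 1 = i.val ∧ s = SelState.v k}
  | SelState.vbar i => {s | ∃ k : Fin m, k.val + 1 = i.val ∧ s = SelState.vbar k}

theorem sel_mem_step {m : ℕ} (C : Set (SelState m)) (a : Bool) (s : SelState m) :
    s ∈ stepSet (selDelta m) C a ↔ ∃ q ∈ C, s ∈ selDelta m q a := by
  simp [stepSet]

theorem sel_step_acc {m : ℕ} (C : Set (SelState m)) (a : Bool) :
    SelState.acc ∈ stepSet (selDelta m) C a ↔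
      SelState.acc ∈ C ∨ SelState.p (Fin.last m) ∈ C := by
  rw [sel_mem_step]
  constructor
  · rintro ⟨q, hq, h⟩
    cases q <;> cases a <;> simp [selDelta, selLit] at h
    · exact Or.inl hq
    · exact Or.inl hq
    · rename_i j
      have : j = Fin.last m := Fin.ext h
      exact Or.inr (this ▸ hq)
    · rename_i j
      have : j = Fin.last m := Fin.ext h
      exact Or.inr (this ▸ hq)
  · rintro (h | h)
    · exact ⟨_, h, by simp [selDelta]⟩
    · exact ⟨_, h, by simp [selDelta]⟩

theorem sel_step_p {m : ℕ} (C : Set (SelState m)) (a : Bool) (k : Fin (m + 1)) :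
    SelState.p k ∈ stepSet (selDelta m) C a ↔
      ∃ j : Fin (m + 1), SelState.p j ∈ C ∧ k.val = j.val + 1 := by
  rw [sel_mem_step]
  constructor
  · rintro ⟨q, hq, h⟩
    cases q <;> cases a <;> simp [selDelta, selLit] at h
    · exact ⟨_, hq, h⟩
    · exact ⟨_, hq, h⟩
  · rintro ⟨j, hj, h⟩
    exact ⟨_, hj, by simp [selDelta, h]⟩

theorem sel_step_lit {m : ℕ} (C : Set (SelState m)) (a c : Bool) (k : Fin m) :
    selLit c k ∈ stepSet (selDelta m) C a ↔
      (c = a ∧ k.val + 1 = m ∧ ∃ j : Fin (m + 1), SelState.p j ∈ C ∧ j.val < m) ∨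
      ∃ i : Fin m, selLit c i ∈ C ∧ k.val + 1 = i.val := by
  rw [sel_mem_step]
  constructor
  · rintro ⟨q, hq, h⟩
    cases q <;> cases a <;> cases c <;> simp [selDelta, selLit] at h ⊢
    all_goals first
      | exact Or.inr ⟨_, hq, h⟩
      | exact ⟨_, hq, h⟩
      | exact Or.inl ⟨h.2, _, hq, h.1⟩
  · rintro (⟨rfl, hk, j, hj, hjm⟩ | ⟨i, hi, h⟩)
    · exact ⟨_, hj, Or.inr (Or.inr ⟨hjm, k, hk, rfl⟩)⟩
    · refine ⟨_, hi, ?_⟩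
      cases c <;> exact ⟨k, h, rfl⟩

theorem sel_eval_snoc {m : ℕ} (C : Set (SelState m)) (w : List Bool) (a : Bool) :
    evalFrom (selDelta m) C (w ++ [a]) =
      stepSet (selDelta m) (evalFrom (selDelta m) C w) a := by
  simp [evalFrom]

theorem sel_inv {m : ℕ} (C : Set (SelState m)) (h0 : SelState.p 0 ∈ C)
    (hacc : SelState.acc ∉ C) (hp : ∀ i : Fin (m + 1), i ≠ 0 → SelState.p i ∉ C)
    (w : List Bool) : w.length ≤ m →
      SelState.acc ∉ evalFrom (selDelta m) C w ∧
      (∀ k : Fin (m + 1), SelState.p k ∈ evalFrom (selDelta m) C w ↔ k.val = w.length) ∧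
      (∀ (c : Bool) (i : Fin m), m ≤ i.val + w.length →
        (selLit c i ∈ evalFrom (selDelta m) C w ↔ w[i.val + w.length - m]? = some c)) := by
  induction w using List.reverseRecOn with
  | nil =>
    intro _
    refine ⟨hacc, fun k => ⟨fun h => ?_, fun h => ?_⟩, fun c i h => ?_⟩
    · by_contra hk
      exact hp k (fun e => hk (by simp [e])) h
    · have : k = 0 := Fin.ext h
      exact this ▸ h0
    · have := i.isLt
      simp at h
      omega
  | append_singleton w a ih =>
    intro hl
    simp only [List.length_append, List.length_singleton] at hl
    obtain ⟨ha, hpp, hv⟩ := ih (by omega)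
    rw [sel_eval_snoc]
    refine ⟨?_, fun k => ?_, fun c i h => ?_⟩
    · rw [sel_step_acc]
      rintro (h | h)
      · exact ha h
      · have := (hpp _).1 h
        simp at this
        omega
    · rw [sel_step_p]
      simp only [List.length_append, List.length_singleton]
      constructor
      · rintro ⟨j, hj, e⟩
        rw [e, (hpp j).1 hj]
      · intro e
        exact ⟨⟨w.length, by omega⟩, (hpp _).2 rfl, e⟩
    · rw [sel_step_lit]
      simp only [List.length_append, List.length_singleton] at h ⊢
      by_cases hi : i.val + 1 = m
      · have e : i.val + (w.length + 1) - m = w.length := by omega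
        rw [e, List.getElem?_concat_length]
        constructor
        · rintro (⟨rfl, -⟩ | ⟨j, -, hj⟩)
          · rfl
          · have := j.isLt
            omega
        · intro hc
          refine Or.inl ⟨(Option.some.inj hc).symm, hi, ⟨w.length, by omega⟩, (hpp _).2 rfl, ?_⟩
          show w.length < m
          omega
      · have hlt := i.isLt
        rw [List.getElem?_append_left (by omega)]
        have key := hv c ⟨i.val + 1, by omega⟩ (by simp only; omega)
        have e : i.val + (w.length + 1) - m = i.val + 1 + w.length - m := by omega
        rw [e, ← key]
        constructor
        · rintro (⟨-, h', -⟩ | ⟨j, hj, e'⟩)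
          · exact absurd h' hi
          · have : j = ⟨i.val + 1, by omega⟩ := Fin.ext e'.symm
            exact this ▸ hj
        · intro h'
          exact Or.inr ⟨_, h', rfl⟩

theorem sel_overrun {m : ℕ} (C : Set (SelState m)) (h0 : SelState.p 0 ∈ C)
    (hacc : SelState.acc ∉ C) (hp : ∀ i : Fin (m + 1), i ≠ 0 → SelState.p i ∉ C)
    (w : List Bool) : m < w.length → SelState.acc ∈ evalFrom (selDelta m) C w := by
  induction w using List.reverseRecOn with
  | nil => intro h; simp at h
  | append_singleton w a ih =>
    intro hl
    simp only [List.length_append, List.length_singleton] at hl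
    rw [sel_eval_snoc, sel_step_acc]
    by_cases h : m < w.length
    · exact Or.inl (ih h)
    · refine Or.inr (((sel_inv C h0 hacc hp w (by omega)).2.1 _).2 ?_)
      simp
      omega

theorem sel_eval_eq {m : ℕ} (C : Set (SelState m)) (h0 : SelState.p 0 ∈ C)
    (hacc : SelState.acc ∉ C) (hp : ∀ i : Fin (m + 1), i ≠ 0 → SelState.p i ∉ C)
    (w : List Bool) (hw : w.length = m) (b : Fin m → Bool)
    (hb : ∀ i : Fin m, w[i.val]? = some (b i)) :
    evalFrom (selDelta m) C w =
      {SelState.p (Fin.last m)} ∪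
        {s | ∃ i : Fin m, b i = true ∧ s = SelState.v i} ∪
        {s | ∃ i : Fin m, b i = false ∧ s = SelState.vbar i} := by
  obtain ⟨ha, hpp, hv⟩ := sel_inv C h0 hacc hp w hw.le
  have hv' : ∀ (c : Bool) (i : Fin m), selLit c i ∈ evalFrom (selDelta m) C w ↔ b i = c := by
    intro c i
    rw [hv c i (by omega)]
    have e : i.val + w.length - m = i.val := by omega
    rw [e, hb i, Option.some.injEq]
  ext s
  cases s with
  | acc => simp [ha]
  | p k => simp [hpp, Fin.ext_iff, hw]
  | v i => simpa [selLit] using hv' true i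
  | vbar i => simpa [selLit] using hv' false i

/-- The Selection Gadget: a nondeterministic transition system over a two-letter alphabet on
`3m + 2` states such that, from any configuration containing `p 0`, none of `acc, p 1, …, p m`:
(i) every Boolean vector `b` is reachable by some word of length `m` as the configuration
`{p m} ∪ {v i : b i} ∪ {vbar i : ¬ b i}`; (ii) every word of length `m` avoids `acc` and yields
such a configuration, distinct words giving distinct vectors; (iii) no word of length `< m`
reaches `p m`; (iv) every word of length `> m` reaches `acc`. -/
theorem selection_gadget (m : ℕ) (hm : 1 ≤ m) :
    ∃ δ : SelState m → Bool → Set (SelState m),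
      (∀ a : Bool, δ SelState.acc a = {SelState.acc}) ∧
      ∀ C : Set (SelState m),
        SelState.p 0 ∈ C →
        SelState.acc ∉ C →
        (∀ i : Fin (m + 1), i ≠ 0 → SelState.p i ∉ C) →
        ((∀ b : Fin m → Bool, ∃ w : List Bool, w.length = m ∧
            evalFrom δ C w =
              {SelState.p (Fin.last m)} ∪
                {s | ∃ i : Fin m, b i = true ∧ s = SelState.v i} ∪
                {s | ∃ i : Fin m, b i = false ∧ s = SelState.vbar i}) ∧
         (∀ w : List Bool, w.length = m →
            SelState.acc ∉ evalFrom δ C w ∧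
            ∃ b : Fin m → Bool, evalFrom δ C w =
              {SelState.p (Fin.last m)} ∪
                {s | ∃ i : Fin m, b i = true ∧ s = SelState.v i} ∪
                {s | ∃ i : Fin m, b i = false ∧ s = SelState.vbar i}) ∧
         (∀ w₁ w₂ : List Bool, w₁.length = m → w₂.length = m →
            evalFrom δ C w₁ = evalFrom δ C w₂ → w₁ = w₂) ∧
         (∀ w : List Bool, w.length < m → SelState.p (Fin.last m) ∉ evalFrom δ C w) ∧
         (∀ w : List Bool, m < w.length → SelState.acc ∈ evalFrom δ C w)) := by
  refine ⟨selDelta m, fun a => rfl, fun C h0 hacc hp => ⟨?_, ?_, ?_, ?_, ?_⟩⟩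
  · intro b
    refine ⟨List.ofFn b, by simp, ?_⟩
    exact sel_eval_eq C h0 hacc hp _ (by simp) b (by simp)
  · intro w hw
    refine ⟨(sel_inv C h0 hacc hp w hw.le).1, fun i => w[i.val]'(by omega), ?_⟩
    exact sel_eval_eq C h0 hacc hp w hw _ (fun i => by simp [hw])
  · intro w₁ w₂ h₁ h₂ he
    apply List.ext_getElem (h₁.trans h₂.symm)
    intro n hn₁ hn₂
    have k₁ := (sel_inv C h0 hacc hp w₁ h₁.le).2.2 (w₁[n]) ⟨n, by omega⟩ (by simp only; omega)
    have k₂ := (sel_inv C h0 hacc hp w₂ h₂.le).2.2 (w₁[n]) ⟨n, by omega⟩ (by simp only; omega)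
    rw [he] at k₁
    have k := k₁.symm.trans k₂
    have e₁ : n + w₁.length - m = n := by omega
    have e₂ : n + w₂.length - m = n := by omega
    simp only [e₁, e₂] at k
    have := k.1 (List.getElem?_eq_getElem hn₁)
    rw [List.getElem?_eq_getElem hn₂] at this
    exact (Option.some.inj this).symm
  · intro w hw h
    have := ((sel_inv C h0 hacc hp w hw.le).2.1 _).1 h
    simp at this
    omega
  · exact sel_overrun C h0 hacc hp
end

section
/- For every m ≥ 1 there exists a nondeterministic transition system (Equality Gadget) over a two-letter alphabet {α₁, α₂} on the state set Q = {acc} ∪ {p₀, p₁, …, p_m} ∪ {u₁, …, u_m, ū₁, …, ū_m} ∪ {v₁, …, v_m, v̄₁, …, v̄_m} (all states distinct, so 5m + 2 states) with δ(acc, a) = {acc} for every letter a, such that for every subset C ⊆ Q with p₀ ∈ C, C ∩ ({acc, p₁, …, p_m}) = ∅, and such that for every i exactly one of u_i, ū_i belongs to C and exactly one of v_i, v̄_i belongs to C, the following hold, where δ(C, w) denotes the set of states reachable from C on word w: (i) if for every i one has (u_i ∈ C ↔ v_i ∈ C), then there exists a word w of length m with acc ∉ δ(C, w) and δ(C, w)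 = {p_m} ∪ (C ∩ ({u₁,…,u_m,ū₁,…,ū_m,v₁,…,v_m,v̄₁,…,v̄_m})), and every word w of length m with acc ∉ δ(C, w) satisfies this same equality; (ii) if there exists i with (u_i ∈ C) not equivalent to (v_i ∈ C), then acc ∈ δ(C, w) for every word w of length at least m; (iii) acc ∈ δ(C, w) for every word w of length strictly greater than m. -/
/-- The state set of the Equality Gadget: the absorbing state `acc`, the control-flow states
`p 0, …, p m`, and the variable states `u i, ubar i, v i, vbar i` for `i` ranging over `Fin m`;
in total `5m + 2` distinct states. -/
inductive EqState (m : ℕ) where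
  | acc : EqState m
  | p : Fin (m + 1) → EqState m
  | u : Fin m → EqState m
  | ubar : Fin m → EqState m
  | v : Fin m → EqState m
  | vbar : Fin m → EqState m
  deriving DecidableEq

/-- The variable states of the Equality Gadget. -/
def EqState.varStates (m : ℕ) : Set (EqState m) :=
  {s | ∃ i : Fin m, s = EqState.u i ∨ s = EqState.ubar i ∨ s = EqState.v i ∨ s = EqState.vbar i}

namespace EqGadget

open scoped Fin.CommRing Fin.NatCast

/-- Deterministic step: the variable states rotate, position `0` is compared with the letter. -/
def f {n : ℕ} : EqState (n + 1) → Bool → EqState (n + 1)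
  | .acc, _ => .acc
  | .p i, _ => if h : i.val + 1 < n + 1 + 1 then .p ⟨i.val + 1, h⟩ else .acc
  | .u i, b => if i = 0 ∧ b = false then .acc else .u (i - 1)
  | .ubar i, b => if i = 0 ∧ b = true then .acc else .ubar (i - 1)
  | .v i, b => if i = 0 ∧ b = false then .acc else .v (i - 1)
  | .vbar i, b => if i = 0 ∧ b = true then .acc else .vbar (i - 1)

theorem eval_eq {Q A : Type*} (g : Q → A → Q) (w : List A) : ∀ C : Set Q,
    evalFrom (fun q a => {g q a}) C w = (fun q => w.foldl g q) '' C := by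
  induction w with
  | nil => intro C; simp [evalFrom]
  | cons a w ih =>
    intro C
    have h := ih (stepSet (fun q a => {g q a}) C a)
    have h2 : stepSet (fun q a => ({g q a} : Set Q)) C a = (fun q => g q a) '' C := by
      ext x; simp [stepSet, eq_comm]
    rw [h2, Set.image_image] at h
    simpa [evalFrom, h2] using h

theorem run_acc {n : ℕ} (w : List Bool) : w.foldl f (EqState.acc : EqState (n + 1)) = .acc := by
  induction w with
  | nil => rfl
  | cons a w ih => simpa [f] using ih

theorem run_p {n : ℕ} (w : List Bool) : ∀ (i : Fin (n + 1 + 1)),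
    w.foldl f (EqState.p i : EqState (n + 1)) =
      if h : i.val + w.length < n + 1 + 1 then .p ⟨i.val + w.length, h⟩ else .acc := by
  induction w with
  | nil => intro i; simpa using Nat.le_of_lt_succ i.isLt
  | cons a w ih =>
    intro i
    rw [List.foldl_cons]
    by_cases h : i.val + 1 < n + 1 + 1
    · have e : f (EqState.p i : EqState (n + 1)) a = .p ⟨i.val + 1, h⟩ := by simp only [f, h, dite_true]
      rw [e, ih]
      simp only [List.length_cons, add_assoc, add_comm 1 w.length]
    · have e : f (EqState.p i : EqState (n + 1)) a = .acc := by simp only [f, h, dite_false]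
      rw [e, run_acc, dif_neg]
      simp only [List.length_cons]; omega

theorem pred_val {n : ℕ} (i : Fin (n + 1)) (h : i ≠ 0) : (i - 1).val + 1 = i.val := by
  have := Fin.val_sub_one_of_ne_zero h
  have : i.val ≠ 0 := fun h' => h (Fin.ext h')
  omega

theorem run_kill {n : ℕ} (s : Fin (n + 1) → EqState (n + 1)) (c : Bool)
    (hs : ∀ i b, f (s i) b = if i = 0 ∧ b = c then .acc else s (i - 1)) (w : List Bool) :
    ∀ i : Fin (n + 1), w[i.val]? = some c → w.foldl f (s i) = .acc := by
  induction w with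
  | nil => intro i h; simp at h
  | cons a w ih =>
    intro i h
    rw [List.foldl_cons, hs]
    by_cases hi : i = 0
    · subst hi
      have : a = c := by simpa using h
      simp [this, run_acc]
    · rw [if_neg (by tauto)]
      apply ih
      rw [← pred_val i hi] at h
      simpa using h

theorem run_live {n : ℕ} (s : Fin (n + 1) → EqState (n + 1)) (c : Bool)
    (hs : ∀ i b, f (s i) b = if i = 0 ∧ b = c then .acc else s (i - 1)) (w : List Bool) :
    ∀ i : Fin (n + 1), w.length ≤ n + 1 → w[i.val]? ≠ some c →
      w.foldl f (s i) = s (i - (w.length : Fin (n + 1))) := by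
  induction w with
  | nil => intro i _ h; simp
  | cons a w ih =>
    intro i hl h
    simp only [List.length_cons] at hl
    have e : i - ((a :: w).length : Fin (n + 1)) = i - 1 - (w.length : Fin (n + 1)) := by
      simp only [List.length_cons, Nat.cast_add, Nat.cast_one]; ring
    rw [List.foldl_cons, hs, e]
    by_cases hi : i = 0
    · subst hi
      have : a ≠ c := by simpa using h
      rw [if_neg (by tauto)]
      apply ih _ (by omega)
      have : ((0 : Fin (n + 1)) - 1).val = n := by simp
      rw [this, List.getElem?_eq_none (by omega)]
      simp
    · rw [if_neg (by tauto)]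
      apply ih _ (by omega)
      rw [← pred_val i hi] at h
      simpa using h

theorem run_fix {n : ℕ} (s : Fin (n + 1) → EqState (n + 1)) (c : Bool)
    (hs : ∀ i b, f (s i) b = if i = 0 ∧ b = c then .acc else s (i - 1)) (w : List Bool)
    (hw : w.length = n + 1) (i : Fin (n + 1)) (h : w[i.val]? ≠ some c) :
      w.foldl f (s i) = s i := by
  rw [run_live s c hs w i hw.le h, hw]
  congr 1
  simp

theorem run_fix' {n : ℕ} (s : Fin (n + 1) → EqState (n + 1)) (c : Bool)
    (hs : ∀ i b, f (s i) b = if i = 0 ∧ b = c then .acc else s (i - 1)) (w : List Bool)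
    (hw : w.length = n + 1) (i : Fin (n + 1)) (h : w.foldl f (s i) ≠ .acc) :
      w.foldl f (s i) = s i :=
  run_fix s c hs w hw i fun h' => h (run_kill s c hs w i h')

end EqGadget

/-- The Equality Gadget: a nondeterministic transition system over a two-letter alphabet on
`5m + 2` states checking equality of two valid variables. From any configuration `C` containing
`p 0`, none of `acc, p 1, …, p m`, with both variables valid: (i) if the variables agree, some
word of length `m` avoids `acc` and reaches `{p m} ∪ (C ∩ varStates)`, and every word of length
`m` avoiding `acc` reaches exactly this configuration; (ii) if the variables differ, every word
of length `≥ m` reaches `acc`; (iii) every word of length `> m` reaches `acc`. -/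
theorem equality_gadget (m : ℕ) (hm : 1 ≤ m) :
    ∃ δ : EqState m → Bool → Set (EqState m),
      (∀ a : Bool, δ EqState.acc a = {EqState.acc}) ∧
      ∀ C : Set (EqState m),
        EqState.p 0 ∈ C →
        EqState.acc ∉ C →
        (∀ i : Fin (m + 1), i ≠ 0 → EqState.p i ∉ C) →
        (∀ i : Fin m, EqState.u i ∈ C ↔ EqState.ubar i ∉ C) →
        (∀ i : Fin m, EqState.v i ∈ C ↔ EqState.vbar i ∉ C) →
        (((∀ i : Fin m, EqState.u i ∈ C ↔ EqState.v i ∈ C) →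
            ((∃ w : List Bool, w.length = m ∧ EqState.acc ∉ evalFrom δ C w ∧
                evalFrom δ C w = {EqState.p (Fin.last m)} ∪ (C ∩ EqState.varStates m)) ∧
             (∀ w : List Bool, w.length = m → EqState.acc ∉ evalFrom δ C w →
                evalFrom δ C w = {EqState.p (Fin.last m)} ∪ (C ∩ EqState.varStates m)))) ∧
         ((∃ i : Fin m, ¬(EqState.u i ∈ C ↔ EqState.v i ∈ C)) →
            ∀ w : List Bool, m ≤ w.length → EqState.acc ∈ evalFrom δ C w) ∧
         (∀ w : List Bool, m < w.length → EqState.acc ∈ evalFrom δ C w)) := by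
  obtain ⟨n, rfl⟩ : ∃ n, m = n + 1 := ⟨m - 1, by omega⟩
  have hu : ∀ (i : Fin (n + 1)) b, EqGadget.f (.u i) b =
    if i = 0 ∧ b = false then .acc else .u (i - 1) := fun _ _ => rfl
  have hub : ∀ (i : Fin (n + 1)) b, EqGadget.f (.ubar i) b =
    if i = 0 ∧ b = true then .acc else .ubar (i - 1) := fun _ _ => rfl
  have hv : ∀ (i : Fin (n + 1)) b, EqGadget.f (.v i) b =
    if i = 0 ∧ b = false then .acc else .v (i - 1) := fun _ _ => rfl
  have hvb : ∀ (i : Fin (n + 1)) b, EqGadget.f (.vbar i) b =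
    if i = 0 ∧ b = true then .acc else .vbar (i - 1) := fun _ _ => rfl
  refine ⟨fun q a => {EqGadget.f q a}, fun a => rfl, ?_⟩
  intro C hp0 hacc hp hU hV
  simp only [EqGadget.eval_eq]
  have hlast : ∀ w : List Bool, w.length = n + 1 →
      w.foldl EqGadget.f (EqState.p 0 : EqState (n + 1)) = .p (Fin.last (n + 1)) := by
    intro w hw
    rw [EqGadget.run_p, dif_pos (by simp [hw])]
    congr 1
    ext
    simp [hw]
  have key : ∀ w : List Bool, w.length = n + 1 →
      EqState.acc ∉ (fun q => w.foldl EqGadget.f q) '' C →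
      (fun q => w.foldl EqGadget.f q) '' C =
        {EqState.p (Fin.last (n + 1))} ∪ (C ∩ EqState.varStates (n + 1)) := by
    intro w hw hna
    have hne : ∀ q ∈ C, w.foldl EqGadget.f q ≠ .acc := fun q hq h => hna ⟨q, hq, h⟩
    have hfix : ∀ q ∈ C, q ∈ EqState.varStates (n + 1) → w.foldl EqGadget.f q = q := by
      rintro q hq ⟨i, rfl | rfl | rfl | rfl⟩
      · exact EqGadget.run_fix' _ _ hu w hw i (hne _ hq)
      · exact EqGadget.run_fix' _ _ hub w hw i (hne _ hq)
      · exact EqGadget.run_fix' _ _ hv w hw i (hne _ hq)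
      · exact EqGadget.run_fix' _ _ hvb w hw i (hne _ hq)
    have hcase : ∀ q ∈ C, q = .p 0 ∨ q ∈ EqState.varStates (n + 1) := by
      intro q hq
      cases q with
      | acc => exact absurd hq hacc
      | p i =>
        by_cases hi : i = 0
        · left; rw [hi]
        · exact absurd hq (hp i hi)
      | u i => exact Or.inr ⟨i, by simp⟩
      | ubar i => exact Or.inr ⟨i, by simp⟩
      | v i => exact Or.inr ⟨i, by simp⟩
      | vbar i => exact Or.inr ⟨i, by simp⟩
    ext x
    constructor
    · rintro ⟨q, hq, rfl⟩
      rcases hcase q hq with rfl | h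
      · left; exact hlast w hw
      · right; simp only [hfix q hq h]; exact ⟨hq, h⟩
    · rintro (h | ⟨h1, h2⟩)
      · rw [Set.mem_singleton_iff] at h
        exact ⟨_, hp0, by rw [h]; exact hlast w hw⟩
      · exact ⟨x, h1, hfix x h1 h2⟩
  refine ⟨fun heq => ⟨?_, key⟩, ?_, ?_⟩
  · classical
    let w : List Bool := List.ofFn fun i : Fin (n + 1) => decide (EqState.u i ∈ C)
    have hw : w.length = n + 1 := by simp [w]
    have hget : ∀ i : Fin (n + 1), w[i.val]? = some (decide (EqState.u i ∈ C)) := by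
      intro i; simp [w, -List.ofFn_succ, List.getElem?_ofFn]; omega
    have hna : EqState.acc ∉ (fun q => w.foldl EqGadget.f q) '' C := by
      rintro ⟨q, hq, h⟩
      simp only at h
      cases q with
      | acc => exact hacc hq
      | p i =>
        by_cases hi : i = 0
        · subst hi; rw [hlast w hw] at h; cases h
        · exact hp i hi hq
      | u i =>
        rw [EqGadget.run_fix _ _ hu w hw i (by rw [hget]; simpa using hq)] at h; cases h
      | ubar i =>
        rw [EqGadget.run_fix _ _ hub w hw i (by rw [hget]; simp [hU, hq])] at h; cases h
      | v i =>
        rw [EqGadget.run_fix _ _ hv w hw i (by rw [hget]; simp [heq, hq])] at h; cases h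
      | vbar i =>
        rw [EqGadget.run_fix _ _ hvb w hw i (by rw [hget]; simp [heq, hV, hq])] at h; cases h
    exact ⟨w, hw, hna, key w hw hna⟩
  · rintro ⟨i, hi⟩ w hw
    have hlt : i.val < w.length := by omega
    have hg : w[i.val]? = some w[i.val] := List.getElem?_eq_getElem hlt
    by_cases h : EqState.u i ∈ C
    · have hvi : EqState.vbar i ∈ C := by
        by_contra h'; exact hi (iff_of_true h ((hV i).2 h'))
      cases hb : w[i.val] with
      | false => exact ⟨_, h, EqGadget.run_kill _ _ hu w i (by rw [hg, hb])⟩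
      | true => exact ⟨_, hvi, EqGadget.run_kill _ _ hvb w i (by rw [hg, hb])⟩
    · have hvi : EqState.v i ∈ C := by
        by_contra h'; exact hi (iff_of_false h h')
      have hui : EqState.ubar i ∈ C := by
        by_contra h'; exact h ((hU i).2 h')
      cases hb : w[i.val] with
      | false => exact ⟨_, hvi, EqGadget.run_kill _ _ hv w i (by rw [hg, hb])⟩
      | true => exact ⟨_, hui, EqGadget.run_kill _ _ hub w i (by rw [hg, hb])⟩
  · intro w hw
    refine ⟨_, hp0, ?_⟩
    simp only
    rw [EqGadget.run_p, dif_neg]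
    simp only [Fin.val_zero]; omega
end

section
/- For every m ≥ 1 there exists a nondeterministic transition system (Inequality Gadget) over a three-letter alphabet {α₁, α₂, α_s} on the state set Q = {acc} ∪ {p₀, p₁, …, p_{2m}} ∪ {u₁, …, u_m, ū₁, …, ū_m} ∪ {v₁, …, v_m, v̄₁, …, v̄_m} (all states distinct, so 6m + 2 states) with δ(acc, a) = {acc} for every letter a, such that for every subset C ⊆ Q with p₀ ∈ C, C ∩ ({acc, p₁, …, p_{2m}}) = ∅, and such that for every i exactly one of u_i, ū_i belongs to C and exactly one of v_i, v̄_i belongs to C, the following hold, where δ(C, w) denotes the set of states reachable from C on word w: (i) if there exists i with (u_i ∈ C) not equivalent to (v_i ∈ C), then there exists a word w of length m + 1 with acc ∉ δ(C, w) and δ(C, w) = {p_{2m}} ∪ (C ∩ ({u₁,…,u_m,ū₁,…,ū_m,v₁,…,v_m,v̄₁,…,v̄_m})), and every word w of length m + 1 with acc ∉ δ(C, w) satisfies this same equality; (ii) if for every i one has (u_i ∈ C ↔ v_i ∈ C), then acc ∈ δ(C, w) for every word w of length at least m + 1; (iii) acc ∈ δ(C, w) for every word w of length strictly greater than m + 1.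 -/
/-- The state set of the Inequality Gadget: the absorbing state `acc`, the control-flow states
`p 0, …, p 2m`, and the variable states `u i, ubar i, v i, vbar i` for `i` ranging over `Fin m`;
in total `6m + 2` distinct states. -/
inductive IneqState (m : ℕ) where
  | acc : IneqState m
  | p : Fin (2 * m + 1) → IneqState m
  | u : Fin m → IneqState m
  | ubar : Fin m → IneqState m
  | v : Fin m → IneqState m
  | vbar : Fin m → IneqState m
  deriving DecidableEq

/-- The variable states of the Inequality Gadget. -/
def IneqState.varStates (m : ℕ) : Set (IneqState m) :=
  {s | ∃ i : Fin m,
    s = IneqState.u i ∨ s = IneqState.ubar i ∨ s = IneqState.v i ∨ s = IneqState.vbar i}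

open IneqState in
/-- The (deterministic) transition map of the gadget: letter `0` rotates both variables, letters
`1` and `2` check that the current bits differ. -/
def gadgetStep (n : ℕ) : IneqState (n + 1) → Fin 3 → IneqState (n + 1)
  | acc, _ => acc
  | p k, a =>
      if a = 0 then
        if h : k.val = n ∨ k.val = 2 * (n + 1) then acc else p ⟨k.val + 1, by omega⟩
      else if h : k.val ≤ n then p ⟨k.val + (n + 1), by omega⟩ else acc
  | u i, a => if a = 0 then u (i - 1) else if a = 2 ∧ i = 0 then acc else u i
  | ubar i, a => if a = 0 then ubar (i - 1) else if a = 1 ∧ i = 0 then acc else ubar i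
  | v i, a => if a = 0 then v (i - 1) else if a = 1 ∧ i = 0 then acc else v i
  | vbar i, a => if a = 0 then vbar (i - 1) else if a = 2 ∧ i = 0 then acc else vbar i

/-- The transition relation of the gadget. -/
def gadgetDelta (n : ℕ) (q : IneqState (n + 1)) (a : Fin 3) : Set (IneqState (n + 1)) :=
  {gadgetStep n q a}

/-- Configuration with control state `k` and variables of `C` rotated `j` times. -/
def gadgetConf (n : ℕ) (C : Set (IneqState (n + 1))) (j : Fin (n + 1)) (k : ℕ) :
    Set (IneqState (n + 1)) := fun q => match q with
  | .acc => False
  | .p i => i.val = k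
  | .u i => .u (i + j) ∈ C
  | .ubar i => .ubar (i + j) ∈ C
  | .v i => .v (i + j) ∈ C
  | .vbar i => .vbar (i + j) ∈ C

section
open scoped Fin.CommRing
variable {n : ℕ} {C : Set (IneqState (n + 1))} {j : Fin (n + 1)} {k : ℕ}

theorem conf_acc : IneqState.acc ∈ gadgetConf n C j k ↔ False := Iff.rfl
theorem conf_p {i} : IneqState.p i ∈ gadgetConf n C j k ↔ i.val = k := Iff.rfl
theorem conf_u {i} : IneqState.u i ∈ gadgetConf n C j k ↔ .u (i + j) ∈ C := Iff.rfl
theorem conf_ubar {i} : IneqState.ubar i ∈ gadgetConf n C j k ↔ .ubar (i + j) ∈ C := Iff.rfl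
theorem conf_v {i} : IneqState.v i ∈ gadgetConf n C j k ↔ .v (i + j) ∈ C := Iff.rfl
theorem conf_vbar {i} : IneqState.vbar i ∈ gadgetConf n C j k ↔ .vbar (i + j) ∈ C := Iff.rfl

theorem mem_step {D : Set (IneqState (n + 1))} {a : Fin 3} {q : IneqState (n + 1)} :
    q ∈ stepSet (gadgetDelta n) D a ↔ ∃ r ∈ D, gadgetStep n r a = q := by
  simp [stepSet, gadgetDelta, eq_comm]

theorem step_acc {D : Set (IneqState (n + 1))} {a : Fin 3} (h : IneqState.acc ∈ D) :
    IneqState.acc ∈ stepSet (gadgetDelta n) D a :=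
  mem_step.2 ⟨_, h, rfl⟩

theorem step_shift (h1 : k ≠ n) (h2 : k < 2 * (n + 1)) :
    stepSet (gadgetDelta n) (gadgetConf n C j k) 0 = gadgetConf n C (j + 1) (k + 1) := by
  have e1 : ∀ i : Fin (n + 1), i - 1 + (j + 1) = i + j := fun i => by ring
  have e2 : ∀ i : Fin (n + 1), i + 1 + j = i + (j + 1) := fun i => by ring
  ext q
  rw [mem_step]
  constructor
  · rintro ⟨r, hr, rfl⟩
    cases r with
    | acc => exact hr.elim
    | p i =>
      rw [conf_p] at hr
      have : ¬ (i.val = n ∨ i.val = 2 * (n + 1)) := by omega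
      simp only [gadgetStep, if_true, dif_neg this, conf_p]
      omega
    | u i => simpa [gadgetStep, conf_u, e1] using hr
    | ubar i => simpa [gadgetStep, conf_ubar, e1] using hr
    | v i => simpa [gadgetStep, conf_v, e1] using hr
    | vbar i => simpa [gadgetStep, conf_vbar, e1] using hr
  · intro hq
    cases q with
    | acc => exact hq.elim
    | p i =>
      rw [conf_p] at hq
      refine ⟨.p ⟨k, by omega⟩, rfl, ?_⟩
      have : ¬ (k = n ∨ k = 2 * (n + 1)) := by omega
      simp [gadgetStep, this, ← hq]
    | u i => exact ⟨.u (i + 1), by simpa [conf_u, e2] using hq, by simp [gadgetStep]⟩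
    | ubar i => exact ⟨.ubar (i + 1), by simpa [conf_ubar, e2] using hq, by simp [gadgetStep]⟩
    | v i => exact ⟨.v (i + 1), by simpa [conf_v, e2] using hq, by simp [gadgetStep]⟩
    | vbar i => exact ⟨.vbar (i + 1), by simpa [conf_vbar, e2] using hq, by simp [gadgetStep]⟩

theorem step_shift_acc (h : k = n ∨ k = 2 * (n + 1)) :
    IneqState.acc ∈ stepSet (gadgetDelta n) (gadgetConf n C j k) 0 := by
  refine mem_step.2 ⟨.p ⟨k, by omega⟩, rfl, ?_⟩
  simp [gadgetStep, h]

theorem step_check_acc {a : Fin 3} (ha : a ≠ 0) (h : n < k) (h' : k ≤ 2 * (n + 1)) :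
    IneqState.acc ∈ stepSet (gadgetDelta n) (gadgetConf n C j k) a := by
  refine mem_step.2 ⟨.p ⟨k, by omega⟩, rfl, ?_⟩
  simp [gadgetStep, ha, h]

theorem step_check {a : Fin 3} (ha : a ≠ 0) (h : k ≤ n)
    (h1 : a = 1 → .ubar j ∉ C ∧ .v j ∉ C) (h2 : a = 2 → .u j ∉ C ∧ .vbar j ∉ C) :
    stepSet (gadgetDelta n) (gadgetConf n C j k) a = gadgetConf n C j (k + (n + 1)) := by
  have key : ∀ r ∈ gadgetConf n C j k, (∀ i, r ≠ .p i) → gadgetStep n r a = r := by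
    intro r hr hp
    cases r with
    | acc => exact hr.elim
    | p i => exact (hp i rfl).elim
    | u i =>
      rw [conf_u] at hr
      have : ¬ (a = 2 ∧ i = 0) := by rintro ⟨x, rfl⟩; exact (h2 x).1 (by simpa using hr)
      simp only [gadgetStep, if_neg ha, if_neg this]
    | ubar i =>
      rw [conf_ubar] at hr
      have : ¬ (a = 1 ∧ i = 0) := by rintro ⟨x, rfl⟩; exact (h1 x).1 (by simpa using hr)
      simp only [gadgetStep, if_neg ha, if_neg this]
    | v i =>
      rw [conf_v] at hr
      have : ¬ (a = 1 ∧ i = 0) := by rintro ⟨x, rfl⟩; exact (h1 x).2 (by simpa using hr)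
      simp only [gadgetStep, if_neg ha, if_neg this]
    | vbar i =>
      rw [conf_vbar] at hr
      have : ¬ (a = 2 ∧ i = 0) := by rintro ⟨x, rfl⟩; exact (h2 x).2 (by simpa using hr)
      simp only [gadgetStep, if_neg ha, if_neg this]
  ext q
  rw [mem_step]
  constructor
  · rintro ⟨r, hr, rfl⟩
    by_cases hp : ∃ i, r = .p i
    · obtain ⟨i, rfl⟩ := hp
      rw [conf_p] at hr
      simp [gadgetStep, ha, hr, h, conf_p]
    · push Not at hp
      rw [key r hr hp]
      cases r with
      | p i => exact (hp i rfl).elim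
      | _ => exact hr
  · intro hq
    by_cases hp : ∃ i, q = .p i
    · obtain ⟨i, rfl⟩ := hp
      rw [conf_p] at hq
      refine ⟨.p ⟨k, by omega⟩, rfl, ?_⟩
      simp [gadgetStep, ha, h, ← hq]
    · push Not at hp
      have hq' : q ∈ gadgetConf n C j k := by
        cases q with
        | p i => exact (hp i rfl).elim
        | _ => exact hq
      exact ⟨q, hq', key q hq' hp⟩

/-- If a check letter avoids `acc`, the checked bits satisfy the required condition. -/
theorem check_cond {a : Fin 3} (ha : a ≠ 0)
    (h : IneqState.acc ∉ stepSet (gadgetDelta n) (gadgetConf n C j k) a) :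
    (a = 1 → .ubar j ∉ C ∧ .v j ∉ C) ∧ (a = 2 → .u j ∉ C ∧ .vbar j ∉ C) := by
  rw [mem_step] at h
  push Not at h
  refine ⟨?_, ?_⟩
  · rintro rfl
    exact ⟨fun hc => h (.ubar 0) (by simpa [conf_ubar] using hc) (by simp [gadgetStep]),
      fun hc => h (.v 0) (by simpa [conf_v] using hc) (by simp [gadgetStep])⟩
  · rintro rfl
    exact ⟨fun hc => h (.u 0) (by simpa [conf_u] using hc) (by simp [gadgetStep]),
      fun hc => h (.vbar 0) (by simpa [conf_vbar] using hc) (by simp [gadgetStep])⟩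

theorem conf_start (h0 : IneqState.p 0 ∈ C) (hacc : IneqState.acc ∉ C)
    (hp : ∀ i : Fin (2 * (n + 1) + 1), i ≠ 0 → IneqState.p i ∉ C) :
    C = gadgetConf n C 0 0 := by
  ext q
  cases q with
  | acc => simpa [conf_acc] using hacc
  | p i =>
    rw [conf_p]
    by_cases hi : i = 0
    · subst hi; simpa using h0
    · have : i.val ≠ 0 := fun h => hi (Fin.ext h)
      simp [this, hp i hi]
  | u i => simp [conf_u]
  | ubar i => simp [conf_ubar]
  | v i => simp [conf_v]
  | vbar i => simp [conf_vbar]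

theorem conf_end :
    gadgetConf n C 0 (2 * (n + 1)) =
      {IneqState.p (Fin.last (2 * (n + 1)))} ∪ (C ∩ IneqState.varStates (n + 1)) := by
  ext q
  cases q with
  | acc => simp [conf_acc, IneqState.varStates]
  | p i => simp [conf_p, IneqState.varStates, Fin.ext_iff]
  | u i => simp [conf_u, IneqState.varStates]
  | ubar i => simp [conf_ubar, IneqState.varStates]
  | v i => simp [conf_v, IneqState.varStates]
  | vbar i => simp [conf_vbar, IneqState.varStates]

theorem eval_append {D : Set (IneqState (n + 1))} (w w' : List (Fin 3)) :
    evalFrom (gadgetDelta n) D (w ++ w') =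
      evalFrom (gadgetDelta n) (evalFrom (gadgetDelta n) D w) w' := by
  simp [evalFrom]

theorem eval_shift (l : ℕ) : ∀ (j : Fin (n + 1)) (k : ℕ), k + l ≤ 2 * (n + 1) →
    (k + l ≤ n ∨ n < k) →
    evalFrom (gadgetDelta n) (gadgetConf n C j k) (List.replicate l 0) =
      gadgetConf n C (j + (l : Fin (n + 1))) (k + l) := by
  induction l with
  | zero => intro j k _ _; simp [evalFrom]
  | succ l ih =>
    intro j k h1 h2
    have := ih (j + 1) (k + 1) (by omega) (by omega)
    rw [← step_shift (by omega) (by omega)] at this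
    rw [List.replicate_succ]
    refine Eq.trans this ?_
    congr 1
    · push_cast; ring
    · omega

/-- Invariant for words avoiding `acc`. -/
theorem eval_inv (h0 : C = gadgetConf n C 0 0)
    (hu : ∀ i, IneqState.u i ∈ C ↔ IneqState.ubar i ∉ C)
    (hv : ∀ i, IneqState.v i ∈ C ↔ IneqState.vbar i ∉ C) (w : List (Fin 3)) :
    IneqState.acc ∉ evalFrom (gadgetDelta n) C w →
      (w.length ≤ n ∧ evalFrom (gadgetDelta n) C w =
        gadgetConf n C (w.length : Fin (n + 1)) w.length) ∨
      ∃ j : ℕ, j ≤ n + 1 ∧ w.length = j + 1 ∧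
        evalFrom (gadgetDelta n) C w = gadgetConf n C (j : Fin (n + 1)) (j + (n + 1)) ∧
        ∃ i, ¬ (IneqState.u i ∈ C ↔ IneqState.v i ∈ C) := by
  induction w using List.reverseRecOn with
  | nil => intro _; left; simpa [evalFrom] using h0
  | append_singleton w a ih =>
    intro h
    have e : evalFrom (gadgetDelta n) C (w ++ [a]) =
      stepSet (gadgetDelta n) (evalFrom (gadgetDelta n) C w) a := by simp [evalFrom]
    rw [e] at h ⊢
    rcases ih (fun h' => h (step_acc h')) with ⟨hl, hw⟩ | ⟨j, hj, hl, hw, hi⟩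
    · rw [hw] at h ⊢
      by_cases ha : a = 0
      · subst ha
        have hne : w.length ≠ n := fun hh => h (step_shift_acc (Or.inl hh))
        left
        rw [step_shift hne (by omega)]
        refine ⟨by simp; omega, by simp⟩
      · right
        obtain ⟨c1, c2⟩ := check_cond ha h
        refine ⟨w.length, by omega, by simp, step_check ha hl c1 c2, (w.length : Fin (n + 1)), ?_⟩
        have := hu (w.length : Fin (n + 1))
        have := hv (w.length : Fin (n + 1))
        have : a = 1 ∨ a = 2 := by omega
        tauto
    · rw [hw] at h ⊢
      by_cases ha : a = 0
      · subst ha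
        have hne : j ≠ n + 1 := fun hh => h (step_shift_acc (Or.inr (by omega)))
        right
        refine ⟨j + 1, by omega, by simp [hl], ?_, hi⟩
        rw [step_shift (by omega) (by omega)]
        congr 1
        · push_cast; ring
        · omega
      · exact (h (step_check_acc ha (by omega) (by omega))).elim

end

/-- The Inequality Gadget: a nondeterministic transition system over a three-letter alphabet
on `6m + 2` states checking inequality of two valid variables. From any configuration `C`
containing `p 0`, none of `acc, p 1, …, p 2m`, with both variables valid: (i) if the variables
differ, some word of length `m + 1` avoids `acc` and reaches `{p 2m} ∪ (C ∩ varStates)`, and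
every word of length `m + 1` avoiding `acc` reaches exactly this configuration; (ii) if the
variables agree, every word of length `≥ m + 1` reaches `acc`; (iii) every word of length
`> m + 1` reaches `acc`. -/
theorem inequality_gadget (m : ℕ) (hm : 1 ≤ m) :
    ∃ δ : IneqState m → Fin 3 → Set (IneqState m),
      (∀ a : Fin 3, δ IneqState.acc a = {IneqState.acc}) ∧
      ∀ C : Set (IneqState m),
        IneqState.p 0 ∈ C →
        IneqState.acc ∉ C →
        (∀ i : Fin (2 * m + 1), i ≠ 0 → IneqState.p i ∉ C) →
        (∀ i : Fin m, IneqState.u i ∈ C ↔ IneqState.ubar i ∉ C) →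
        (∀ i : Fin m, IneqState.v i ∈ C ↔ IneqState.vbar i ∉ C) →
        (((∃ i : Fin m, ¬(IneqState.u i ∈ C ↔ IneqState.v i ∈ C)) →
            ((∃ w : List (Fin 3), w.length = m + 1 ∧ IneqState.acc ∉ evalFrom δ C w ∧
                evalFrom δ C w =
                  {IneqState.p (Fin.last (2 * m))} ∪ (C ∩ IneqState.varStates m)) ∧
             (∀ w : List (Fin 3), w.length = m + 1 → IneqState.acc ∉ evalFrom δ C w →
                evalFrom δ C w =
                  {IneqState.p (Fin.last (2 * m))} ∪ (C ∩ IneqState.varStates m)))) ∧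
         ((∀ i : Fin m, IneqState.u i ∈ C ↔ IneqState.v i ∈ C) →
            ∀ w : List (Fin 3), m + 1 ≤ w.length → IneqState.acc ∈ evalFrom δ C w) ∧
         (∀ w : List (Fin 3), m + 1 < w.length → IneqState.acc ∈ evalFrom δ C w)) := by
  obtain ⟨n, rfl⟩ : ∃ n, m = n + 1 := ⟨m - 1, by omega⟩
  refine ⟨gadgetDelta n, fun _ => rfl, ?_⟩
  intro C h0 hacc hp hu hv
  have hC := conf_start h0 hacc hp
  open scoped Fin.CommRing in
  have hcast : ((n + 1 : ℕ) : Fin (n + 1)) = 0 := by simp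
  have inv := eval_inv hC hu hv
  refine ⟨?_, ?_, ?_⟩
  · rintro ⟨i, hi⟩
    refine ⟨?_, ?_⟩
    · have hil := i.isLt
      open scoped Fin.CommRing in
      have hci : ((i.val : ℕ) : Fin (n + 1)) = i := by simp
      obtain ⟨a, ha, c1, c2⟩ : ∃ a : Fin 3, a ≠ 0 ∧
          (a = 1 → IneqState.ubar i ∉ C ∧ IneqState.v i ∉ C) ∧
          (a = 2 → IneqState.u i ∉ C ∧ IneqState.vbar i ∉ C) := by
        have h1 := hu i
        have h2 := hv i
        by_cases hui : IneqState.u i ∈ C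
        · exact ⟨1, by decide, fun _ => by tauto, fun h => absurd h (by decide)⟩
        · exact ⟨2, by decide, fun h => absurd h (by decide), fun _ => by tauto⟩
      have key : evalFrom (gadgetDelta n) C
          (List.replicate i.val 0 ++ ([a] ++ List.replicate (n + 1 - i.val) 0)) =
          gadgetConf n C 0 (2 * (n + 1)) := by
        have s1 : evalFrom (gadgetDelta n) C (List.replicate i.val 0) =
            gadgetConf n C i i.val := by
          have := eval_shift (C := C) i.val 0 0 (by omega) (by omega)
          rw [← hC] at this
          rw [this]; simp
        have s2 : evalFrom (gadgetDelta n) (gadgetConf n C i i.val) [a] =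
            gadgetConf n C i (i.val + (n + 1)) := step_check ha (by omega) c1 c2
        rw [eval_append, s1, eval_append, s2, eval_shift _ _ _ (by omega) (by omega)]
        congr 1
        · nth_rewrite 1 [← hci]
          rw [← Nat.cast_add, ← hcast]
          congr 1
          omega
        · omega
      refine ⟨_, ?_, ?_, key.trans conf_end⟩
      · simp; omega
      · rw [key]; exact id
    · intro w hw h
      rcases inv w h with ⟨hl, _⟩ | ⟨j, _, hl, he, _⟩
      · omega
      · obtain rfl : j = n + 1 := by omega
        rw [he, hcast, ← conf_end]
        congr 1
        omega
  · intro heq w hw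
    by_contra h
    rcases inv w h with ⟨hl, _⟩ | ⟨j, _, _, _, i, hi⟩
    · omega
    · exact hi (heq i)
  · intro w hw
    by_contra h
    rcases inv w h with ⟨hl, _⟩ | ⟨j, hj, hl, _⟩ <;> omega
end

section
/- For every m ≥ 1 there exists a nondeterministic transition system (Incrementation Gadget) over a three-letter alphabet {α_a, α_c, α_p} on the state set Q = {acc} ∪ {p₀, p₁, …, p_{2m}} ∪ {v₁, …, v_m, v̄₁, …, v̄_m} (all states distinct, so 4m + 2 states) with δ(acc, a) = {acc} for every letter a, such that for every subset C ⊆ Q with p₀ ∈ C, C ∩ ({acc, p₁, …, p_{2m}}) = ∅, and such that for every i exactly one of v_i, v̄_i belongs to C, the following hold, where val(C) = Σ_{i : v_i ∈ C} 2^{i−1} and δ(C, w) denotes the set of states reachable from C on word w: (i) if val(C) < 2^m − 1, then there exists a word w of length m + 1 with acc ∉ δ(C, w) and δ(C, w) = {p_{2m}} ∪ {v_i : the i-th binary digit of val(C)+1 is 1} ∪ {v̄_i : the i-th binary digit of val(C)+1 is 0}, and every word w of length m + 1 with acc ∉ δ(C, w) satisfies this same equality; (ii) if val(C) = 2^m −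 1, then acc ∈ δ(C, w) for every word w of length at least m + 1; (iii) acc ∈ δ(C, w) for every word w of length strictly greater than m + 1. -/
open scoped Classical

/-- The state set of the Incrementation Gadget: the absorbing state `acc`, the control-flow
states `p 0, …, p 2m`, and the variable states `v i, vbar i` for `i` ranging over `Fin m`;
in total `4m + 2` distinct states. -/
inductive IncState (m : ℕ) where
  | acc : IncState m
  | p : Fin (2 * m + 1) → IncState m
  | v : Fin m → IncState m
  | vbar : Fin m → IncState m
  deriving DecidableEq

/-- The value encoded by the variable in a configuration: `val C = Σ_{i : v i ∈ C} 2^i`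
(the index `i : Fin m` is 0-based here, `v 0` being the least significant bit). -/
noncomputable def incVal (m : ℕ) (C : Set (IncState m)) : ℕ :=
  ∑ i : Fin m, if IncState.v i ∈ C then 2 ^ (i : ℕ) else 0

/-- The configuration reached by a complete computation of the Incrementation Gadget:
the target state together with the binary encoding of `val C + 1`
(bit `i` of `val C + 1` determines whether `v i` or `vbar i` is active). -/
noncomputable def incTarget (m : ℕ) (C : Set (IncState m)) : Set (IncState m) :=
  {IncState.p (Fin.last (2 * m))} ∪
    {s | ∃ i : Fin m, Nat.testBit (incVal m C + 1) (i : ℕ) = true ∧ s = IncState.v i} ∪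
    {s | ∃ i : Fin m, Nat.testBit (incVal m C + 1) (i : ℕ) = false ∧ s = IncState.vbar i}

namespace IncProof

/-- The (deterministic) successor function of the gadget; letter `0` is the carry letter,
`1` the add letter, `2` the propagate letter. -/
def nxt (m : ℕ) (hm : 1 ≤ m) : IncState m → Fin 3 → IncState m
  | .acc, _ => .acc
  | .p j, 0 => if h : j.val + 1 < m then .p ⟨j.val + 1, by omega⟩ else .acc
  | .p j, 1 => if h : j.val < m then .p ⟨m + j.val, by omega⟩ else .acc
  | .p j, 2 => if h : m ≤ j.val ∧ j.val < 2 * m then .p ⟨j.val + 1, by omega⟩ else .acc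
  | .v i, 0 => if i.val = 0 then .vbar ⟨m - 1, by omega⟩ else .v ⟨i.val - 1, by omega⟩
  | .vbar i, 0 => if i.val = 0 then .acc else .vbar ⟨i.val - 1, by omega⟩
  | .v i, 1 => if i.val = 0 then .acc else .v i
  | .vbar i, 1 => if i.val = 0 then .v i else .vbar i
  | .v i, 2 => if i.val = 0 then .v ⟨m - 1, by omega⟩ else .v ⟨i.val - 1, by omega⟩
  | .vbar i, 2 => if i.val = 0 then .vbar ⟨m - 1, by omega⟩ else .vbar ⟨i.val - 1, by omega⟩

/-- The transition function of the gadget. -/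
def dl (m : ℕ) (hm : 1 ≤ m) (q : IncState m) (a : Fin 3) : Set (IncState m) := {nxt m hm q a}

/-- Configuration with control state `k` and bits `b`. -/
def conf (m k : ℕ) (b : ℕ → Bool) : Set (IncState m) := {s | match s with
  | .acc => False
  | .p j => j.val = k
  | .v i => b i.val = true
  | .vbar i => b i.val = false}

variable {m : ℕ} {hm : 1 ≤ m}

lemma mem_step (D : Set (IncState m)) (a : Fin 3) (s : IncState m) :
    s ∈ stepSet (dl m hm) D a ↔ ∃ q ∈ D, nxt m hm q a = s := by
  simp [stepSet, dl, eq_comm]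

@[simp] lemma conf_acc (k b) : (.acc : IncState m) ∈ conf m k b ↔ False := Iff.rfl
@[simp] lemma conf_p (k b j) : (.p j : IncState m) ∈ conf m k b ↔ j.val = k := Iff.rfl
@[simp] lemma conf_v (k b i) : (.v i : IncState m) ∈ conf m k b ↔ b i.val = true := Iff.rfl
@[simp] lemma conf_vbar (k b i) : (.vbar i : IncState m) ∈ conf m k b ↔ b i.val = false := Iff.rfl

lemma step_acc (D : Set (IncState m)) (a : Fin 3) (h : .acc ∈ D) :
    .acc ∈ stepSet (dl m hm) D a := by
  rw [mem_step]; exact ⟨_, h, rfl⟩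

/-- To compute a step it suffices to give successors and predecessors. -/
lemma step_eq (D E : Set (IncState m)) (a : Fin 3) (h1 : ∀ q ∈ D, nxt m hm q a ∈ E)
    (h2 : ∀ s ∈ E, ∃ q ∈ D, nxt m hm q a = s) : stepSet (dl m hm) D a = E := by
  ext s
  rw [mem_step]
  constructor
  · rintro ⟨q, hq, rfl⟩; exact h1 q hq
  · exact h2 s

lemma stepC {k : ℕ} {b b' : ℕ → Bool} (hk : k + 1 < m) (h0 : b 0 = true)
    (hb : ∀ i, i + 1 < m → b' i = b (i + 1)) (hl : b' (m - 1) = false) :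
    stepSet (dl m hm) (conf m k b) 0 = conf m (k + 1) b' := by
  apply step_eq
  · rintro (_ | j | i | i) hq
    · exact hq.elim
    · simp only [conf_p] at hq
      simp [nxt, hq, hk]
    · simp only [conf_v] at hq
      by_cases hi : i.val = 0
      · simp [nxt, hi, hl]
      · have := hb (i.val - 1) (by omega)
        rw [Nat.sub_add_cancel (by omega)] at this
        simp [nxt, hi, this, hq]
    · simp only [conf_vbar] at hq
      by_cases hi : i.val = 0
      · simp [hi, h0] at hq
      · have := hb (i.val - 1) (by omega)
        rw [Nat.sub_add_cancel (by omega)] at this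
        simp [nxt, hi, this, hq]
  · rintro (_ | j | i | i) hq
    · exact hq.elim
    · simp only [conf_p] at hq
      refine ⟨.p ⟨k, by omega⟩, by simp, ?_⟩
      simp [nxt, ← hq]
      omega
    · simp only [conf_v] at hq
      by_cases hi : i.val + 1 < m
      · refine ⟨.v ⟨i.val + 1, hi⟩, ?_, ?_⟩
        · simp [← hb i.val hi, hq]
        · simp [nxt]
      · rw [show i.val = m - 1 by omega] at hq
        simp [hq] at hl
    · simp only [conf_vbar] at hq
      by_cases hi : i.val + 1 < m
      · refine ⟨.vbar ⟨i.val + 1, hi⟩, ?_, ?_⟩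
        · simp [← hb i.val hi, hq]
        · simp [nxt]
      · refine ⟨.v ⟨0, by omega⟩, by simp [h0], ?_⟩
        simp [nxt, Fin.ext_iff]
        omega

lemma stepA {k : ℕ} {b b' : ℕ → Bool} (hk : k < m) (h0 : b 0 = false)
    (hb : ∀ i, 0 < i → i < m → b' i = b i) (hl : b' 0 = true) :
    stepSet (dl m hm) (conf m k b) 1 = conf m (m + k) b' := by
  apply step_eq
  · rintro (_ | j | i | i) hq
    · exact hq.elim
    · simp only [conf_p] at hq
      simp [nxt, hq, hk]
    · simp only [conf_v] at hq
      by_cases hi : i.val = 0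
      · simp [hi, h0] at hq
      · simp [nxt, hi, hb i.val (by omega) i.2, hq]
    · simp only [conf_vbar] at hq
      by_cases hi : i.val = 0
      · simp [nxt, hi, hl]
      · simp [nxt, hi, hb i.val (by omega) i.2, hq]
  · rintro (_ | j | i | i) hq
    · exact hq.elim
    · simp only [conf_p] at hq
      refine ⟨.p ⟨k, by omega⟩, by simp, ?_⟩
      simp [nxt, hk, ← hq]
    · simp only [conf_v] at hq
      by_cases hi : i.val = 0
      · exact ⟨.vbar i, by simp [hi, h0], by simp [nxt, hi]⟩
      · exact ⟨.v i, by simp [← hb i.val (by omega) i.2, hq], by simp [nxt, hi]⟩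
    · simp only [conf_vbar] at hq
      by_cases hi : i.val = 0
      · simp [hi, hl] at hq
      · exact ⟨.vbar i, by simp [← hb i.val (by omega) i.2, hq], by simp [nxt, hi]⟩

lemma stepP {k : ℕ} {b b' : ℕ → Bool} (hk : m ≤ k) (hk2 : k < 2 * m)
    (hb : ∀ i, i + 1 < m → b' i = b (i + 1)) (hl : b' (m - 1) = b 0) :
    stepSet (dl m hm) (conf m k b) 2 = conf m (k + 1) b' := by
  apply step_eq
  · rintro (_ | j | i | i) hq
    · exact hq.elim
    · simp only [conf_p] at hq
      simp [nxt, hq, hk, hk2]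
    · simp only [conf_v] at hq
      by_cases hi : i.val = 0
      · rw [hi] at hq
        simp [nxt, hi, hl, hq]
      · have := hb (i.val - 1) (by omega)
        rw [Nat.sub_add_cancel (by omega)] at this
        simp [nxt, hi, this, hq]
    · simp only [conf_vbar] at hq
      by_cases hi : i.val = 0
      · rw [hi] at hq
        simp [nxt, hi, hl, hq]
      · have := hb (i.val - 1) (by omega)
        rw [Nat.sub_add_cancel (by omega)] at this
        simp [nxt, hi, this, hq]
  · rintro (_ | j | i | i) hq
    · exact hq.elim
    · simp only [conf_p] at hq
      refine ⟨.p ⟨k, by omega⟩, by simp, ?_⟩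
      simp [nxt, hk, hk2, ← hq]
    · simp only [conf_v] at hq
      by_cases hi : i.val + 1 < m
      · refine ⟨.v ⟨i.val + 1, hi⟩, ?_, ?_⟩
        · simp [← hb i.val hi, hq]
        · simp [nxt]
      · rw [show i.val = m - 1 by omega] at hq
        refine ⟨.v ⟨0, by omega⟩, by simp [← hl, hq], ?_⟩
        simp [nxt, Fin.ext_iff]
        omega
    · simp only [conf_vbar] at hq
      by_cases hi : i.val + 1 < m
      · refine ⟨.vbar ⟨i.val + 1, hi⟩, ?_, ?_⟩
        · simp [← hb i.val hi, hq]
        · simp [nxt]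
      · rw [show i.val = m - 1 by omega] at hq
        refine ⟨.vbar ⟨0, by omega⟩, by simp [← hl, hq], ?_⟩
        simp [nxt, Fin.ext_iff]
        omega

/-- Bits of `n + 1` when the lowest zero bit of `n` is at position `t`. -/
lemma testBit_add_one (t : ℕ) : ∀ n : ℕ, (∀ i < t, n.testBit i = true) → n.testBit t = false →
    ∀ i, (n + 1).testBit i = if i < t then false else if i = t then true else n.testBit i := by
  induction t with
  | zero =>
    intro n _ h i
    have hn : n % 2 = 0 := by simpa [Nat.testBit_zero] using h
    cases i with
    | zero => simp [Nat.testBit_zero]; omega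
    | succ i => 
      simp only [Nat.testBit_succ]
      rw [show (n + 1) / 2 = n / 2 by omega]
      simp
  | succ t ih =>
    intro n h1 h i
    have h0 := h1 0 (by omega)
    have hn : n % 2 = 1 := by simpa [Nat.testBit_zero] using h0
    cases i with
    | zero => simp [Nat.testBit_zero]; omega
    | succ i => 
      simp only [Nat.testBit_succ]
      rw [show (n + 1) / 2 = n / 2 + 1 by omega]
      rw [ih (n / 2) (fun i hi => by simpa [Nat.testBit_succ] using h1 (i + 1) (by omega))
        (by simpa [Nat.testBit_succ] using h)]
      simp

lemma testBit_sum (m : ℕ) : ∀ (P : Fin m → Prop) (i : ℕ),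
    (∑ j : Fin m, if P j then 2 ^ (j : ℕ) else 0).testBit i = true ↔ ∃ h : i < m, P ⟨i, h⟩ := by
  induction m with
  | zero => intro P i; simp
  | succ m ih =>
    intro P i
    have key : (∑ j : Fin (m + 1), if P j then 2 ^ (j : ℕ) else 0)
        = (if P 0 then 1 else 0) + 2 * ∑ j : Fin m, if P j.succ then 2 ^ (j : ℕ) else 0 := by
      rw [Fin.sum_univ_succ, Finset.mul_sum]
      congr 1
      apply Finset.sum_congr rfl
      intro j _
      split_ifs <;> simp [pow_succ, mul_comm]
    rw [key]
    cases i with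
    | zero => 
      rw [Nat.testBit_zero]
      by_cases h : P 0
      · simp [h, Nat.add_mod]
      · simp [h]
    | succ i =>
      rw [Nat.testBit_succ]
      rw [show ∀ S : ℕ, ((if P 0 then 1 else 0) + 2 * S) / 2 = S by intro S; split_ifs <;> omega]
      rw [ih (fun j => P j.succ) i]
      simp [Fin.succ]

lemma evalFrom_append (D : Set (IncState m)) (w : List (Fin 3)) (a : Fin 3) :
    evalFrom (dl m hm) D (w ++ [a]) = stepSet (dl m hm) (evalFrom (dl m hm) D w) a := by
  simp [evalFrom]

/-- Bits of `n` rotated by `t`. -/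
def rot (m n t : ℕ) (i : ℕ) : Bool := n.testBit ((i + t) % m)

/-- `s` is the position of the lowest zero bit. -/
def IsLow (m n s : ℕ) : Prop := s < m ∧ (∀ i < s, n.testBit i = true) ∧ n.testBit s = false

lemma do_c {n t : ℕ} (hn : ∀ i, m ≤ i → n.testBit i = false) (ht : t + 1 < m)
    (h : n.testBit t = true) :
    stepSet (dl m hm) (conf m t (fun i => n.testBit (i + t))) 0
      = conf m (t + 1) (fun i => n.testBit (i + (t + 1))) := by
  apply stepC ht
  · simpa using h
  · intro i _; congr 1; omega
  · exact hn _ (by omega)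

lemma do_a {n t : ℕ} (hn : ∀ i, m ≤ i → n.testBit i = false) (h : IsLow m n t) :
    stepSet (dl m hm) (conf m t (fun i => n.testBit (i + t))) 1
      = conf m (m + t) (rot m (n + 1) t) := by
  obtain ⟨h1, h2, h3⟩ := h
  have key := testBit_add_one t n h2 h3
  apply stepA h1
  · simpa using h3
  · intro i hi him
    simp only [rot, key]
    by_cases hw : i + t < m
    · rw [Nat.mod_eq_of_lt hw, if_neg (by omega), if_neg (by omega)]
    · have : (i + t) % m = i + t - m := by
        rw [Nat.mod_eq_sub_mod (by omega), Nat.mod_eq_of_lt (by omega)]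
      rw [this, if_pos (by omega), hn _ (by omega)]
  · simp only [rot, key]
    rw [Nat.mod_eq_of_lt (by omega)]; simp

lemma do_p {n t : ℕ} (ht : t < m) :
    stepSet (dl m hm) (conf m (m + t) (rot m n t)) 2 = conf m (m + (t + 1)) (rot m n (t + 1)) := by
  apply stepP (by omega) (by omega)
  · intro i _; simp only [rot]; congr 2; omega
  · simp only [rot]
    rw [show m - 1 + (t + 1) = t + m by omega]; simp

lemma p_acc {k : ℕ} {b : ℕ → Bool} {a : Fin 3} (hk : k < 2 * m + 1)
    (h : nxt m hm (.p ⟨k, hk⟩) a = .acc) : .acc ∈ stepSet (dl m hm) (conf m k b) a := by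
  rw [mem_step]; exact ⟨_, by simp, h⟩

lemma inv {n : ℕ} (hn : ∀ i, m ≤ i → n.testBit i = false) (w : List (Fin 3)) :
    let D := evalFrom (dl m hm) (conf m 0 (fun i => n.testBit i)) w
    .acc ∈ D ∨
    (w.length < m ∧ D = conf m w.length (fun i => n.testBit (i + w.length)) ∧
      ∀ i < w.length, n.testBit i = true) ∨
    (∃ s, IsLow m n s) ∧ ∃ t ≤ m, w.length = t + 1 ∧ D = conf m (m + t) (rot m (n + 1) t) := by
  induction w using List.reverseRecOn with
  | nil => right; left; exact ⟨hm, by simp [evalFrom], by simp⟩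
  | append_singleton w a ih =>
    simp only [evalFrom_append, List.length_append, List.length_singleton] at ih ⊢
    rcases ih with h | ⟨hl, hD, hx⟩ | ⟨hs, t, ht, hl, hD⟩
    · exact Or.inl (step_acc _ _ h)
    · rw [hD]
      generalize w.length = t at *
      fin_cases a
      · by_cases h1 : t + 1 < m
        · cases hb : n.testBit t with
          | true =>
            right; left
            refine ⟨h1, do_c hn h1 hb, fun i hi => ?_⟩
            rcases Nat.lt_succ_iff_lt_or_eq.1 hi with h | rfl
            · exact hx i h
            · exact hb
          | false =>
            left; rw [mem_step]
            exact ⟨.vbar ⟨0, hm⟩, by simp [hb], by simp [nxt]⟩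
        · left; exact p_acc (by omega) (by simp [nxt, h1])
      · cases hb : n.testBit t with
        | true =>
          left; rw [mem_step]
          exact ⟨.v ⟨0, hm⟩, by simp [hb], by simp [nxt]⟩
        | false =>
          right; right
          have : IsLow m n t := ⟨hl, hx, hb⟩
          exact ⟨⟨t, this⟩, t, hl.le, rfl, do_a hn this⟩
      · left; exact p_acc (by omega) (by simp [nxt, hl])
    · rw [hD]
      fin_cases a
      · left; exact p_acc (by omega) (by simp [nxt]; omega)
      · left; exact p_acc (by omega) (by simp [nxt])
      · by_cases h1 : t < m
        · right; right
          exact ⟨hs, t + 1, h1, by omega, do_p h1⟩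
        · left; exact p_acc (by omega) (by simp [nxt]; omega)

lemma exists_run {n s : ℕ} (hn : ∀ i, m ≤ i → n.testBit i = false) (hs : IsLow m n s) (k : ℕ) :
    k ≤ m + 1 → ∃ w : List (Fin 3), w.length = k ∧
      (k ≤ s → evalFrom (dl m hm) (conf m 0 (fun i => n.testBit i)) w
        = conf m k (fun i => n.testBit (i + k))) ∧
      (∀ t, k = t + 1 → s ≤ t → evalFrom (dl m hm) (conf m 0 (fun i => n.testBit i)) w
        = conf m (m + t) (rot m (n + 1) t)) := by
  induction k with
  | zero => intro _; exact ⟨[], rfl, by simp [evalFrom], by simp⟩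
  | succ k ih =>
    intro hk
    obtain ⟨w, hw, h1, h2⟩ := ih (by omega)
    have hsm := hs.1
    rcases lt_trichotomy k s with h | h | h
    · refine ⟨w ++ [0], by simp [hw], fun _ => ?_, fun t ht hst => by omega⟩
      rw [evalFrom_append, h1 h.le, do_c hn (by omega) (hs.2.1 k h)]
    · subst h
      refine ⟨w ++ [1], by simp [hw], fun _ => by omega, fun t ht hst => ?_⟩
      obtain rfl : k = t := by omega
      rw [evalFrom_append, h1 le_rfl, do_a hn hs]
    · refine ⟨w ++ [2], by simp [hw], fun _ => by omega, fun t ht hst => ?_⟩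
      obtain rfl : k = t := by omega
      obtain ⟨u, rfl⟩ : ∃ u, k = u + 1 := ⟨k - 1, by omega⟩
      rw [evalFrom_append, h2 u rfl (by omega), do_p (by omega)]

lemma conf_target (C : Set (IncState m)) :
    conf m (m + m) (rot m (incVal m C + 1) m) = incTarget m C := by
  ext q
  rcases q with _ | j | i | i
  · simp [incTarget]
  · simp [incTarget, Fin.ext_iff, two_mul]
  · simp [incTarget, rot, Nat.mod_eq_of_lt i.2]
  · simp [incTarget, rot, Nat.mod_eq_of_lt i.2]

end IncProof

/-- The Incrementation Gadget: a nondeterministic transition system over a three-letter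
alphabet on `4m + 2` states incrementing a valid variable. From any configuration `C`
containing `p 0`, none of `acc, p 1, …, p 2m`, with the variable valid: (i) if
`val C < 2^m - 1`, some word of length `m + 1` avoids `acc` and reaches the configuration
`{p 2m}` together with the binary encoding of `val C + 1`, and every word of length `m + 1`
avoiding `acc` reaches exactly this configuration; (ii) if `val C = 2^m - 1`, every word of
length `≥ m + 1` reaches `acc`; (iii) every word of length `> m + 1` reaches `acc`. -/
theorem incrementation_gadget (m : ℕ) (hm : 1 ≤ m) :
    ∃ δ : IncState m → Fin 3 → Set (IncState m),
      (∀ a : Fin 3, δ IncState.acc a = {IncState.acc}) ∧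
      ∀ C : Set (IncState m),
        IncState.p 0 ∈ C →
        IncState.acc ∉ C →
        (∀ i : Fin (2 * m + 1), i ≠ 0 → IncState.p i ∉ C) →
        (∀ i : Fin m, IncState.v i ∈ C ↔ IncState.vbar i ∉ C) →
        ((incVal m C < 2 ^ m - 1 →
            ((∃ w : List (Fin 3), w.length = m + 1 ∧ IncState.acc ∉ evalFrom δ C w ∧
                evalFrom δ C w = incTarget m C) ∧
             (∀ w : List (Fin 3), w.length = m + 1 → IncState.acc ∉ evalFrom δ C w →
                evalFrom δ C w = incTarget m C))) ∧
         (incVal m C = 2 ^ m - 1 →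
            ∀ w : List (Fin 3), m + 1 ≤ w.length → IncState.acc ∈ evalFrom δ C w) ∧
         (∀ w : List (Fin 3), m + 1 < w.length → IncState.acc ∈ evalFrom δ C w)) := by
  refine ⟨IncProof.dl m hm, fun a => rfl, ?_⟩
  intro C h0 hacc hp hv
  have hbit : ∀ i, (incVal m C).testBit i = true ↔ ∃ h : i < m, IncState.v ⟨i, h⟩ ∈ C :=
    IncProof.testBit_sum m (fun i => IncState.v i ∈ C)
  have hn : ∀ i, m ≤ i → (incVal m C).testBit i = false := by
    intro i hi
    rw [← Bool.not_eq_true, hbit]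
    rintro ⟨h, _⟩
    omega
  have hC : C = IncProof.conf m 0 (fun i => (incVal m C).testBit i) := by
    ext q
    rcases q with _ | j | i | i
    · simp [hacc]
    · simp only [IncProof.conf_p]
      constructor
      · intro h
        by_contra hj
        exact hp j (fun h => hj (by simp [h])) h
      · intro h
        rwa [show j = 0 from Fin.ext h]
    · simp [hbit]
    · rw [IncProof.conf_vbar, ← Bool.not_eq_true, hbit]
      simp [hv]
  have hinv := IncProof.inv (hm := hm) hn
  rw [← hC] at hinv
  refine ⟨fun hlt => ⟨?_, ?_⟩, ?_, ?_⟩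
  · have hex : ∃ s, s < m ∧ (incVal m C).testBit s = false := by
      by_contra hcon
      push Not at hcon
      have : incVal m C = 2 ^ m - 1 := by
        apply Nat.eq_of_testBit_eq
        intro i
        rw [Nat.testBit_two_pow_sub_one]
        by_cases hi : i < m
        · simpa [hi] using hcon i hi
        · simpa [hi] using hn i (by omega)
      omega
    have hlow : IncProof.IsLow m (incVal m C) (Nat.find hex) := by
      refine ⟨(Nat.find_spec hex).1, fun i hi => ?_, (Nat.find_spec hex).2⟩
      have h1 := Nat.find_min hex hi
      have h2 := (Nat.find_spec hex).1
      rw [← Bool.not_eq_false]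
      exact fun h => h1 ⟨by omega, h⟩
    obtain ⟨w, hw, -, h2⟩ := IncProof.exists_run (hm := hm) hn hlow (m + 1) le_rfl
    have h3 := h2 m rfl hlow.1.le
    rw [← hC] at h3
    refine ⟨w, hw, ?_, ?_⟩
    · rw [h3]; simp
    · rw [h3, IncProof.conf_target]
  · intro w hw hna
    rcases hinv w with h | ⟨h, _⟩ | ⟨_, t, ht, hl, hD⟩
    · exact absurd h hna
    · omega
    · obtain rfl : t = m := by omega
      rw [hD, IncProof.conf_target]
  · intro hval w hw
    rcases hinv w with h | ⟨h, _⟩ | ⟨⟨s, hs⟩, _⟩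
    · exact h
    · omega
    · have := hs.2.2
      rw [hval, Nat.testBit_two_pow_sub_one] at this
      simp [hs.1] at this
  · intro w hw
    rcases hinv w with h | ⟨h, _⟩ | ⟨_, t, ht, hl, _⟩
    · exact h
    · omega
    · omega
end
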